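/- arXiv:2412.18002 — 3 statements merged into one kernel-verified Lean document; each statement's English description precedes it below -/
import Mathlib

section
/- For every integer k ≥ 1, every k-nice subset of ℤ² has at most k + 6 elements. -/
/-- A set `Q ⊆ ℤ²` is `k`-nice if every element is a nonzero coprime pair,
`Q` does not contain both a pair and its negation, and all cross determinants
are bounded by `k` in absolute value. -/
def IsKNice (k : ℕ) (Q : Set (ℤ × ℤ)) : Prop :=
  (∀ p ∈ Q, p ≠ (0, 0) ∧ Int.gcd p.1 p.2 = 1) ∧
  (∀ p ∈ Q, -p ∉ Q) ∧
  (∀ p ∈ Q, ∀ q ∈ Q, |p.1 * q.2 - q.1 * p.2| ≤ (k : ℤ))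

/-- `Q` is y-non-negative: all second coordinates are non-negative. -/
def YNonneg (Q : Set (ℤ × ℤ)) : Prop := ∀ p ∈ Q, 0 ≤ p.2

/-- The height of `Q` is at most `h`. -/
def HeightLe (Q : Set (ℤ × ℤ)) (h : ℕ) : Prop := ∀ p ∈ Q, |p.2| ≤ (h : ℤ)

/-- The height of `Q` is exactly `h`: the maximum of `|n|` over `(m, n) ∈ Q` is `h`. -/
def HeightEq (Q : Set (ℤ × ℤ)) (h : ℕ) : Prop :=
  HeightLe Q h ∧ ∃ p ∈ Q, |p.2| = (h : ℤ)

namespace KN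
section
/-- number of `1 ≤ j ≤ r` coprime to `n` -/
def cnt (n : ℕ) : ℕ → ℕ
  | 0 => 0
  | r + 1 => cnt n r + (if Nat.gcd (r + 1) n = 1 then 1 else 0)

/-- signed counting function of the integers in `(0, x]` coprime to `n` -/
def GG (n : ℕ) (x : ℤ) : ℤ := (cnt n n : ℤ) * (x / n) + cnt n (x % n).toNat

lemma GG_add_period (n : ℕ) (hn : 1 ≤ n) (x q : ℤ) : GG n (x + n * q) = GG n x + cnt n n * q := by
  unfold GG
  have h0 : (n : ℤ) ≠ 0 := by positivity
  rw [Int.add_mul_ediv_left _ _ h0, Int.add_mul_emod_self_left]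
  ring

lemma GG_small (n : ℕ) (r : ℕ) (hr : r < n) : GG n r = cnt n r := by
  unfold GG
  have h1 : (r : ℤ) / n = 0 := Int.ediv_eq_zero_of_lt (by positivity) (by exact_mod_cast hr)
  have h2 : (r : ℤ) % n = r := Int.emod_eq_of_lt (by positivity) (by exact_mod_cast hr)
  rw [h1, h2]; simp

lemma exists_rep (n : ℕ) (hn : 1 ≤ n) (x : ℤ) : ∃ (r : ℕ) (q : ℤ), r < n ∧ x = r + n * q := by
  have h0 : (0 : ℤ) < n := by exact_mod_cast hn
  refine ⟨(x % n).toNat, x / n, ?_, ?_⟩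
  · have := Int.emod_lt_of_pos x h0
    have := Int.emod_nonneg x h0.ne'
    omega
  · rw [Int.toNat_of_nonneg (Int.emod_nonneg x h0.ne')]
    exact (Int.emod_add_mul_ediv x n).symm

lemma GG_step (n : ℕ) (hn : 1 ≤ n) (x : ℤ) :
    GG n x = GG n (x - 1) + (if Int.gcd x n = 1 then 1 else 0) := by
  obtain ⟨r, q, hr, rfl⟩ := exists_rep n hn x
  have hg : Int.gcd ((r : ℤ) + n * q) n = Nat.gcd r n := by
    rw [Int.gcd_add_mul_left_left]; rfl
  rw [hg]
  rcases r with _ | r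
  · have e : ((0 : ℕ) : ℤ) + n * q - 1 = ((n - 1 : ℕ) : ℤ) + n * (q - 1) := by
      push_cast [hn]; ring
    rw [e, GG_add_period n hn, GG_add_period n hn, GG_small n 0 (by omega), GG_small n (n-1) (by omega)]
    obtain ⟨m, rfl⟩ : ∃ m, n = m + 1 := ⟨n - 1, by omega⟩
    simp only [Nat.add_sub_cancel, Nat.gcd_zero_left, cnt, Nat.gcd_self]
    split_ifs <;> push_cast <;> ring
  · have e : ((r + 1 : ℕ) : ℤ) + n * q - 1 = (r : ℤ) + n * q := by push_cast; ring
    rw [e, GG_add_period n hn, GG_add_period n hn, GG_small n r (by omega), GG_small n (r+1) hr]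
    simp only [cnt]
    split_ifs <;> push_cast <;> ring

lemma GG_count (n : ℕ) (hn : 1 ≤ n) (x y : ℤ) (hxy : x ≤ y) :
    (((Finset.Ioc x y).filter (fun m => Int.gcd m n = 1)).card : ℤ) = GG n y - GG n x := by
  induction y, hxy using Int.leInduction with
  | base => simp
  | succ y hy ih =>
    have e : Finset.Ioc x (y + 1) = insert (y + 1) (Finset.Ioc x y) := by
      ext z; simp only [Finset.mem_Ioc, Finset.mem_insert]; omega
    rw [e, Finset.filter_insert, GG_step n hn (y + 1)]
    split_ifs with h
    · rw [Finset.card_insert_of_notMem (by simp)]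
      push_cast; rw [ih]; simp; ring
    · rw [ih]; simp

lemma GG_mono (n : ℕ) (hn : 1 ≤ n) {x y : ℤ} (hxy : x ≤ y) : GG n x ≤ GG n y := by
  have := GG_count n hn x y hxy
  omega

lemma GG_neg (n : ℕ) (hn : 1 ≤ n) (x : ℤ) :
    GG n (-x - 1) = - GG n x - (if n = 1 then 1 else 0) := by
  have key : ∀ x, GG n (-x - 1) + GG n x = GG n (-(x-1) - 1) + GG n (x - 1) := by
    intro x
    have h1 := GG_step n hn x
    have h2 := GG_step n hn (-x)
    rw [Int.neg_gcd] at h2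
    have e : -(x-1) - 1 = -x := by ring
    rw [e]; omega
  have h0 : GG n (-0 - 1) + GG n 0 = - (if n = 1 then 1 else 0) := by
    have := GG_step n hn 0
    have e : GG n 0 = 0 := by
      have := GG_small n 0 (by omega)
      simpa [cnt] using this
    simp only [Int.gcd_zero_left, Int.natAbs_natCast] at this
    simp only [neg_zero]
    omega
  have main : ∀ x, GG n (-x - 1) + GG n x = - (if n = 1 then 1 else 0) := by
    intro x
    induction x using Int.induction_on with
    | zero => exact h0
    | succ i ih => rw [key]; simpa using ih
    | pred i ih => rw [key] at ih; exact ih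
  have := main x
  omega

lemma GG_count_Icc (n : ℕ) (hn : 1 ≤ n) (a b : ℤ) (hab : -1 ≤ a + b) :
    (((Finset.Icc (-b) a).filter (fun m => Int.gcd m n = 1)).card : ℤ)
      = GG n a + GG n b + (if n = 1 then 1 else 0) := by
  have e : Finset.Icc (-b) a = Finset.Ioc (-b - 1) a := by
    ext z; simp only [Finset.mem_Ioc, Finset.mem_Icc]; omega
  rw [e, GG_count n hn _ _ (by omega), GG_neg n hn]
  ring

/-! ### The dynamic programme -/

/-- quasi-periodic integer function with period `n`, increment `ρ` and table `T` -/
structure QP where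
  n : ℕ
  ρ : ℕ
  T : List ℤ

def QP.eval (F : QP) (x : ℤ) : ℤ := F.T.getD (x % F.n).toNat 0 + F.ρ * (x / F.n)

def cntTab (n : ℕ) : ℕ → ℕ → ℕ → List ℤ
  | 0, _, _ => []
  | f + 1, r, c => (c : ℤ) :: cntTab n f (r + 1) (if Nat.gcd (r + 1) n = 1 then c + 1 else c)

lemma cntTab_getD (n f r i : ℕ) (hi : i < f) : (cntTab n f r (cnt n r)).getD i 0 = cnt n (r + i) := by
  induction f generalizing r i with
  | zero => omega
  | succ f ih =>
    have e : (if Nat.gcd (r + 1) n = 1 then cnt n r + 1 else cnt n r) = cnt n (r + 1) := by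
      simp only [cnt]; split_ifs <;> rfl
    simp only [cntTab]
    rw [e]
    rcases i with _ | i
    · simp
    · rw [List.getD_cons_succ, ih (r + 1) i (by omega)]
      congr 2; omega

def QPG (n : ℕ) : QP := ⟨n, cnt n n, cntTab n n 0 0⟩

lemma QPG_eval (n : ℕ) (hn : 1 ≤ n) (x : ℤ) : (QPG n).eval x = GG n x := by
  have h0 : (0 : ℤ) < n := by exact_mod_cast hn
  have h1 := Int.emod_lt_of_pos x h0
  have h2 := Int.emod_nonneg x h0.ne'
  unfold QP.eval QPG GG
  have := cntTab_getD n n 0 (x % n).toNat (by omega)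
  simp only [cnt] at this
  simp only [this]
  rw [zero_add]; ring

lemma QP.eval_period (F : QP) (hn : 1 ≤ F.n) (x q : ℤ) : F.eval (x + F.n * q) = F.eval x + F.ρ * q := by
  unfold QP.eval
  have h0 : (F.n : ℤ) ≠ 0 := by positivity
  rw [Int.add_mul_ediv_left _ _ h0, Int.add_mul_emod_self_left]
  ring

lemma QP.eval_small (F : QP) (r : ℕ) (hr : r < F.n) : F.eval r = F.T.getD r 0 := by
  unfold QP.eval
  have h1 : (r : ℤ) / F.n = 0 := Int.ediv_eq_zero_of_lt (by positivity) (by exact_mod_cast hr)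
  have h2 : (r : ℤ) % F.n = r := Int.emod_eq_of_lt (by positivity) (by exact_mod_cast hr)
  rw [h1, h2]; simp

/-- table of the combination -/
def combT (k : ℤ) (q : ℕ) (B : QP) : List ℤ → ℕ → List ℤ
  | [], _ => []
  | t :: ts, α => (t + B.eval ((k - α * B.n) / q)) :: combT k q B ts (α + 1)

lemma combT_length (k : ℤ) (q : ℕ) (B : QP) (ts : List ℤ) (α : ℕ) :
    (combT k q B ts α).length = ts.length := by
  induction ts generalizing α with
  | nil => rfl
  | cons t ts ih => simp [combT, ih]

lemma combT_getD (k : ℤ) (q : ℕ) (B : QP) (ts : List ℤ) (α i : ℕ) (hi : i < ts.length) :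
    (combT k q B ts α).getD i 0 = ts.getD i 0 + B.eval ((k - (α + i : ℕ) * B.n) / q) := by
  induction ts generalizing α i with
  | nil => simp at hi
  | cons t ts ih =>
    rcases i with _ | i
    · simp [combT]
    · simp only [combT, List.getD_cons_succ]
      rw [ih (α + 1) i (by simpa using hi)]
      congr 5; omega

def comb (k : ℤ) (A B : QP) : QP := ⟨A.n, A.ρ - B.ρ, combT k A.n B A.T 0⟩

def QP.Mono (F : QP) : Prop := ∀ x y, x ≤ y → F.eval x ≤ F.eval y
def QP.WF (F : QP) : Prop := 1 ≤ F.n ∧ F.T.length = F.n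

lemma comb_WF (k : ℤ) (A B : QP) (hA : A.WF) : (comb k A B).WF :=
  ⟨hA.1, by simp [comb, combT_length, hA.2]⟩

lemma comb_spec (k : ℤ) (A B : QP) (hA : A.WF) (hB : B.WF) (hρ : B.ρ ≤ A.ρ) (hm : B.Mono)
    (x y : ℤ) (h : x * B.n + y * A.n ≤ k) : A.eval x + B.eval y ≤ (comb k A B).eval x := by
  obtain ⟨r, q, hr, rfl⟩ := exists_rep A.n hA.1 x
  have hAn : (0 : ℤ) < A.n := by exact_mod_cast hA.1
  have e1 : (comb k A B).eval ((r : ℤ) + A.n * q)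
      = A.eval ((r : ℤ) + A.n * q) + B.eval ((k - r * B.n) / A.n + B.n * (-q)) := by
    have := QP.eval_period (comb k A B) (comb_WF k A B hA).1 r q
    have e0 : (comb k A B).n = A.n := rfl
    rw [e0] at this
    rw [this, A.eval_period hA.1, B.eval_period hB.1, QP.eval_small _ r (by exact hr),
      A.eval_small r hr]
    simp only [comb]
    rw [combT_getD _ _ _ _ _ _ (by rw [hA.2]; exact hr)]
    rw [zero_add]
    push_cast [hρ]; ring
  rw [e1]
  have := hm y ((k - r * B.n) / A.n + B.n * (-q)) (by
    have e2 : (k - r * B.n) / A.n + B.n * (-q) = (k - (r + A.n * q) * B.n) / A.n := by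
      rw [← Int.add_mul_ediv_right _ _ hAn.ne']
      congr 1; ring
    rw [e2, Int.le_ediv_iff_mul_le hAn]
    linarith)
  linarith

def lmax : List ℤ → ℤ → ℤ
  | [], m => m
  | t :: ts, m => lmax ts (if m ≤ t then t else m)

lemma lmax_ge (ts : List ℤ) (m : ℤ) : m ≤ lmax ts m ∧ ∀ t ∈ ts, t ≤ lmax ts m := by
  induction ts generalizing m with
  | nil => simp [lmax]
  | cons t ts ih =>
    simp only [lmax, List.mem_cons]
    obtain ⟨h1, h2⟩ := ih (if m ≤ t then t else m)
    refine ⟨le_trans ?_ h1, ?_⟩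
    · split_ifs <;> omega
    · rintro s (rfl | hs)
      · refine le_trans ?_ h1
        split_ifs <;> omega
      · exact h2 s hs

def runMax : List ℤ → ℤ → List ℤ
  | [], _ => []
  | t :: ts, m => if m ≤ t then t :: runMax ts t else m :: runMax ts m

lemma runMax_length (ts : List ℤ) (m : ℤ) : (runMax ts m).length = ts.length := by
  induction ts generalizing m with
  | nil => rfl
  | cons t ts ih => simp only [runMax]; split_ifs <;> simp [ih]

lemma runMax_spec (ts : List ℤ) (m : ℤ) (i : ℕ) (hi : i < ts.length) :
    m ≤ (runMax ts m).getD i 0 ∧ (∀ j ≤ i, ts.getD j 0 ≤ (runMax ts m).getD i 0) ∧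
    (∀ j ≤ i, (runMax ts m).getD j 0 ≤ (runMax ts m).getD i 0) ∧
    (∀ M, m ≤ M → (∀ t ∈ ts, t ≤ M) → (runMax ts m).getD i 0 ≤ M) := by
  induction ts generalizing m i with
  | nil => simp at hi
  | cons t ts ih =>
    have e : runMax (t :: ts) m = (if m ≤ t then t else m) :: runMax ts (if m ≤ t then t else m) := by
      simp only [runMax]; split_ifs <;> rfl
    rw [e]
    set m' := if m ≤ t then t else m with hm'
    have h1 : m ≤ m' := by rw [hm']; split_ifs <;> omega
    have h2 : t ≤ m' := by rw [hm']; split_ifs <;> omega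
    have h3 : ∀ M, m ≤ M → t ≤ M → m' ≤ M := by intro M _ _; rw [hm']; split_ifs <;> omega
    rcases i with _ | i
    · refine ⟨by simpa using h1, ?_, ?_, ?_⟩
      · intro j hj; obtain rfl : j = 0 := by omega
        simpa using h2
      · intro j hj; obtain rfl : j = 0 := by omega
        exact le_refl _
      · intro M hM hM2
        simpa using h3 M hM (hM2 t (by simp))
    · obtain ⟨k1, k2, k3, k4⟩ := ih m' i (by simpa using hi)
      simp only [List.getD_cons_succ]
      refine ⟨h1.trans k1, ?_, ?_, ?_⟩
      · rintro (_ | j) hj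
        · simpa using h2.trans k1
        · simpa using k2 j (by omega)
      · rintro (_ | j) hj
        · simpa using k1
        · simpa using k3 j (by omega)
      · intro M hM hM2
        exact k4 M (h3 M hM (hM2 t (by simp))) (fun s hs => hM2 s (by simp [hs]))

def mono (F : QP) : QP := ⟨F.n, F.ρ, runMax F.T (lmax F.T (F.T.headD 0) - F.ρ)⟩

lemma mono_WF (F : QP) (hF : F.WF) : (mono F).WF := ⟨hF.1, by simp [mono, runMax_length, hF.2]⟩

lemma mono_ge (F : QP) (hF : F.WF) (x : ℤ) : F.eval x ≤ (mono F).eval x := by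
  obtain ⟨r, q, hr, rfl⟩ := exists_rep F.n hF.1 x
  have h := QP.eval_period (mono F) hF.1 r q
  have e0 : (mono F).n = F.n := rfl
  have e1 : (mono F).ρ = F.ρ := rfl
  rw [e0, e1] at h
  rw [h, F.eval_period hF.1, F.eval_small r hr, QP.eval_small (mono F) r hr]
  have := (runMax_spec F.T (lmax F.T (F.T.headD 0) - F.ρ) r (by rw [hF.2]; exact hr)).2.1 r le_rfl
  simp only [mono]; omega

lemma mono_Mono (F : QP) (hF : F.WF) : (mono F).Mono := by
  intro x y hxy
  obtain ⟨r, q, hr, rfl⟩ := exists_rep F.n hF.1 x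
  obtain ⟨s, p, hs, rfl⟩ := exists_rep F.n hF.1 y
  have h := QP.eval_period (mono F) hF.1 r q
  have h' := QP.eval_period (mono F) hF.1 s p
  have e0 : (mono F).n = F.n := rfl
  have e1 : (mono F).ρ = F.ρ := rfl
  rw [e0, e1] at h h'
  rw [h, h', QP.eval_small (mono F) r hr, QP.eval_small (mono F) s hs]
  obtain ⟨a1, a2, a3, a4⟩ := runMax_spec F.T (lmax F.T (F.T.headD 0) - F.ρ) r (by rw [hF.2]; exact hr)
  obtain ⟨b1, b2, b3, b4⟩ := runMax_spec F.T (lmax F.T (F.T.headD 0) - F.ρ) s (by rw [hF.2]; exact hs)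
  obtain ⟨c1, c2⟩ := lmax_ge F.T (F.T.headD 0)
  have a5 := a4 (lmax F.T (F.T.headD 0)) (by omega) c2
  simp only [mono]
  have hn : (0 : ℤ) < F.n := by exact_mod_cast hF.1
  have hqp : q ≤ p := by
    by_contra hc
    have : (F.n : ℤ) * (p + 1) ≤ F.n * q := mul_le_mul_of_nonneg_left (by omega) hn.le
    have hs' : (s : ℤ) < F.n := by exact_mod_cast hs
    nlinarith
  rcases eq_or_lt_of_le hqp with rfl | hlt
  · have : r ≤ s := by
      have : (r : ℤ) ≤ s := by linarith
      exact_mod_cast this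
    have := b3 r this
    linarith
  · have : (F.ρ : ℤ) * (q + 1) ≤ F.ρ * p := mul_le_mul_of_nonneg_left (by omega) (by positivity)
    nlinarith

lemma QPG_WF (n : ℕ) (hn : 1 ≤ n) : (QPG n).WF := by
  refine ⟨hn, ?_⟩
  have : ∀ f r c, (cntTab n f r c).length = f := by
    intro f; induction f with
    | zero => intros; rfl
    | succ f ih => intros; simp [cntTab, ih]
  exact this _ _ _

lemma QPG_Mono (n : ℕ) (hn : 1 ≤ n) : (QPG n).Mono := by
  intro x y h
  rw [QPG_eval n hn, QPG_eval n hn]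
  exact GG_mono n hn h

/-- returns `true` only if the DP bound is at most `bd` -/
def dpGo (k bd : ℤ) : ℕ → List ℕ → List ℕ → QP → Bool
  | 0, _, _, _ => false
  | f + 1, P, R, F =>
    match R with
    | [] => P.isEmpty && F.ρ == 0 && decide (lmax F.T (F.T.headD 0) ≤ bd)
    | m :: R' =>
      if cnt m m ≤ F.ρ then dpGo k bd f P R' (comb k F (QPG m))
      else dpGo k bd f R' P (comb k (QPG m) (mono F))

lemma dpGo_sound (k bd : ℤ) (fuel : ℕ) (P R : List ℕ) (F : QP) (hF : F.WF)
    (hP : ∀ n ∈ P, 1 ≤ n) (hR : ∀ n ∈ R, 1 ≤ n)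
    (h : dpGo k bd fuel P R F = true) (f g : ℕ → ℤ) 
    (h1 : ∀ n ∈ P, ∀ m ∈ R, f n * m + g m * n ≤ k)
    (h2 : ∀ m ∈ R, f F.n * m + g m * F.n ≤ k) :
    F.eval (f F.n) + (P.map (fun n => GG n (f n))).sum + (R.map (fun n => GG n (g n))).sum ≤ bd := by
  induction fuel generalizing P R F f g with
  | zero => simp [dpGo] at h
  | succ fuel ih =>
    rcases R with _ | ⟨m, R⟩
    · simp only [dpGo, Bool.and_eq_true, List.isEmpty_iff, beq_iff_eq, decide_eq_true_eq] at h
      obtain ⟨⟨rfl, h3⟩, h4⟩ := h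
      obtain ⟨r, q, hr, hx⟩ := exists_rep F.n hF.1 (f F.n)
      simp only [List.map_nil, List.sum_nil, add_zero]
      rw [hx, F.eval_period hF.1, h3, F.eval_small r hr]
      have := (lmax_ge F.T (F.T.headD 0)).2 (F.T.getD r 0) (by
        rw [List.getD_eq_getElem _ _ (by rw [hF.2]; exact hr)]
        exact List.getElem_mem _)
      push_cast; linarith
    · simp only [List.mem_cons, forall_eq_or_imp] at h1 h2 hR
      simp only [dpGo] at h
      split_ifs at h with hc
      · have h5 := ih P R (comb k F (QPG m)) (comb_WF k F _ hF) hP hR.2 h f g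
          (fun n hn m' hm' => (h1 n hn).2 m' hm') h2.2
        have h6 := comb_spec k F (QPG m) hF (QPG_WF m hR.1) hc (QPG_Mono m hR.1) (f F.n) (g m) h2.1
        rw [QPG_eval m hR.1] at h6
        have e : (comb k F (QPG m)).n = F.n := rfl
        rw [e] at h5
        simp only [List.map_cons, List.sum_cons]
        linarith
      · have h5 := ih R P (comb k (QPG m) (mono F)) (comb_WF k _ _ (QPG_WF m hR.1)) hR.2 hP h g f
          (fun n hn m' hm' => by have := (h1 m' hm').2 n hn; linarith)
          (fun n hn => by have := (h1 n hn).1; simp only [comb, QPG]; linarith)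
        have h6 := comb_spec k (QPG m) (mono F) (QPG_WF m hR.1) (mono_WF F hF)
          (by simp only [mono, QPG]; omega) (mono_Mono F hF) (g m) (f F.n)
          (by have := h2.1; simp only [mono, QPG]; linarith)
        rw [QPG_eval m hR.1] at h6
        have h7 := mono_ge F hF (f F.n)
        have e : (comb k (QPG m) (mono F)).n = m := rfl
        rw [e] at h5
        simp only [List.map_cons, List.sum_cons]
        linarith

end
section
/-! ### Fast kernel-friendly version, with tables packed in natural numbers (base `65536`) -/

/-- forces kernel evaluation of `n` before continuing -/
def force {α : Type} (n : ℕ) (f : ℕ → α) : α :=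
  Nat.rec (motive := fun _ => α) (f 0) (fun m _ => f (Nat.succ m)) n

@[simp] lemma force_eq {α : Type} (n : ℕ) (f : ℕ → α) : force n f = f n := by
  cases n <;> rfl

lemma nat_add (a b : ℕ) : Nat.add a b = a + b := rfl
lemma nat_mul (a b : ℕ) : Nat.mul a b = a * b := rfl
lemma nat_sub (a b : ℕ) : Nat.sub a b = a - b := rfl
lemma nat_div (a b : ℕ) : Nat.div a b = a / b := rfl
lemma nat_mod (a b : ℕ) : Nat.mod a b = a % b := rfl

def Enc (off : ℤ) : ℕ → List ℤ → Prop
  | _, [] => True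
  | T, t :: ts => ((T % 65536 : ℕ) : ℤ) = t + off ∧ Enc off (T / 65536) ts

def lkT (T i : ℕ) : ℕ := Nat.mod (Nat.shiftRight T (Nat.mul 16 i)) 65536

lemma lkT_zero (T : ℕ) : lkT T 0 = T % 65536 := rfl

lemma lkT_succ (T i : ℕ) : lkT T (i + 1) = lkT (T / 65536) i := by
  have h1 : lkT T (i + 1) = (T >>> (16 * (i + 1))) % 65536 := rfl
  have h2 : lkT (T / 65536) i = ((T / 65536) >>> (16 * i)) % 65536 := rfl
  have h3 : 2 ^ (16 * (i + 1)) = 65536 * 2 ^ (16 * i) := by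
    rw [mul_add, pow_add, mul_comm]; norm_num
  rw [h1, h2, Nat.shiftRight_eq_div_pow, Nat.shiftRight_eq_div_pow, Nat.div_div_eq_div_mul, h3]

lemma Enc_lkT (off : ℤ) (T : ℕ) (L : List ℤ) (h : Enc off T L) (i : ℕ) (hi : i < L.length) :
    (lkT T i : ℤ) = L.getD i 0 + off := by
  induction L generalizing T i with
  | nil => simp at hi
  | cons t ts ih =>
    rcases i with _ | i
    · simpa [lkT_zero] using h.1
    · rw [lkT_succ, List.getD_cons_succ]
      exact ih _ h.2 i (by simpa using hi)

def combK (q p ρB TB : ℕ) (n : ℕ) : ℕ → ℕ → (ℕ → Bool) → Bool :=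
  Nat.rec (motive := fun _ => ℕ → ℕ → (ℕ → Bool) → Bool) (fun _ _ K => K 0)
    (fun _ ih T s K =>
      (fun x =>
        force (Nat.add (Nat.mod T (nat_lit 65536)) (Nat.add (Nat.mod (Nat.shiftRight TB
          (Nat.mul (nat_lit 16) (Nat.mod x p))) (nat_lit 65536)) (Nat.mul ρB (Nat.div x p)))) fun v =>
        Bool.rec (motive := fun _ => Bool) false (ih (Nat.div T (nat_lit 65536)) (Nat.sub s p)
          (fun R => K (Nat.add v (Nat.mul (nat_lit 65536) R)))) (Nat.ble v (nat_lit 65535)))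
      (Nat.div s q)) n

lemma bool_rec_eq {α : Type} (b : Bool) (t f : α) :
    Bool.rec (motive := fun _ => α) f t b = cond b t f := by cases b <;> rfl

lemma combK_succ (q p ρB TB n T s : ℕ) (K : ℕ → Bool) : combK q p ρB TB (n+1) T s K =
    cond (Nat.ble (T % 65536 + (lkT TB (s / q % p) + ρB * (s / q / p))) 65535)
      (combK q p ρB TB n (T / 65536) (s - p) (fun R => K
        ((T % 65536 + (lkT TB (s / q % p) + ρB * (s / q / p))) + 65536 * R))) false := by
  unfold combK lkT
  simp only [force_eq, nat_add, nat_mul, nat_sub, nat_div, nat_mod, bool_rec_eq]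


lemma Enc_cons (off : ℤ) (v R : ℕ) (t : ℤ) (ts : List ℤ) (hv : v ≤ 65535) (h1 : (v : ℤ) = t + off)
    (h2 : Enc off R ts) : Enc off (v + 65536 * R) (t :: ts) := by
  refine ⟨?_, ?_⟩
  · rw [Nat.add_mul_mod_self_left, Nat.mod_eq_of_lt (by omega)]; exact h1
  · rw [Nat.add_mul_div_left _ _ (by norm_num), Nat.div_eq_of_lt (by omega), zero_add]; exact h2

lemma combK_spec (k : ℤ) (q : ℕ) (B : QP) (hq : 1 ≤ q) (hB : B.WF) (offA offB : ℤ) (TB : ℕ)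
    (hEB : Enc offB TB B.T)
    (L : List ℤ) (T : ℕ) (α s : ℕ) (hα : α + L.length ≤ q)
    (hs : (s : ℤ) = k + q * B.n - α * B.n) (hk : 0 ≤ k)
    (hL : Enc offA T L) (K : ℕ → Bool)
    (h : combK q B.n B.ρ TB L.length T s K = true) :
    ∃ R, K R = true ∧ Enc (offA + offB + B.ρ) R (combT k q B L α) := by
  induction L generalizing T α s K with
  | nil => exact ⟨0, h, trivial⟩
  | cons t ts ih =>
    rw [List.length_cons, combK_succ] at h
    rw [List.length_cons] at hα
    set v := T % 65536 + (lkT TB (s / q % B.n) + B.ρ * (s / q / B.n)) with hv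
    cases hb : Nat.ble v 65535 with
    | false => rw [hb] at h; simp at h
    | true =>
      rw [hb] at h
      have hb' : v ≤ 65535 := Nat.le_of_ble_eq_true hb
      have hBn := hB.1
      have hqz : (0 : ℤ) < q := by exact_mod_cast hq
      have hBz : (0 : ℤ) < B.n := by exact_mod_cast hBn
      have hsp : B.n ≤ s := by
        have : (α : ℤ) + 1 ≤ q := by
          have : α + 1 ≤ q := by omega
          exact_mod_cast this
        have : (B.n : ℤ) ≤ s := by nlinarith
        exact_mod_cast this
      obtain ⟨R, hR1, hR2⟩ := ih (T / 65536) (α + 1) (s - B.n) (by omega)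
        (by push_cast [hsp]; linarith) hL.2 _ h
      refine ⟨_, hR1, ?_⟩
      refine Enc_cons _ _ _ _ _ hb' ?_ hR2
      have e1 : ((s / q : ℕ) : ℤ) = (k - α * B.n) / q + B.n := by
        push_cast
        rw [hs, ← Int.add_mul_ediv_left _ _ hqz.ne']
        congr 1; ring
      have e2 := Enc_lkT offB TB B.T hEB (s / q % B.n) (by rw [hB.2]; exact Nat.mod_lt _ hBn)
      have e3 : B.eval ((s / q : ℕ) : ℤ) = B.eval ((k - α * B.n) / q) + B.ρ := by
        rw [e1]
        have := B.eval_period hBn ((k - α * B.n) / q) 1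
        simpa using this
      have e4 : B.eval ((s / q : ℕ) : ℤ) = B.T.getD (s / q % B.n) 0 + B.ρ * ((s / q / B.n : ℕ) : ℤ) := by
        unfold QP.eval
        have : (((s / q : ℕ) : ℤ) % B.n).toNat = s / q % B.n := by
          rw [← Int.natCast_mod]; rfl
        rw [this]; push_cast; rfl
      have h1 := hL.1
      rw [hv]
      push_cast at *
      linarith

def lmN (n : ℕ) : ℕ → ℕ → ℕ :=
  Nat.rec (motive := fun _ => ℕ → ℕ → ℕ) (fun _ m => m)
    (fun _ ih T m => (fun t => (fun T' =>
      Bool.rec (motive := fun _ => ℕ) (ih T' m) (ih T' t) (Nat.ble m t))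
        (Nat.div T (nat_lit 65536))) (Nat.mod T (nat_lit 65536))) n

lemma lmN_succ (n T m : ℕ) : lmN (n+1) T m =
    cond (Nat.ble m (T % 65536)) (lmN n (T / 65536) (T % 65536)) (lmN n (T / 65536) m) := by
  unfold lmN
  simp only [nat_div, nat_mod, bool_rec_eq]


lemma lmN_spec (off : ℤ) (L : List ℤ) (T m : ℕ) (m' : ℤ) (hL : Enc off T L) (hm : (m : ℤ) = m' + off) :
    (lmN L.length T m : ℤ) = lmax L m' + off := by
  induction L generalizing T m m' with
  | nil => exact hm
  | cons t ts ih =>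
    rw [List.length_cons, lmN_succ]
    have h1 := hL.1
    cases hb : Nat.ble m (T % 65536) with
    | true =>
      have : m ≤ T % 65536 := Nat.le_of_ble_eq_true hb
      have h3 : m' ≤ t := by
        have : (m : ℤ) ≤ (T % 65536 : ℕ) := by exact_mod_cast this
        linarith
      simp only [cond_true, lmax, if_pos h3]
      exact ih _ _ _ hL.2 h1
    | false =>
      have : ¬ m ≤ T % 65536 := by
        intro hc; rw [Nat.ble_eq_true_of_le hc] at hb; simp at hb
      have h3 : ¬ m' ≤ t := by
        have : ((T % 65536 : ℕ) : ℤ) < m := by exact_mod_cast (not_le.mp this)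
        intro; linarith
      simp only [cond_false, lmax, if_neg h3]
      exact ih _ _ _ hL.2 hm

def rmK (ρ : ℕ) (n : ℕ) : ℕ → ℕ → (ℕ → Bool) → Bool :=
  Nat.rec (motive := fun _ => ℕ → ℕ → (ℕ → Bool) → Bool) (fun _ _ K => K 0)
    (fun _ ih T m K => (fun t => (fun T' =>
      force (Bool.rec (motive := fun _ => ℕ) m t (Nat.ble m t)) fun v =>
      Bool.rec (motive := fun _ => Bool) false
        (ih T' v (fun R => K (Nat.add v (Nat.mul (nat_lit 65536) R)))) (Nat.ble v (nat_lit 65535)))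
      (Nat.div T (nat_lit 65536))) (Nat.add (Nat.mod T (nat_lit 65536)) ρ)) n

lemma rmK_succ (ρ n T m : ℕ) (K : ℕ → Bool) : rmK ρ (n+1) T m K =
    cond (Nat.ble (cond (Nat.ble m (T % 65536 + ρ)) (T % 65536 + ρ) m) 65535)
      (rmK ρ n (T / 65536) (cond (Nat.ble m (T % 65536 + ρ)) (T % 65536 + ρ) m)
      (fun R => K ((cond (Nat.ble m (T % 65536 + ρ)) (T % 65536 + ρ) m) + 65536 * R))) false := by
  unfold rmK
  simp only [force_eq, nat_add, nat_mul, nat_div, nat_mod, bool_rec_eq]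


lemma rmK_spec (ρ : ℕ) (off : ℤ) (L : List ℤ) (T m : ℕ) (m' : ℤ) (hL : Enc off T L)
    (hm : (m : ℤ) = m' + (off + ρ)) (K : ℕ → Bool) (h : rmK ρ L.length T m K = true) :
    ∃ R, K R = true ∧ Enc (off + ρ) R (runMax L m') := by
  induction L generalizing T m m' K with
  | nil => exact ⟨0, h, trivial⟩
  | cons t ts ih =>
    rw [List.length_cons, rmK_succ] at h
    set v := cond (Nat.ble m (T % 65536 + ρ)) (T % 65536 + ρ) m with hv
    have h1 := hL.1
    have hv' : (v : ℤ) = (if m' ≤ t then t else m') + (off + ρ) := by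
      cases hb : Nat.ble m (T % 65536 + ρ) with
      | true =>
        have : m ≤ T % 65536 + ρ := Nat.le_of_ble_eq_true hb
        have h3 : m' ≤ t := by
          have : (m : ℤ) ≤ (T % 65536 : ℕ) + ρ := by exact_mod_cast this
          linarith
        rw [hv, hb, if_pos h3]; simp only [cond_true]; push_cast at *; linarith
      | false =>
        have : ¬ m ≤ T % 65536 + ρ := by
          intro hc; rw [Nat.ble_eq_true_of_le hc] at hb; simp at hb
        have h3 : ¬ m' ≤ t := by
          have : ((T % 65536 : ℕ) : ℤ) + ρ < m := by exact_mod_cast (not_le.mp this)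
          intro; linarith
        rw [hv, hb, if_neg h3]; simp only [cond_false]; linarith
    have e : runMax (t :: ts) m' = (if m' ≤ t then t else m') :: runMax ts (if m' ≤ t then t else m') := by
      simp only [runMax]; split_ifs <;> rfl
    rw [e]
    cases hb : Nat.ble v 65535 with
    | false => rw [hb] at h; simp at h
    | true =>
      rw [hb] at h
      obtain ⟨R, hR1, hR2⟩ := ih _ _ _ hL.2 hv' _ h
      exact ⟨_, hR1, Enc_cons _ _ _ _ _ (Nat.le_of_ble_eq_true hb) hv' hR2⟩

structure Ent where
  n : ℕ
  r : ℕ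
  T : ℕ

def Ent.ok (e : Ent) : Prop := 1 ≤ e.n ∧ e.r = cnt e.n e.n ∧ Enc 0 e.T (QPG e.n).T

def dpF (k bd : ℕ) : ℕ → List Ent → List Ent → ℕ → ℕ → ℕ → ℕ → Bool
  | 0, _, _, _, _, _, _ => false
  | f + 1, P, R, n, r, T, off =>
    match R with
    | [] => P.isEmpty && (Nat.beq r 0) && (Nat.ble (lmN n T (Nat.mod T 65536)) (Nat.add bd off))
    | e :: R' =>
      cond (Nat.ble e.r r)
       (force (Nat.sub r e.r) fun r' => force (Nat.add off e.r) fun off' =>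
        force (Nat.add k (Nat.mul n e.n)) fun s =>
        combK n e.n e.r e.T n T s (fun T' => force T' fun T' => dpF k bd f P R' n r' T' off'))
       (force (Nat.sub e.r r) fun r' => force (Nat.add off (Nat.add r r)) fun off' =>
        force (Nat.add k (Nat.mul e.n n)) fun s =>
        force (lmN n T (Nat.mod T 65536)) fun M =>
        rmK r n T M (fun TB => force TB fun TB =>
          combK e.n n r TB e.n e.T s (fun T' => force T' fun T' => dpF k bd f R' P e.n r' T' off')))

lemma lmN_head (off : ℤ) (L : List ℤ) (T : ℕ) (hL : Enc off T L) (h0 : L ≠ []) :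
    (lmN L.length T (T % 65536) : ℤ) = lmax L (L.headD 0) + off := by
  cases L with
  | nil => exact absurd rfl h0
  | cons t ts => exact lmN_spec off _ T _ _ hL hL.1

lemma dpF_sound (k bd : ℕ) (fuel : ℕ) (P R : List Ent) (F : QP) (T off : ℕ)
    (hP : ∀ e ∈ P, e.ok) (hR : ∀ e ∈ R, e.ok) (hF : F.WF) (hE : Enc off T F.T)
    (h : dpF k bd fuel P R F.n F.ρ T off = true) :
    dpGo k bd fuel (P.map Ent.n) (R.map Ent.n) F = true := by
  induction fuel generalizing P R F T off with
  | zero => simp [dpF] at h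
  | succ f ih =>
    have hne : F.T ≠ [] := by
      intro hc; have := hF.2; rw [hc] at this; have := hF.1; simp at *; omega
    have hM := lmN_head off F.T T hE hne
    rw [hF.2] at hM
    rcases R with _ | ⟨e, R⟩
    · simp only [dpF, Bool.and_eq_true, List.isEmpty_iff] at h
      obtain ⟨⟨rfl, h3⟩, h4⟩ := h
      have h4' : lmN F.n T (T % 65536) ≤ bd + off := Nat.le_of_ble_eq_true h4
      have h4' : (lmN F.n T (T % 65536) : ℤ) ≤ bd + off := by exact_mod_cast h4'
      have h3' : F.ρ = 0 := Nat.eq_of_beq_eq_true h3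
      simp only [dpGo, List.map_nil, List.isEmpty_nil, Bool.true_and, Bool.and_eq_true, beq_iff_eq, decide_eq_true_eq]
      exact ⟨h3', by linarith⟩
    · simp only [List.mem_cons, forall_eq_or_imp] at hR
      obtain ⟨⟨en, er, eT⟩, hR⟩ := hR
      rw [List.map_cons, dpGo]
      simp only [dpF, force_eq] at h
      have hW := QPG_WF e.n en
      have hWl : (QPG e.n).T.length = e.n := hW.2
      cases hb : Nat.ble e.r F.ρ with
      | true =>
        have hb' := Nat.le_of_ble_eq_true hb
        rw [if_pos (er ▸ hb')]
        rw [hb] at h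
        simp only [cond_true] at h
        rw [← hF.2] at h
        obtain ⟨T', hT1, hT2⟩ := combK_spec k F.n (QPG e.n) hF.1 hW off 0 e.T eT F.T T 0
          (k + F.n * e.n) (by rw [hF.2]; omega) (by simp [QPG]) (by positivity) hE
          (fun T' => dpF k bd f P R F.n (Nat.sub F.ρ e.r) T' (Nat.add off e.r))
          (by rw [er] at h ⊢; simp only [hF.2] at h ⊢; exact h)
        refine ih P R (comb k F (QPG e.n)) T' (off + e.r) hP hR (comb_WF k F _ hF) ?_ ?_
        · simp only [comb]
          convert hT2 using 1
          rw [er]; push_cast; simp [QPG]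
        · rw [er] at hT1 ⊢; exact hT1
      | false =>
        have hb' : ¬ e.r ≤ F.ρ := by
          intro hc; rw [Nat.ble_eq_true_of_le hc] at hb; simp at hb
        rw [if_neg (er ▸ hb')]
        rw [hb] at h
        simp only [cond_false] at h
        obtain ⟨TB, hB1, hB2⟩ := rmK_spec F.ρ off F.T T (lmN F.n T (T % 65536))
          (lmax F.T (F.T.headD 0) - F.ρ) hE (by linarith) _ (by rw [hF.2]; exact h)
        obtain ⟨T', hT1, hT2⟩ := combK_spec k e.n (mono F) en (mono_WF F hF) 0 (off + F.ρ) TB hB2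
          (QPG e.n).T e.T 0 (k + e.n * F.n) (by rw [hWl]; omega) (by simp [mono]) (by positivity) eT
          (fun T' => dpF k bd f R P e.n (Nat.sub e.r F.ρ) T' (Nat.add off (Nat.add F.ρ F.ρ)))
          (by simp only [hWl]; exact hB1)
        refine ih R P (comb k (QPG e.n) (mono F)) T' (off + (F.ρ + F.ρ)) hR hP (comb_WF k _ _ hW) ?_ ?_
        · simp only [comb]
          have e5 : ((off + (F.ρ + F.ρ) : ℕ) : ℤ) = 0 + (off + F.ρ) + (mono F).ρ := by
            push_cast; simp only [mono]; ring
          rw [e5]; exact hT2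
        · rw [er] at hT1; exact hT1

end
section
/-! ### The simple (linear) bound -/

/-- row data `(n, φ n, N1 n)` -/
structure Row where
  n : ℕ
  p : ℕ
  e : ℕ

def Row.ok (w : Row) : Prop := 1 ≤ w.n ∧ w.p = cnt w.n w.n ∧ ∀ r < w.n, w.n * cnt w.n r ≤ w.p * r + w.e

/-- loop verifying the row data -/
def rowLoop (n p e : ℕ) : ℕ → ℕ → ℕ → Bool
  | 0, _, c => Nat.beq c p
  | f + 1, r, c => Nat.ble (n * c) (p * r + e) &&
      rowLoop n p e f (r + 1) (bif Nat.beq (Nat.gcd (r + 1) n) 1 then c + 1 else c)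

def Row.okB (w : Row) : Bool := Nat.ble 1 w.n && rowLoop w.n w.p w.e w.n 0 0

lemma natbeq_false {a b : ℕ} (h : a ≠ b) : Nat.beq a b = false := by
  cases hc : Nat.beq a b with
  | false => rfl
  | true => exact absurd (Nat.eq_of_beq_eq_true hc) h

lemma rowLoop_sound (n p e f r : ℕ) (h : rowLoop n p e f r (cnt n r) = true) :
    p = cnt n (r + f) ∧ ∀ i < f, n * cnt n (r + i) ≤ p * (r + i) + e := by
  induction f generalizing r with
  | zero => 
    simp only [rowLoop] at h
    exact ⟨(Nat.eq_of_beq_eq_true h).symm, by intro i hi; omega⟩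
  | succ f ih =>
    simp only [rowLoop, Bool.and_eq_true] at h
    have e1 : (bif Nat.beq (Nat.gcd (r + 1) n) 1 then cnt n r + 1 else cnt n r) = cnt n (r + 1) := by
      simp only [cnt]
      by_cases hg : Nat.gcd (r + 1) n = 1
      · have : Nat.beq (Nat.gcd (r + 1) n) 1 = true := by rw [hg]; rfl
        rw [this, if_pos hg]; rfl
      · rw [natbeq_false hg, if_neg hg]; rfl
    rw [e1] at h
    obtain ⟨h1, h2⟩ := ih (r + 1) h.2
    refine ⟨by rw [h1]; congr 1; omega, ?_⟩
    rintro (_ | i) hi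
    · exact Nat.le_of_ble_eq_true h.1
    · have := h2 i (by omega)
      rw [show r + (i + 1) = r + 1 + i by omega]; exact this

lemma Row.okB_sound (w : Row) (h : w.okB = true) : w.ok := by
  simp only [Row.okB, Bool.and_eq_true] at h
  obtain ⟨h1, h2⟩ := rowLoop_sound w.n w.p w.e w.n 0 (by simpa [cnt] using h.2)
  simp only [zero_add] at h1 h2
  exact ⟨Nat.le_of_ble_eq_true h.1, h1, h2⟩

lemma Row.ok_bound (w : Row) (h : w.ok) (x : ℤ) : (GG w.n x : ℚ) ≤ w.p * x / w.n + w.e / w.n := by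
  obtain ⟨h1, h2, h3⟩ := h
  obtain ⟨r, q, hr, rfl⟩ := exists_rep w.n h1 x
  rw [GG_add_period _ h1, GG_small _ _ hr, ← h2]
  have h4 := h3 r hr
  have h4' : (w.n : ℚ) * cnt w.n r ≤ w.p * r + w.e := by exact_mod_cast h4
  have hn : (0 : ℚ) < w.n := by exact_mod_cast h1
  rw [← add_div, le_div_iff₀ hn]
  push_cast
  nlinarith

/-- coupling computation -/
def cpGo (D bd : ℕ) : ℕ → List Row → List Row → ℕ → ℕ → ℕ → Bool
  | 0, _, _, _, _, _ => false
  | f + 1, P, R, n, r, acc =>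
    match R with
    | [] => P.isEmpty && (Nat.beq r 0) && (Nat.ble acc bd)
    | w :: R' =>
      cond (Nat.ble w.p r)
        (force (r - w.p) fun r' => force (acc + (w.p * D / (n * w.n) + 1 - 
            (cond (Nat.beq (w.p * D % (n * w.n)) 0) 1 0))) fun acc' =>
          cpGo D bd f P R' n r' acc')
        (force (w.p - r) fun r' => force (acc + (r * D / (n * w.n) + 1 - 
            (cond (Nat.beq (r * D % (n * w.n)) 0) 1 0))) fun acc' =>
          cpGo D bd f R' P w.n r' acc')

lemma ceil_aux (a b : ℕ) (hb : 1 ≤ b) :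
    (a : ℚ) / b ≤ ((a / b + 1 - (cond (Nat.beq (a % b) 0) 1 0) : ℕ) : ℚ) := by
  have hb' : (0 : ℚ) < b := by exact_mod_cast hb
  rw [div_le_iff₀ hb']
  have key : a ≤ (a / b + 1 - (cond (Nat.beq (a % b) 0) 1 0)) * b := by
    have h1 := Nat.div_add_mod a b
    have h2 := Nat.mod_lt a hb
    by_cases h : a % b = 0
    · rw [h]; simp
      rw [mul_comm]; omega
    · have : Nat.beq (a % b) 0 = false := natbeq_false h
      rw [this]; simp
      rw [add_mul, mul_comm]; omega
  exact_mod_cast key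

lemma couple_step (k D : ℕ) (hD : 1 ≤ D) (n m y : ℕ) (hn : 1 ≤ n) (hm : 1 ≤ m) (x z : ℤ) 
    (h : x * m + z * n ≤ k) :
    (y : ℚ) * x / n + y * z / m ≤ k * ((y * D / (n * m) + 1 - (cond (Nat.beq (y * D % (n * m)) 0) 1 0) : ℕ) : ℚ) / D := by
  have hn' : (0 : ℚ) < n := by exact_mod_cast hn
  have hm' : (0 : ℚ) < m := by exact_mod_cast hm
  have hD' : (0 : ℚ) < D := by exact_mod_cast hD
  have h' : (x : ℚ) * m + z * n ≤ k := by exact_mod_cast h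
  have h1 := ceil_aux (y * D) (n * m) (Nat.mul_pos hn hm)
  have h2 : (y : ℚ) * x / n + y * z / m ≤ y * k / (n * m) := by
    have : (y : ℚ) * x / n + y * z / m = y * (x * m + z * n) / (n * m) := by field_simp
    rw [this]
    gcongr
  refine h2.trans ?_
  have h3 : (y : ℚ) * k / (n * m) = k * ((y * D : ℕ) / (n * m : ℕ) : ℚ) / D := by
    push_cast; field_simp
  rw [h3]
  gcongr

def rsum (f : ℕ → ℤ) (P : List Row) : ℚ := (P.map (fun w => (w.p : ℚ) * f w.n / w.n)).sum

lemma cpGo_sound (k D bd : ℕ) (hD : 1 ≤ D) (fuel : ℕ) (P R : List Row) (n r acc : ℕ) (hn : 1 ≤ n)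
    (hP : ∀ w ∈ P, w.ok) (hR : ∀ w ∈ R, w.ok) (h : cpGo D bd fuel P R n r acc = true)
    (f g : ℕ → ℤ) (h1 : ∀ w ∈ P, ∀ v ∈ R, f w.n * v.n + g v.n * w.n ≤ k)
    (h2 : ∀ v ∈ R, f n * v.n + g v.n * n ≤ k) :
    (r : ℚ) * f n / n + rsum f P + rsum g R ≤ k * ((bd : ℚ) - acc) / D := by
  induction fuel generalizing P R n r acc f g with
  | zero => simp [cpGo] at h
  | succ fuel ih =>
    rcases R with _ | ⟨w, R⟩
    · simp only [cpGo, Bool.and_eq_true, List.isEmpty_iff] at h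
      obtain ⟨⟨rfl, h3⟩, h4⟩ := h
      have h3' : r = 0 := Nat.eq_of_beq_eq_true h3
      have h4' : (acc : ℚ) ≤ bd := by exact_mod_cast Nat.le_of_ble_eq_true h4
      simp only [rsum, List.map_nil, List.sum_nil, h3']
      have : 0 ≤ (k : ℚ) * (bd - acc) / D := by
        have : (0 : ℚ) ≤ bd - acc := by linarith
        positivity
      simpa using this
    · simp only [List.mem_cons, forall_eq_or_imp] at h1 h2 hR
      simp only [cpGo, force_eq] at h
      have er : rsum g (w :: R) = (w.p : ℚ) * g w.n / w.n + rsum g R := by simp [rsum]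
      rw [er]
      have hD' : (0 : ℚ) < D := by exact_mod_cast hD
      cases hb : Nat.ble w.p r with
      | true =>
        have hb' := Nat.le_of_ble_eq_true hb
        rw [hb] at h
        have h5 := ih P R n _ _ hn hP hR.2 h f g (fun u hu v hv => (h1 u hu).2 v hv) h2.2
        have h6 := couple_step k D hD n w.n w.p hn hR.1.1 _ _ h2.1
        have e1 : ((r - w.p : ℕ) : ℚ) = r - w.p := by push_cast [hb']; ring
        rw [e1, Nat.cast_add] at h5
        have e2 : ((r : ℚ) - w.p) * f n / n = r * f n / n - w.p * f n / n := by ring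
        rw [e2] at h5
        generalize ((w.p * D / (n * w.n) + 1 - (cond (Nat.beq (w.p * D % (n * w.n)) 0) 1 0) : ℕ) : ℚ) = z at h5 h6
        have e3 : (k : ℚ) * (bd - (acc + z)) / D = k * (bd - acc) / D - k * z / D := by ring
        rw [e3] at h5
        linarith
      | false =>
        have hb' : ¬ w.p ≤ r := by
          intro hc; rw [Nat.ble_eq_true_of_le hc] at hb; simp at hb
        rw [hb] at h
        have h5 := ih R P w.n _ _ hR.1.1 hR.2 hP h g f
          (fun u hu v hv => by have := (h1 v hv).2 u hu; linarith)
          (fun v hv => by have := (h1 v hv).1; linarith)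
        have h6 := couple_step k D hD n w.n r hn hR.1.1 _ _ h2.1
        have e1 : ((w.p - r : ℕ) : ℚ) = w.p - r := by push_cast [(not_le.mp hb').le]; ring
        rw [e1, Nat.cast_add] at h5
        have e2 : ((w.p : ℚ) - r) * g w.n / w.n = w.p * g w.n / w.n - r * g w.n / w.n := by ring
        rw [e2] at h5
        generalize ((r * D / (n * w.n) + 1 - (cond (Nat.beq (r * D % (n * w.n)) 0) 1 0) : ℕ) : ℚ) = z at h5 h6
        have e3 : (k : ℚ) * (bd - (acc + z)) / D = k * (bd - acc) / D - k * z / D := by ring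
        rw [e3] at h5
        linarith

def esum (D : ℕ) : List Row → ℕ → ℕ
  | [], acc => acc
  | w :: L, acc => esum D L (acc + 2 * (w.e * D / w.n + 1))

lemma esum_spec (D : ℕ) (hD : 1 ≤ D) (L : List Row) (acc : ℕ) (hL : ∀ w ∈ L, w.ok) :
    (acc : ℚ) + D * (L.map (fun w => 2 * ((w.e : ℚ) / w.n))).sum ≤ esum D L acc := by
  induction L generalizing acc with
  | nil => simp [esum]
  | cons w L ih =>
    simp only [List.mem_cons, forall_eq_or_imp] at hL
    have h1 := ih (acc + 2 * (w.e * D / w.n + 1)) hL.2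
    have hw := hL.1.1
    have hw' : (0 : ℚ) < w.n := by exact_mod_cast hw
    have h2 : ((w.e * D : ℕ) : ℚ) / w.n ≤ ((w.e * D / w.n + 1 : ℕ) : ℚ) := by
      rw [div_le_iff₀ hw']
      have : w.e * D ≤ (w.e * D / w.n + 1) * w.n := by
        have := Nat.div_add_mod (w.e * D) w.n
        have := Nat.mod_lt (w.e * D) hw
        rw [add_mul, mul_comm (w.e * D / w.n)]; omega
      exact_mod_cast this
    simp only [esum, List.map_cons, List.sum_cons]
    push_cast at h1 h2 ⊢
    have e : (w.e : ℚ) * D / w.n = D * (w.e / w.n) := by ring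
    rw [e] at h2
    linarith

/-- the check that the simple bound gives at most `k + 4` for all `k ≥ thr` -/
def simpleOK (D C thr : ℕ) (L : List Row) : Bool :=
  match L with
  | [] => false
  | w :: P => cpGo D C 1000 P (w :: P).reverse w.n w.p 0 && Nat.ble C D &&
      Nat.ble (esum D (w :: P) 0 + 1) (thr * (D - C) + 5 * D)

lemma simpleOK_sound (D C thr : ℕ) (hD : 1 ≤ D) (L : List Row) (hL : ∀ w ∈ L, w.ok)
    (h : simpleOK D C thr L = true) (k : ℕ) (hk : thr ≤ k) (f g : ℕ → ℤ) 
    (h1 : ∀ w ∈ L, ∀ v ∈ L, f w.n * v.n + g v.n * w.n ≤ k) :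
    (L.map (fun w => GG w.n (f w.n))).sum + (L.map (fun w => GG w.n (g w.n))).sum ≤ k + 4 := by
  rcases L with _ | ⟨w, P⟩
  · simp [simpleOK] at h
  · simp only [simpleOK, Bool.and_eq_true] at h
    obtain ⟨⟨h2, h3⟩, h4⟩ := h
    have h3' := Nat.le_of_ble_eq_true h3
    have h4' := Nat.le_of_ble_eq_true h4
    have h5 := cpGo_sound k D C hD 1000 P (w :: P).reverse w.n w.p 0 (hL w (by simp)).1
      (fun u hu => hL u (by simp [hu])) (fun u hu => hL u (List.mem_reverse.mp hu)) h2 f g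
      (fun u hu v hv => h1 u (by simp [hu]) v (List.mem_reverse.mp hv))
      (fun v hv => h1 w (by simp) v (List.mem_reverse.mp hv))
    have e1 : rsum g (w :: P).reverse = rsum g (w :: P) := by
      simp only [rsum, List.map_reverse, List.sum_reverse]
    have e2 : (w.p : ℚ) * f w.n / w.n + rsum f P = rsum f (w :: P) := by simp [rsum]
    rw [e1, e2] at h5
    set L := w :: P with hLdef
    have h6 := esum_spec D hD L 0 hL
    have key : ∀ (f : ℕ → ℤ) (L : List Row), (∀ w ∈ L, w.ok) → (((L.map (fun w => GG w.n (f w.n))).sum : ℤ) : ℚ) ≤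
        rsum f L + (L.map (fun w => ((w.e : ℚ) / w.n))).sum := by
      intro f L hL
      induction L with
      | nil => simp [rsum]
      | cons u L ih =>
        simp only [List.mem_cons, forall_eq_or_imp] at hL
        have h1 := ih hL.2
        have h2 := u.ok_bound hL.1 (f u.n)
        simp only [rsum, List.map_cons, List.sum_cons] at *
        push_cast
        push_cast at h1
        linarith
    have k1 := key f L hL
    have k2 := key g L hL
    have e3 : (L.map (fun w => 2 * ((w.e : ℚ) / w.n))).sum = 2 * (L.map (fun w => ((w.e : ℚ) / w.n))).sum := by
      rw [List.sum_map_mul_left]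
    rw [e3] at h6
    have hD' : (0 : ℚ) < D := by exact_mod_cast hD
    have h7 : ((esum D L 0 : ℚ)) + 1 ≤ thr * (D - C) + 5 * D := by
      have : ((esum D L 0 + 1 : ℕ) : ℚ) ≤ ((thr * (D - C) + 5 * D : ℕ) : ℚ) := by exact_mod_cast h4'
      push_cast [h3'] at this
      exact this
    have h8 : (thr : ℚ) * (D - C) ≤ k * (D - C) := by
      have a1 : (thr : ℚ) ≤ k := by exact_mod_cast hk
      have a2 : (C : ℚ) ≤ D := by exact_mod_cast h3'
      exact mul_le_mul_of_nonneg_right a1 (by linarith)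
    have h9 : ((((L.map (fun w => GG w.n (f w.n))).sum + (L.map (fun w => GG w.n (g w.n))).sum : ℤ) : ℚ)) < ((k + 5 : ℤ) : ℚ) := by
      push_cast
      push_cast at k1 k2
      have h5' : D * (rsum f L + rsum g L) ≤ k * C := by
        have := mul_le_mul_of_nonneg_left h5 hD'.le
        have e : (D : ℚ) * (k * ((C : ℚ) - (0 : ℕ)) / D) = k * C := by
          push_cast; field_simp; ring
        linarith
      have h10 : (D : ℚ) * ((rsum f L + rsum g L) + 2 * (L.map (fun w => ((w.e : ℚ) / w.n))).sum) < D * (k + 5) := by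
        push_cast at h6
        nlinarith
      have := lt_of_mul_lt_mul_left h10 hD'.le
      linarith
    have h10 := Int.cast_lt.mp h9
    omega

end
section
/-! ### Tables and certificates -/

def TAB : List Ent := [
  ⟨1, 1, 0⟩,
  ⟨2, 1, 65536⟩,
  ⟨3, 2, 8590000128⟩,
  ⟨4, 2, 562954248454144⟩,
  ⟨5, 4, 73787820728358338560⟩,
  ⟨6, 2, 2417870086254811330707456⟩,
  ⟨7, 6, 475375019788471919435495571456⟩,
  ⟨8, 4, 20769425122253667660029755140407296⟩,
  ⟨9, 6, 2041720163326840940734066901142802071552⟩,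
  ⟨10, 4, 89204001656800304415880663161962777421086720⟩,
  ⟨11, 10, 14615217082738111239566014619916152524176825057280⟩,
  ⟨12, 4, 383128269788287463756611049116420371196032615572373504⟩,
  ⟨13, 12, 75326274429939731547357705681639177450708155740891740438528⟩,
  ⟨14, 6, 2468288221969396699252616546288598440175238898486441714747768832⟩,
  ⟨15, 8, 215682453007843615573365420875645081520026001443823186458623946588160⟩,
  ⟨16, 8, 14134965240733415329642158704349136411788350642923509465765475620904566784⟩,
  ⟨17, 16, 1852699930880475403847326035076432615845533013410402552173532647830527630442496⟩,
  ⟨18, 6, 45531881130821081806334169502658306021965758602609627913270262747305830575555805184⟩,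
  ⟨19, 18, 8951947262584983854498471616007351156187037552526947733478837264418237818168817798414336⟩,
  ⟨20, 8, 260744086286589634833790083123082607404392254519046502899725538207878657261055410973907681280⟩,
  ⟨21, 12, 25632202954356064108935055647699487549014778696279863231299956445648183854279450865971764018610176⟩,
  ⟨22, 10, 1399859688037788079027909468705473407879193620888510696840521603651710122992840556651655417906514165760⟩,
  ⟨23, 22, 201830817914820761376085550023832540458591544065546260616134141497832201349237422583348621948387718691094528⟩,
  ⟨24, 8, 4809879428461961449560173167033501234913117653728631335517275599123057180998324269992504714577259068237912539136⟩,
  ⟨25, 20, 788051547404146476284651283252852338915184898048896784926326374613679340396869664664959088266457334583676934725632000⟩,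
  ⟨26, 12, 30987431965724651069577978794112273944130820012355684602085848824037607259728363382051397655366260758574507042911939526656⟩,
  ⟨27, 18, 3046189803063834740326792475824257018133651934211178369383426934974036785371791457894413938677542710715255196412173079860543488⟩,
  ⟨28, 12, 133090006879812369284848839442493736078254432092592240533992250378154747610701782197840004718789531939380591025324488484465842126848⟩,
  ⟨29, 28, 20351783733004011068846409914068729794526916887885052265489083985967659830390447350207348321724069339434056989577878905388451408862314496⟩,
  ⟨30, 8, 381077909032201150746312639015186634569264065781311495086552966540790015403297801824150210244995803315088584038777472515988357778908783902720⟩,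
  ⟨31, 30, 93653837918807978344354120136708537786216412681442257531875320678759347719475816623742420494556395195580822386922119335988192687353017621863792640⟩,
  ⟨32, 16, 3273437434838918325325625659866720503680910182944884800388312930229476958346684062518209434826384435920188363359859260390615405334603284548346687062016⟩,
  ⟨33, 20, 268160045806391149991842874422421343042543078468110406766302856637700889754116844383327966416102297651751173777116554382121509138371043907199520347409940480⟩,
  ⟨34, 16, 14059306728135285235288650759865984282082156855261657188155292135949533311284562278675922783169305922058084422710545915961848259214726590082864259690869320384512⟩,
  ⟨35, 24, 1382086527942957424160744259856101764791463296299340262111543953879455781815027182846006339052086377849891312895365797721078308629911116752038564485879649421527941120⟩,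
  ⟨36, 12, 45288182554586550502550969803834168780189452369452543361267205782130738135597924449681030582976592566474682522169249250058928830316825313171254423159267648193329763516416⟩,
  ⟨37, 36, 8904026543674588260844990864658335616649875213513361543990370774401444017301780105791849101402484895000801458246280108978490138878768550279082055206031964887355327720026341376⟩,
  ⟨38, 18, 291767018117928142786053338621503015143168818932019406675354667436011228382369088886423882575873165438842519869902707142434389933752625976528885999119590952016858101092659197181952⟩,
  ⟨39, 24, 25494996468685564249602321689026683559079885102576080643960294399035152695493559999851868943414503092899037568367907785667995307737411780467387305087596361162104035032547157526909616128⟩,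
  ⟨40, 16, 1113893038294592398106605558985587958882069375549624314801929902907712215553072191253689341732089206004519886447011886273720925282847084342208476462555037123593301163151561579705902127185920⟩,
  ⟨41, 40, 182500339820695680635886473329619440512559728377520859038292772186491531161437093819608128432845900018938701845102700875237745270601855024429469281470434223091659214254228791565332895070823710720⟩,
  ⟨42, 12, 3588099487410454268487235129173894238214635128925503888752501362754428325749853723357388245994281993682121179595068126386737487697237601099781511211334746311595856854898294379748690899523455194038272⟩,
  ⟨43, 42, 823024655541374845243554351652078325035337376300594702571302699498229568650463658127787561811082441965050626709957929415361153436956951223377923008925558112603104106075328670766546025552324840450835939328⟩,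
  ⟨44, 20, 25684629652591937657047876480641499784672793830718674982140740139371568036669118938123048383901345570752733376022459110442118434148346229786386903963996202901837932944185828651306041216355407059952033966653440⟩,
  ⟨45, 24, 2019921723521615282347225126091341397249866054765265312620037929365773794376937503914312464905186110524121962251419619475386208396145573462673436513820850473250430944785081998034203759169001907784124881504519127040⟩,
  ⟨46, 22, 121346117220875502940543600869116356983609010804506844147231855788149828727447179826191842177670986191822983361977235817355886076028039224223929235587674449334992657449607578068514785924826786544948060001968368144941056⟩,
  ⟨47, 46, 16628042396929015108131138585519373997388451006622251820279524935366268748065263326162568534425632806026184944860557373527148691868167083445367625497927935216462588653951465812885472066025582413201948405255079490316067209216⟩]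

def ROWS : List Row := [
  ⟨1, 1, 0⟩, ⟨2, 1, 1⟩, ⟨3, 2, 2⟩, ⟨4, 2, 2⟩, ⟨5, 4, 4⟩, ⟨6, 2, 4⟩, ⟨7, 6, 6⟩, ⟨8, 4, 4⟩,
  ⟨9, 6, 6⟩, ⟨10, 4, 8⟩, ⟨11, 10, 10⟩, ⟨12, 4, 8⟩, ⟨13, 12, 12⟩, ⟨14, 6, 12⟩, ⟨15, 8, 14⟩, ⟨16, 8, 8⟩,
  ⟨17, 16, 16⟩, ⟨18, 6, 12⟩, ⟨19, 18, 18⟩, ⟨20, 8, 16⟩, ⟨21, 12, 24⟩, ⟨22, 10, 20⟩, ⟨23, 22, 22⟩, ⟨24, 8, 16⟩,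
  ⟨25, 20, 20⟩, ⟨26, 12, 24⟩, ⟨27, 18, 18⟩, ⟨28, 12, 24⟩, ⟨29, 28, 28⟩, ⟨30, 8, 28⟩, ⟨31, 30, 30⟩, ⟨32, 16, 16⟩,
  ⟨33, 20, 38⟩, ⟨34, 16, 32⟩, ⟨35, 24, 44⟩, ⟨36, 12, 24⟩, ⟨37, 36, 36⟩, ⟨38, 18, 36⟩, ⟨39, 24, 48⟩, ⟨40, 16, 32⟩,
  ⟨41, 40, 40⟩, ⟨42, 12, 48⟩, ⟨43, 42, 42⟩, ⟨44, 20, 40⟩, ⟨45, 24, 42⟩, ⟨46, 22, 44⟩, ⟨47, 46, 46⟩, ⟨48, 16, 32⟩,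
  ⟨49, 42, 42⟩, ⟨50, 20, 40⟩, ⟨51, 32, 62⟩, ⟨52, 24, 48⟩, ⟨53, 52, 52⟩, ⟨54, 18, 36⟩, ⟨55, 40, 80⟩, ⟨56, 24, 48⟩,
  ⟨57, 36, 72⟩, ⟨58, 28, 56⟩, ⟨59, 58, 58⟩, ⟨60, 16, 56⟩, ⟨61, 60, 60⟩, ⟨62, 30, 60⟩, ⟨63, 36, 72⟩, ⟨64, 32, 32⟩,
  ⟨65, 48, 88⟩, ⟨66, 20, 76⟩, ⟨67, 66, 66⟩, ⟨68, 32, 64⟩, ⟨69, 44, 86⟩, ⟨70, 24, 88⟩, ⟨71, 70, 70⟩, ⟨72, 24, 48⟩,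
  ⟨73, 72, 72⟩, ⟨74, 36, 72⟩, ⟨75, 40, 70⟩, ⟨76, 36, 72⟩, ⟨77, 60, 109⟩, ⟨78, 24, 96⟩, ⟨79, 78, 78⟩, ⟨80, 32, 64⟩,
  ⟨81, 54, 54⟩, ⟨82, 40, 80⟩, ⟨83, 82, 82⟩, ⟨84, 24, 96⟩, ⟨85, 64, 124⟩, ⟨86, 42, 84⟩, ⟨87, 56, 110⟩, ⟨88, 40, 80⟩,
  ⟨89, 88, 88⟩, ⟨90, 24, 84⟩, ⟨91, 72, 137⟩, ⟨92, 44, 88⟩, ⟨93, 60, 120⟩, ⟨94, 46, 92⟩, ⟨95, 72, 132⟩, ⟨96, 32, 64⟩,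
  ⟨97, 96, 96⟩, ⟨98, 42, 84⟩, ⟨99, 60, 114⟩, ⟨100, 40, 80⟩, ⟨101, 100, 100⟩, ⟨102, 32, 124⟩, ⟨103, 102, 102⟩, ⟨104, 48, 96⟩,
  ⟨105, 48, 159⟩, ⟨106, 52, 104⟩, ⟨107, 106, 106⟩, ⟨108, 36, 72⟩, ⟨109, 108, 108⟩, ⟨110, 40, 160⟩, ⟨111, 72, 144⟩, ⟨112, 48, 96⟩,
  ⟨113, 112, 112⟩, ⟨114, 36, 144⟩, ⟨115, 88, 168⟩, ⟨116, 56, 112⟩, ⟨117, 72, 144⟩, ⟨118, 58, 116⟩, ⟨119, 96, 180⟩, ⟨120, 32, 112⟩,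
  ⟨121, 110, 110⟩, ⟨122, 60, 120⟩, ⟨123, 80, 158⟩, ⟨124, 60, 120⟩, ⟨125, 100, 100⟩, ⟨126, 36, 144⟩, ⟨127, 126, 126⟩, ⟨128, 64, 64⟩,
  ⟨129, 84, 168⟩, ⟨130, 48, 176⟩, ⟨131, 130, 130⟩, ⟨132, 40, 152⟩, ⟨133, 108, 192⟩, ⟨134, 66, 132⟩, ⟨135, 72, 126⟩, ⟨136, 64, 128⟩,
  ⟨137, 136, 136⟩, ⟨138, 44, 172⟩, ⟨139, 138, 138⟩, ⟨140, 48, 176⟩, ⟨141, 92, 182⟩, ⟨142, 70, 140⟩, ⟨143, 120, 230⟩, ⟨144, 48, 96⟩,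
  ⟨145, 112, 212⟩, ⟨146, 72, 144⟩, ⟨147, 84, 168⟩, ⟨148, 72, 144⟩, ⟨149, 148, 148⟩, ⟨150, 40, 140⟩, ⟨151, 150, 150⟩, ⟨152, 72, 144⟩,
  ⟨153, 96, 186⟩, ⟨154, 60, 218⟩, ⟨155, 120, 240⟩, ⟨156, 48, 192⟩, ⟨157, 156, 156⟩, ⟨158, 78, 156⟩, ⟨159, 104, 206⟩, ⟨160, 64, 128⟩,
  ⟨161, 132, 258⟩, ⟨162, 54, 108⟩, ⟨163, 162, 162⟩, ⟨164, 80, 160⟩, ⟨165, 80, 265⟩, ⟨166, 82, 164⟩, ⟨167, 166, 166⟩, ⟨168, 48, 192⟩,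
  ⟨169, 156, 156⟩, ⟨170, 64, 248⟩, ⟨171, 108, 216⟩, ⟨172, 84, 168⟩, ⟨173, 172, 172⟩, ⟨174, 56, 220⟩, ⟨175, 120, 220⟩, ⟨176, 80, 160⟩,
  ⟨177, 116, 230⟩, ⟨178, 88, 176⟩, ⟨179, 178, 178⟩, ⟨180, 48, 168⟩]

/-- `(h, C, thr, intervals)` -/
def CERT : List (ℕ × ℕ × ℕ × List (ℕ × ℕ)) := [
  (1, 27720000, 0, []),
  (2, 27720000, 0, []),
  (3, 27720000, 0, []),
  (4, 26950000, 0, []),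
  (5, 27489000, 0, []),
  (6, 26796000, 39, [(31, 31)]),
  (7, 27033600, 121, [(47, 47), (53, 53), (61, 61), (73, 73), (83, 83), (89, 89), (90, 91), (113, 116), (117, 118), (119, 120)]),
  (8, 26851000, 127, [(53, 53), (61, 61), (73, 73), (83, 83), (89, 90), (91, 91), (113, 118), (119, 121)]),
  (9, 26873526, 175, [(61, 61), (73, 73), (83, 83), (89, 90), (91, 91), (113, 115), (116, 118), (119, 120), (121, 121), (131, 131), (139, 143), (151, 151), (157, 157), (167, 167), (173, 173)]),
  (10, 26572858, 168, [(83, 83), (89, 90), (91, 91), (113, 117), (118, 121), (131, 131), (139, 142), (143, 143), (151, 151), (157, 157), (167, 167)]),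
  (11, 26830250, 273, [(113, 116), (117, 117), (118, 119), (120, 121), (131, 131), (139, 141), (142, 143), (151, 151), (157, 157), (167, 167), (173, 173), (181, 183), (184, 185), (199, 204), (205, 205), (211, 217), (233, 233), (241, 245), (251, 257), (263, 271)]),
  (12, 26614445, 253, [(113, 116), (118, 121), (131, 131), (140, 142), (143, 143), (151, 151), (157, 157), (167, 167), (173, 173), (181, 185), (199, 202), (203, 204), (205, 205), (211, 216), (217, 217), (233, 233), (241, 245), (251, 251)]),
  (13, 26831944, 372, [(131, 131), (139, 140), (141, 141), (143, 143), (151, 151), (157, 157), (167, 167), (173, 173), (181, 184), (185, 185), (199, 202), (203, 205), (211, 216), (217, 217), (233, 233), (241, 244), (245, 245), (251, 257), (263, 263), (271, 271), (283, 287), (293, 297), (298, 301), (317, 323), (324, 331), (337, 341), (353, 360), (361, 367)]),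
  (14, 26734620, 384, [(157, 157), (173, 173), (181, 182), (183, 185), (199, 201), (202, 205), (211, 211), (212, 213), (214, 216), (217, 217), (233, 233), (241, 241), (251, 251), (257, 257), (263, 263), (271, 271), (283, 287), (293, 300), (301, 301), (317, 322), (323, 331), (337, 341), (353, 361), (367, 373), (383, 383)]),
  (15, 26625844, 393, [(173, 173), (181, 184), (185, 185), (199, 199), (200, 201), (202, 204), (205, 205), (211, 214), (215, 217), (233, 233), (241, 245), (251, 257), (263, 263), (271, 271), (283, 287), (293, 300), (301, 301), (317, 325), (331, 340), (341, 341), (353, 361), (367, 373), (383, 391)]),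
  (16, 26480506, 369, [(199, 202), (203, 205), (211, 212), (213, 217), (233, 233), (241, 245), (251, 257), (263, 263), (271, 271), (283, 287), (293, 300), (301, 301), (317, 325), (331, 340), (341, 341), (353, 361), (367, 367)]),
  (17, 26657981, 480, [(233, 233), (241, 244), (245, 245), (251, 251), (257, 257), (263, 263), (271, 271), (283, 287), (293, 298), (299, 301), (317, 321), (322, 325), (331, 338), (339, 341), (353, 361), (367, 373), (383, 389), (390, 391), (401, 413), (421, 433), (443, 451), (467, 479)]),
  (18, 26544429, 465, [(243, 245), (251, 251), (257, 257), (263, 263), (271, 271), (283, 287), (293, 298), (299, 301), (317, 324), (325, 325), (331, 338), (339, 341), (353, 361), (367, 373), (383, 391), (401, 412), (413, 422), (423, 433), (443, 451)]),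
  (19, 26706641, 591, [(271, 271), (283, 287), (293, 295), (296, 300), (301, 301), (317, 320), (321, 325), (331, 331), (337, 341), (353, 353), (359, 361), (367, 373), (383, 391), (401, 411), (412, 421), (422, 425), (433, 443), (449, 451), (467, 473), (479, 481), (491, 493), (503, 515), (523, 534), (535, 548), (549, 563), (571, 581), (587, 587)]),
  (20, 26652292, 603, [(300, 301), (317, 317), (318, 318), (320, 325), (331, 331), (337, 341), (353, 353), (359, 361), (367, 367), (373, 373), (383, 383), (389, 391), (401, 411), (412, 423), (424, 425), (433, 433), (443, 451), (467, 479), (480, 492), (493, 503), (509, 515), (523, 532), (533, 541), (547, 557), (563, 571), (577, 587), (593, 601)]),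
  (21, 26594342, 628, [(331, 331), (337, 341), (353, 353), (359, 361), (367, 367), (373, 373), (383, 383), (389, 391), (401, 403), (409, 413), (421, 425), (433, 443), (449, 451), (467, 473), (479, 481), (491, 503), (509, 515), (523, 533), (534, 547), (548, 563), (571, 587), (593, 607), (619, 625)]),
  (22, 26497798, 620, [(367, 367), (373, 373), (383, 383), (389, 391), (401, 403), (409, 413), (421, 425), (433, 433), (443, 451), (467, 479), (480, 492), (493, 493), (503, 513), (514, 528), (529, 535), (541, 551), (557, 563), (571, 581), (587, 601), (607, 619)]),
  (23, 26611726, 731, [(401, 403), (409, 413), (421, 425), (433, 433), (443, 451), (467, 473), (479, 481), (491, 493), (503, 511), (512, 515), (523, 528), (529, 535), (541, 551), (557, 563), (571, 581), (587, 601), (607, 621), (622, 635), (647, 663), (664, 677), (683, 695), (701, 720), (721, 727)]),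
  (24, 26547402, 723, [(433, 443), (449, 451), (467, 473), (479, 481), (491, 493), (503, 514), (515, 528), (529, 541), (547, 557), (563, 580), (581, 593), (601, 619), (620, 635), (647, 663), (664, 677), (683, 695), (701, 721)]),
  (25, 26571959, 777, [(469, 472), (473, 473), (479, 481), (491, 493), (503, 511), (512, 515), (523, 532), (533, 541), (547, 557), (563, 571), (577, 587), (593, 607), (619, 632), (633, 647), (653, 667), (677, 691), (692, 703), (709, 721), (727, 745), (751, 763), (773, 776)]),
  (26, 26536410, 797, [(509, 515), (523, 532), (533, 541), (547, 551), (557, 563), (571, 581), (587, 593), (601, 607), (619, 632), (633, 635), (647, 664), (665, 677), (683, 695), (701, 713), (719, 733), (743, 751), (761, 781), (787, 791)]),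
  (27, 26532404, 825, [(547, 557), (563, 571), (577, 587), (593, 601), (607, 607), (619, 625), (631, 635), (647, 662), (663, 667), (677, 685), (691, 703), (709, 727), (733, 745), (751, 763), (773, 789), (790, 813), (814, 815)]),
  (28, 26471342, 823, [(593, 601), (607, 621), (622, 635), (647, 662), (663, 667), (677, 692), (693, 709), (710, 727), (733, 751), (761, 781), (787, 803), (811, 815)]),
  (29, 26562180, 934, [(631, 635), (647, 653), (661, 667), (677, 693), (694, 709), (710, 721), (727, 733), (743, 751), (761, 778), (779, 797), (798, 815), (829, 847), (863, 871), (887, 901), (911, 931)]),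
  (30, 26504791, 932, [(677, 685), (691, 703), (709, 721), (727, 744), (745, 751), (761, 781), (787, 803), (811, 831), (832, 847), (863, 871), (887, 901), (911, 931)]),
  (31, 26571281, 1033, [(721, 733), (743, 751), (761, 774), (775, 791), (797, 815), (829, 847), (863, 871), (887, 901), (911, 931), (941, 959), (960, 985), (991, 1013), (1021, 1025)]),
  (32, 26574794, 1060, [(773, 791), (797, 815), (829, 847), (863, 871), (887, 901), (911, 930), (931, 947), (953, 977), (983, 1003), (1013, 1043), (1051, 1055)]),
  (33, 26575596, 1117, [(829, 845), (846, 865), (866, 871), (887, 901), (911, 931), (941, 959), (960, 977), (983, 1003), (1013, 1033), (1039, 1069), (1070, 1097), (1103, 1111)]),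
  (34, 26545382, 1132, [(867, 888), (889, 901), (911, 931), (941, 961), (971, 991), (997, 1024), (1025, 1043), (1051, 1077), (1078, 1110), (1111, 1131)]),
  (35, 26540600, 1187, [(919, 931), (941, 961), (971, 998), (999, 1023), (1024, 1043), (1051, 1079), (1080, 1110), (1111, 1142), (1143, 1174), (1175, 1181)]),
  (36, 26486058, 1164, [(977, 1002), (1003, 1025), (1033, 1055), (1063, 1081), (1097, 1123), (1129, 1157), (1163, 1163)]),
  (37, 26525032, 1248, [(1033, 1055), (1063, 1081), (1097, 1123), (1129, 1157), (1163, 1195), (1201, 1231), (1237, 1243)]),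
  (38, 26513295, 1279, [(1097, 1117), (1123, 1145), (1153, 1175), (1181, 1207), (1217, 1249), (1250, 1271)]),
  (39, 26508306, 1330, [(1141, 1165), (1171, 1195), (1201, 1223), (1231, 1263), (1264, 1291), (1307, 1329)]),
  (40, 26468091, 1323, [(1201, 1231), (1237, 1268), (1269, 1291), (1307, 1321)]),
  (41, 26515888, 1420, [(1261, 1291), (1307, 1346), (1347, 1383), (1384, 1417)]),
  (42, 26481246, 1432, [(1327, 1361), (1367, 1403), (1409, 1417)]),
  (43, 26528087, 1533, [(1387, 1417), (1433, 1472), (1473, 1512), (1513, 1532)]),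
  (44, 26522038, 1568, [(1453, 1475), (1493, 1532), (1533, 1561)]),
  (45, 26506922, 1591, [(1523, 1561), (1571, 1590)]),
  (46, 26478090, 1597, [(1587, 1591)]),
  (47, 26528050, 1709, [(1657, 1687), (1699, 1703)]),
  (48, 26506476, 1728, []),
  (49, 26532706, 1801, []),
  (50, 26516930, 1875, []),
  (51, 26508809, 1951, []),
  (52, 26485709, 2028, []),
  (53, 26527759, 2107, []),
  (54, 26509818, 2187, []),
  (55, 26512325, 2269, []),
  (56, 26494136, 2352, []),
  (57, 26482886, 2437, []),
  (58, 26462372, 2523, []),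
  (59, 26496660, 2611, []),
  (60, 26476096, 2700, []),
  (61, 26503852, 2791, []),
  (62, 26504709, 2883, []),
  (63, 26501386, 2977, []),
  (64, 26489897, 3072, []),
  (65, 26495840, 3169, []),
  (66, 26474291, 3267, []),
  (67, 26491811, 3367, []),
  (68, 26488269, 3468, []),
  (69, 26488924, 3571, []),
  (70, 26469823, 3675, []),
  (71, 26487960, 3781, []),
  (72, 26475057, 3888, []),
  (73, 26501978, 3997, []),
  (74, 26504089, 4107, []),
  (75, 26500196, 4219, []),
  (76, 26488626, 4332, []),
  (77, 26494283, 4447, []),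
  (78, 26478314, 4563, []),
  (79, 26493598, 4681, []),
  (80, 26486524, 4800, []),
  (81, 26485946, 4921, []),
  (82, 26477685, 5043, []),
  (83, 26503939, 5167, []),
  (84, 26493466, 5292, []),
  (85, 26495472, 5419, []),
  (86, 26490212, 5547, []),
  (87, 26488919, 5677, []),
  (88, 26479158, 5808, []),
  (89, 26499712, 5941, []),
  (90, 26489018, 6075, []),
  (91, 26490669, 6211, []),
  (92, 26485563, 6348, []),
  (93, 26483878, 6487, []),
  (94, 26476665, 6627, []),
  (95, 26479746, 6769, []),
  (96, 26468289, 6912, []),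
  (97, 26480176, 7057, []),
  (98, 26476337, 7203, []),
  (99, 26473585, 7351, []),
  (100, 26462619, 7500, []),
  (101, 26474996, 7651, []),
  (102, 26466770, 7803, []),
  (103, 26482391, 7957, []),
  (104, 26482175, 8112, []),
  (105, 26475500, 8269, []),
  (106, 26465974, 8427, []),
  (107, 26479977, 8587, []),
  (108, 26473756, 8748, []),
  (109, 26490539, 8911, []),
  (110, 26486597, 9075, []),
  (111, 26486562, 9241, []),
  (112, 26479968, 9408, []),
  (113, 26494920, 9577, []),
  (114, 26489141, 9747, []),
  (115, 26492258, 9919, []),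
  (116, 26489443, 10092, []),
  (117, 26487889, 10267, []),
  (118, 26482665, 10443, []),
  (119, 26487607, 10621, []),
  (120, 26478715, 10800, []),
  (121, 26481409, 10981, []),
  (122, 26479258, 11163, []),
  (123, 26479233, 11347, []),
  (124, 26474648, 11532, []),
  (125, 26479048, 11719, []),
  (126, 26471037, 11907, []),
  (127, 26478195, 12097, []),
  (128, 26478155, 12288, []),
  (129, 26480133, 12481, []),
  (130, 26473608, 12675, []),
  (131, 26483636, 12871, []),
  (132, 26478372, 13068, []),
  (133, 26481478, 13267, []),
  (134, 26479700, 13467, []),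
  (135, 26476194, 13669, []),
  (136, 26469737, 13872, []),
  (137, 26479076, 14077, []),
  (138, 26474229, 14283, []),
  (139, 26485100, 14491, []),
  (140, 26481715, 14700, []),
  (141, 26480842, 14911, []),
  (142, 26477489, 15123, []),
  (143, 26483143, 15337, []),
  (144, 26478174, 15552, []),
  (145, 26478997, 15769, []),
  (146, 26476505, 15987, []),
  (147, 26473575, 16207, []),
  (148, 26468346, 16428, []),
  (149, 26477009, 16651, []),
  (150, 26471796, 16875, []),
  (151, 26479560, 17101, []),
  (152, 26479619, 17328, []),
  (153, 26480696, 17557, []),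
  (154, 26475986, 17787, []),
  (155, 26476766, 18019, []),
  (156, 26470808, 18252, []),
  (157, 26475868, 18487, []),
  (158, 26475644, 18723, []),
  (159, 26476874, 18961, []),
  (160, 26472628, 19200, []),
  (161, 26474931, 19441, []),
  (162, 26470161, 19683, []),
  (163, 26476695, 19927, []),
  (164, 26476874, 20172, []),
  (165, 26474090, 20419, []),
  (166, 26469752, 20667, []),
  (167, 26477557, 20917, []),
  (168, 26473604, 21168, []),
  (169, 26478846, 21421, []),
  (170, 26476281, 21675, []),
  (171, 26474975, 21931, []),
  (172, 26471897, 22188, []),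
  (173, 26480283, 22447, []),
  (174, 26477412, 22707, []),
  (175, 26477056, 22969, []),
  (176, 26474131, 23232, []),
  (177, 26472719, 23497, []),
  (178, 26469653, 23763, []),
  (179, 26477293, 24031, []),
  (180, 26473588, 24300, [])]

def EXC : List (ℕ × ℕ × List ℕ × List ℕ) := [
  (11, 91, [1, 2, 3, 4, 6, 5, 7, 8, 9, 10, 11], [11, 10, 9, 7, 8, 6, 5, 4, 3, 2, 1]),
  (12, 117, [3, 1, 2, 4, 6, 5, 8, 7, 9, 10, 11, 12], [12, 11, 10, 9, 8, 7, 6, 5, 4, 3, 1, 2]),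
  (12, 139, [1, 2, 3, 4, 5, 6, 7, 9, 8, 10, 11, 12], [12, 10, 11, 9, 8, 7, 6, 5, 3, 4, 2, 1]),
  (13, 142, [3, 1, 2, 5, 6, 7, 10, 12, 4, 8, 9, 11, 13], [13, 9, 10, 12, 11, 6, 8, 7, 2, 4, 1, 3, 5]),
  (14, 151, [4, 1, 2, 3, 5, 6, 7, 8, 9, 10, 11, 13, 12, 14], [13, 14, 11, 12, 9, 10, 8, 7, 4, 6, 5, 2, 3, 1]),
  (14, 167, [1, 2, 3, 5, 4, 6, 7, 9, 8, 10, 11, 12, 13, 14], [14, 13, 12, 11, 10, 7, 9, 8, 6, 4, 5, 2, 3, 1]),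
  (14, 242, [1, 2, 3, 5, 4, 6, 7, 8, 9, 10, 11, 12, 13, 14], [14, 13, 12, 11, 10, 9, 8, 7, 6, 5, 4, 3, 2, 1]),
  (14, 243, [1, 2, 3, 5, 4, 6, 7, 8, 9, 10, 12, 11, 13, 14], [14, 13, 12, 11, 10, 9, 8, 7, 6, 5, 4, 3, 2, 1]),
  (14, 244, [2, 1, 3, 4, 5, 6, 7, 9, 8, 11, 10, 12, 13, 14], [13, 14, 11, 12, 10, 8, 9, 7, 5, 6, 4, 3, 2, 1]),
  (14, 245, [1, 3, 4, 2, 5, 6, 8, 7, 9, 11, 10, 12, 13, 14], [14, 13, 12, 11, 9, 10, 8, 7, 6, 5, 4, 3, 2, 1]),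
  (17, 217, [2, 7, 4, 1, 3, 9, 8, 5, 10, 6, 15, 11, 14, 12, 13, 16, 17], [17, 15, 16, 14, 13, 12, 9, 6, 11, 5, 10, 8, 7, 3, 2, 4, 1]),
  (20, 319, [1, 2, 3, 4, 6, 5, 7, 8, 9, 10, 11, 13, 12, 14, 15, 17, 16, 18, 19, 20], [20, 18, 19, 16, 17, 15, 14, 13, 12, 10, 11, 8, 7, 9, 6, 4, 5, 3, 2, 1])]

def BAD : List ℕ := [
  23, 31, 47, 53, 61, 73, 83, 89, 90, 91, 113, 114, 115, 116, 117, 118, 119, 120, 121, 131,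
  139, 140, 141, 142, 143, 151, 157, 167, 173, 181, 182, 183, 184, 185, 199, 200, 201, 202, 203, 204,
  205, 211, 212, 213, 214, 215, 216, 217, 233, 241, 242, 243, 244, 245, 251, 257, 263, 271, 283, 284,
  285, 286, 287, 293, 294, 295, 296, 297, 298, 299, 300, 301, 317, 318, 319, 320, 321, 322, 323, 324,
  325, 331, 337, 338, 339, 340, 341, 353, 359, 360, 361, 367, 373, 383, 389, 390, 391, 401, 402, 403,
  409, 410, 411, 412, 413, 421, 422, 423, 424, 425, 433, 443, 449, 450, 451, 467, 468, 469, 470, 471,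
  472, 473, 479, 480, 481, 491, 492, 493, 503, 509, 510, 511, 512, 513, 514, 515, 523, 524, 525, 526,
  527, 528, 529, 530, 531, 532, 533, 534, 535, 541, 547, 548, 549, 550, 551, 557, 563, 571, 577, 578,
  579, 580, 581, 587, 593, 601, 607, 619, 620, 621, 622, 623, 624, 625, 631, 632, 633, 634, 635, 647,
  653, 661, 662, 663, 664, 665, 666, 667, 677, 683, 684, 685, 691, 692, 693, 694, 695, 701, 702, 703,
  709, 710, 711, 712, 713, 719, 720, 721, 727, 733, 743, 744, 745, 751, 761, 762, 763, 773, 774, 775,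
  776, 777, 778, 779, 780, 781, 787, 788, 789, 790, 791, 797, 798, 799, 800, 801, 802, 803, 811, 812,
  813, 814, 815, 829, 830, 831, 832, 833, 839, 840, 841, 842, 843, 844, 845, 846, 847, 863, 864, 865,
  866, 867, 868, 869, 870, 871, 887, 888, 889, 890, 891, 892, 893, 894, 895, 896, 897, 898, 899, 900,
  901, 911, 912, 913, 919, 920, 921, 922, 923, 929, 930, 931, 941, 947, 953, 954, 955, 956, 957, 958,
  959, 960, 961, 971, 977, 983, 984, 985, 991, 997, 998, 999, 1000, 1001, 1002, 1003, 1013, 1021, 1022, 1023,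
  1024, 1025, 1033, 1039, 1040, 1041, 1042, 1043, 1051, 1052, 1053, 1054, 1055, 1063, 1069, 1070, 1071, 1072, 1073, 1074,
  1075, 1076, 1077, 1078, 1079, 1080, 1081, 1097, 1103, 1109, 1110, 1111, 1117, 1123, 1129, 1130, 1131, 1132, 1133, 1134,
  1135, 1136, 1137, 1138, 1139, 1140, 1141, 1142, 1143, 1144, 1145, 1153, 1154, 1155, 1156, 1157, 1163, 1164, 1165, 1171,
  1172, 1173, 1174, 1175, 1181, 1187, 1193, 1194, 1195, 1201, 1202, 1203, 1204, 1205, 1206, 1207, 1217, 1223, 1231, 1237,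
  1238, 1239, 1240, 1241, 1242, 1243, 1249, 1250, 1251, 1252, 1253, 1259, 1260, 1261, 1262, 1263, 1264, 1265, 1266, 1267,
  1268, 1269, 1270, 1271, 1283, 1291, 1307, 1308, 1309, 1310, 1311, 1312, 1313, 1321, 1327, 1328, 1329, 1330, 1331, 1332,
  1333, 1334, 1335, 1336, 1337, 1338, 1339, 1340, 1341, 1342, 1343, 1344, 1345, 1346, 1347, 1348, 1349, 1350, 1351, 1352,
  1353, 1354, 1355, 1361, 1367, 1373, 1374, 1375, 1381, 1382, 1383, 1384, 1385, 1386, 1387, 1388, 1389, 1390, 1391, 1392,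
  1393, 1399, 1400, 1401, 1402, 1403, 1409, 1410, 1411, 1412, 1413, 1414, 1415, 1416, 1417, 1433, 1439, 1440, 1441, 1453,
  1459, 1460, 1461, 1462, 1463, 1464, 1465, 1471, 1472, 1473, 1474, 1475, 1493, 1499, 1500, 1501, 1502, 1503, 1504, 1505,
  1511, 1512, 1513, 1514, 1515, 1516, 1517, 1523, 1524, 1525, 1531, 1532, 1533, 1534, 1535, 1536, 1537, 1543, 1553, 1559,
  1560, 1561, 1571, 1572, 1573, 1583, 1584, 1585, 1586, 1587, 1588, 1589, 1590, 1591, 1601, 1613, 1621, 1627, 1628, 1629,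
  1630, 1631, 1637, 1638, 1639, 1640, 1641, 1642, 1643, 1644, 1645, 1646, 1647, 1648, 1649, 1650, 1651, 1657, 1669, 1670,
  1671, 1672, 1673, 1674, 1675, 1676, 1677, 1678, 1679, 1680, 1681, 1682, 1683, 1684, 1685, 1686, 1687, 1699, 1700, 1701,
  1702, 1703, 1709, 1710, 1711, 1712, 1713, 1714, 1715]

def isP (p : ℕ) : Bool :=
  Nat.ble 2 p && (List.range' 2 41).all (fun d => Nat.ble p d || !(Nat.beq (p % d) 0))

lemma isP_sound (p : ℕ) (hp : p < 1764) (h : isP p = true) : p.Prime := by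
  simp only [isP, Bool.and_eq_true, List.all_eq_true, Bool.or_eq_true, Bool.not_eq_true',
    List.mem_range'_1] at h
  obtain ⟨h1, h2⟩ := h
  have h1' := Nat.le_of_ble_eq_true h1
  rw [Nat.prime_def_le_sqrt]
  refine ⟨h1', fun m hm hs hd => ?_⟩
  have hs' : m * m ≤ p := Nat.le_sqrt.mp hs
  have hm2 : m < 42 := by nlinarith
  rcases h2 m ⟨hm, by omega⟩ with h3 | h3
  · have := Nat.le_of_ble_eq_true h3
    have := Nat.mul_le_mul_right m hm
    omega
  · rw [Nat.mod_eq_zero_of_dvd hd] at h3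
    simp at h3

def goodB (k : ℕ) : Bool := isP (k+1) || isP (k+2) || isP (k+3) || isP (k+4) || isP (k+5)

set_option maxRecDepth 100000 in
lemma BAD_eq : ((List.range 1720).filter (fun k => !goodB k)) = BAD := by decide +kernel

lemma mem_BAD (k : ℕ) (hk : k < 1720) (h : ∀ p, p.Prime → k < p → k + 5 < p) : k ∈ BAD := by
  rw [← BAD_eq, List.mem_filter]
  refine ⟨by simpa using hk, ?_⟩
  by_contra hc
  simp only [goodB, Bool.not_eq_true', Bool.not_eq_false, Bool.or_eq_true] at hc
  rcases hc with (((hc | hc) | hc) | hc) | hc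
  all_goals
    have := h _ (isP_sound _ (by omega) hc) (by omega)
    omega

def dpC (k bd : ℕ) (P R : List Ent) : Bool :=
  match P with
  | [] => false
  | e :: P => dpF k bd 100 P R e.n e.r e.T 0

def EncB : ℕ → List ℤ → Bool
  | _, [] => true
  | T, t :: ts => decide (((T % 65536 : ℕ) : ℤ) = t) && EncB (T / 65536) ts

lemma EncB_sound (T : ℕ) (L : List ℤ) (h : EncB T L = true) : Enc 0 T L := by
  induction L generalizing T with
  | nil => trivial
  | cons t ts ih =>
    simp only [EncB, Bool.and_eq_true, decide_eq_true_eq] at h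
    exact ⟨by rw [add_zero]; exact h.1, ih _ h.2⟩

def Ent.okB (e : Ent) : Bool := Nat.ble 1 e.n && Nat.beq e.r (cnt e.n e.n) && EncB e.T (QPG e.n).T

lemma Ent.okB_sound (e : Ent) (h : e.okB = true) : e.ok := by
  simp only [Ent.okB, Bool.and_eq_true] at h
  exact ⟨Nat.le_of_ble_eq_true h.1.1, Nat.eq_of_beq_eq_true h.1.2, EncB_sound _ _ h.2⟩

set_option maxRecDepth 100000 in
lemma TAB_okB : TAB.all Ent.okB = true := by decide +kernel

set_option maxRecDepth 100000 in
lemma ROWS_okB : ROWS.all Row.okB = true := by decide +kernel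

lemma TAB_ok : ∀ e ∈ TAB, e.ok := fun e he => e.okB_sound (List.all_eq_true.mp TAB_okB e he)
lemma ROWS_ok : ∀ e ∈ ROWS, e.ok := fun e he => e.okB_sound (List.all_eq_true.mp ROWS_okB e he)

lemma TAB_n : TAB.map Ent.n = List.range' 1 47 := by decide +kernel
lemma ROWS_n : ROWS.map Row.n = List.range' 1 180 := by decide +kernel

lemma dpC_sound (k k' bd h : ℕ) (hk : k ≤ k') (P R : List Ent) (hP : ∀ e ∈ P, e.ok)
    (hR : ∀ e ∈ R, e.ok) (hP' : (P.map Ent.n).Perm (List.range' 1 h))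
    (hR' : (R.map Ent.n).Perm (List.range' 1 h)) (hd : dpC k' bd P R = true) (f g : ℕ → ℤ)
    (hfg : ∀ n ∈ List.range' 1 h, ∀ m ∈ List.range' 1 h, f n * m + g m * n ≤ k) :
    ((List.range' 1 h).map (fun n => GG n (f n))).sum +
      ((List.range' 1 h).map (fun n => GG n (g n))).sum ≤ bd := by
  rw [← (hP'.map (fun n => GG n (f n))).sum_eq, ← (hR'.map (fun n => GG n (g n))).sum_eq]
  rcases P with _ | ⟨e, P⟩
  · simp [dpC] at hd
  · simp only [List.mem_cons, forall_eq_or_imp] at hP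
    simp only [dpC] at hd
    obtain ⟨⟨en, er, eT⟩, hP⟩ := hP
    have hkz : (k : ℤ) ≤ k' := by exact_mod_cast hk
    have mP : ∀ n, n ∈ (e :: P).map Ent.n → n ∈ List.range' 1 h := fun n hn => hP'.mem_iff.mp hn
    have mR : ∀ n, n ∈ R.map Ent.n → n ∈ List.range' 1 h := fun n hn => hR'.mem_iff.mp hn
    have h1 := dpF_sound k' bd 100 P R (QPG e.n) e.T 0 hP hR (QPG_WF _ en) (by exact_mod_cast eT)
      (by rw [er] at hd; exact hd)
    have h2 := dpGo_sound k' bd 100 (P.map Ent.n) (R.map Ent.n) (QPG e.n) (QPG_WF _ en)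
      (by
        intro n hn
        obtain ⟨e', he', rfl⟩ := List.mem_map.mp hn
        exact (hP e' he').1)
      (by
        intro n hn
        obtain ⟨e', he', rfl⟩ := List.mem_map.mp hn
        exact (hR e' he').1) h1 f g
      (fun n hn m hm => (hfg n (mP n (by simp only [List.map_cons, List.mem_cons]; exact Or.inr hn)) m (mR m hm)).trans hkz)
      (fun m hm => (hfg e.n (mP e.n (by simp)) m (mR m hm)).trans hkz)
    have e1 : (QPG e.n).n = e.n := rfl
    rw [e1, QPG_eval _ en] at h2
    simp only [List.map_cons, List.sum_cons]
    linarith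

def dpStd (h k bd : ℕ) : Bool := dpC k bd (TAB.take h) (TAB.take h).reverse

def entOf (n : ℕ) : Ent := TAB.getD (n - 1) ⟨1, 1, 0⟩

def excOK (x : ℕ × ℕ × List ℕ × List ℕ) : Bool :=
  (x.2.2.1.map (fun n => (entOf n).n)).isPerm (List.range' 1 x.1) &&
  (x.2.2.2.map (fun n => (entOf n).n)).isPerm (List.range' 1 x.1) &&
  dpC x.2.1 (x.2.1 + 4) (x.2.2.1.map entOf) (x.2.2.2.map entOf)

def certOK (x : ℕ × ℕ × ℕ × List (ℕ × ℕ)) : Bool :=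
  simpleOK 27720000 x.2.1 x.2.2.1 (ROWS.take x.1) &&
  (Nat.ble x.2.2.1 ((3 * x.1 * x.1 + 3) / 4) ||
   (Nat.ble x.1 47 && Nat.ble x.2.2.1 1720 && x.2.2.2.all (fun y => dpStd x.1 y.2 (y.1 + 4)) &&
    BAD.all (fun k => Nat.ble (k + 1) ((3 * x.1 * x.1 + 3) / 4) || Nat.ble x.2.2.1 k ||
      x.2.2.2.any (fun y => Nat.ble y.1 k && Nat.ble k y.2) ||
      EXC.any (fun z => Nat.beq z.1 x.1 && Nat.beq z.2.1 k))))

set_option maxRecDepth 100000 in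
lemma EXC_ok : EXC.all excOK = true := by decide +kernel

set_option maxRecDepth 100000 in
lemma CERT_ok : CERT.all certOK = true := by decide +kernel

lemma CERT_h : CERT.map (fun x => x.1) = List.range' 1 180 := by decide +kernel

lemma entOf_ok (n : ℕ) : (entOf n).ok := by
  unfold entOf
  rw [List.getD_eq_getElem?_getD]
  cases hc : TAB[n-1]? with
  | some e => exact TAB_ok e (List.mem_of_getElem? hc)
  | none => exact Ent.okB_sound ⟨1, 1, 0⟩ (by decide +kernel)

theorem finite_range (h k : ℕ) (h1 : 1 ≤ h) (h2 : h ≤ 180) (hk : 3 * h * h ≤ 4 * k)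
    (hp : ∀ p, p.Prime → k < p → k + 5 < p) (f g : ℕ → ℤ)
    (hfg : ∀ n ∈ List.range' 1 h, ∀ m ∈ List.range' 1 h, f n * m + g m * n ≤ k) :
    ((List.range' 1 h).map (fun n => GG n (f n))).sum +
      ((List.range' 1 h).map (fun n => GG n (g n))).sum ≤ k + 4 := by
  have hmem : h ∈ CERT.map (fun x => x.1) := by
    rw [CERT_h, List.mem_range'_1]; omega
  obtain ⟨⟨h', C, thr, L⟩, hx, rfl⟩ := List.mem_map.mp hmem
  simp only at *
  have hc := List.all_eq_true.mp CERT_ok _ hx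
  simp only [certOK, Bool.and_eq_true, Bool.or_eq_true] at hc
  obtain ⟨hs, hc⟩ := hc
  have eR : (ROWS.take h').map Row.n = List.range' 1 h' := by
    rw [List.map_take, ROWS_n, List.take_range'_of_length_ge (by omega)]
  have simple : thr ≤ k → ((List.range' 1 h').map (fun n => GG n (f n))).sum +
      ((List.range' 1 h').map (fun n => GG n (g n))).sum ≤ k + 4 := by
    intro ht
    have := simpleOK_sound 27720000 C thr (by norm_num) (ROWS.take h')
      (fun w hw => ROWS_ok w (List.mem_of_mem_take hw)) hs k ht f g
      (fun w hw v hv => hfg w.n (by rw [← eR]; exact List.mem_map_of_mem hw) v.n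
        (by rw [← eR]; exact List.mem_map_of_mem hv))
    rw [← eR, List.map_map, List.map_map]
    exact this
  by_cases ht : thr ≤ k
  · exact simple ht
  rcases hc with hc | ⟨⟨⟨hc1, hc2⟩, hc3⟩, hc4⟩
  · have := Nat.le_of_ble_eq_true hc
    exact absurd (by omega) ht
  · have hc1 := Nat.le_of_ble_eq_true hc1
    have hc2 := Nat.le_of_ble_eq_true hc2
    have hb := mem_BAD k (by omega) hp
    have hc5 := List.all_eq_true.mp hc4 k hb
    simp only [Bool.or_eq_true] at hc5
    rcases hc5 with ((hc5 | hc5) | hc5) | hc5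
    · have := Nat.le_of_ble_eq_true hc5
      omega
    · exact simple (Nat.le_of_ble_eq_true hc5)
    · obtain ⟨⟨lo, hi⟩, hy, hy2⟩ := List.any_eq_true.mp hc5
      simp only [Bool.and_eq_true] at hy2
      have hlo := Nat.le_of_ble_eq_true hy2.1
      have hhi := Nat.le_of_ble_eq_true hy2.2
      have hd := List.all_eq_true.mp hc3 _ hy
      have eT : (TAB.take h').map Ent.n = List.range' 1 h' := by
        rw [List.map_take, TAB_n, List.take_range'_of_length_ge (by omega)]
      have := dpC_sound k hi (lo + 4) h' hhi (TAB.take h') (TAB.take h').reverse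
        (fun w hw => TAB_ok w (List.mem_of_mem_take hw))
        (fun w hw => TAB_ok w (List.mem_of_mem_take (List.mem_reverse.mp hw)))
        (by rw [eT]) (by rw [List.map_reverse, eT]; exact List.reverse_perm _) hd f g hfg
      push_cast at this
      have : (lo : ℤ) ≤ k := by exact_mod_cast hlo
      linarith
    · obtain ⟨⟨h'', k'', P, R⟩, hz, hz2⟩ := List.any_eq_true.mp hc5
      simp only [Bool.and_eq_true] at hz2
      obtain rfl : h'' = h' := Nat.eq_of_beq_eq_true hz2.1
      obtain rfl : k'' = k := Nat.eq_of_beq_eq_true hz2.2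
      have hd := List.all_eq_true.mp EXC_ok _ hz
      simp only [excOK, Bool.and_eq_true, List.isPerm_iff] at hd
      obtain ⟨⟨d1, d2⟩, d3⟩ := hd
      have := dpC_sound k'' k'' (k'' + 4) h'' le_rfl (P.map entOf) (R.map entOf)
        (by intro e he; obtain ⟨n, _, rfl⟩ := List.mem_map.mp he; exact entOf_ok n)
        (by intro e he; obtain ⟨n, _, rfl⟩ := List.mem_map.mp he; exact entOf_ok n)
        (by rw [List.map_map]; exact d1) (by rw [List.map_map]; exact d2) d3 f g hfg
      push_cast at this
      exact this

end
section
open Finset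

def RL : List Row := [⟨1,1,0⟩,⟨2,1,1⟩,⟨3,2,2⟩,⟨5,4,4⟩,⟨6,2,4⟩,⟨7,6,6⟩,⟨10,4,8⟩,⟨14,6,12⟩,⟨15,8,14⟩,⟨21,12,24⟩,
  ⟨30,8,28⟩,⟨35,24,44⟩,⟨42,12,48⟩,⟨70,24,88⟩,⟨105,48,159⟩,⟨210,48,318⟩]

def rwOf (n : ℕ) : Row := (RL.find? (fun w => Nat.beq w.n (Nat.gcd n 210))).getD ⟨1,1,0⟩

def R210 (n : ℕ) : ℕ := (rwOf n).p * (210 / (rwOf n).n)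
def E210 (n : ℕ) : ℕ := 2 * (rwOf n).e * (210 / (rwOf n).n) + (bif Nat.beq (rwOf n).n 1 then 210 else 0)

lemma rwOf_add (n : ℕ) : rwOf (n + 210) = rwOf n := by
  simp only [rwOf, Nat.gcd_add_self_left]

lemma rwOf_mod (n : ℕ) : rwOf n = rwOf (n % 210) := by
  simp only [rwOf]
  rw [Nat.gcd_comm n, Nat.gcd_rec 210 n]

set_option maxRecDepth 100000 in
lemma rwOf_check : (List.range 210).all (fun r => (rwOf r).okB && Nat.beq (rwOf r).n (Nat.gcd r 210)) = true := by
  decide +kernel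

lemma rwOf_ok (n : ℕ) : (rwOf n).ok ∧ (rwOf n).n = Nat.gcd n 210 := by
  have h := rwOf_check
  rw [List.all_eq_true] at h
  have h1 := h (n % 210) (by simp; omega)
  rw [← rwOf_mod] at h1
  simp only [Bool.and_eq_true] at h1
  refine ⟨Row.okB_sound _ h1.1, ?_⟩
  rw [Nat.eq_of_beq_eq_true h1.2, Nat.gcd_comm n, Nat.gcd_rec 210 n]

/-- sums of initial segments -/
def pre (f : ℕ → ℕ) : ℕ → ℕ
  | 0 => 0
  | x + 1 => pre f x + f (x + 1)

lemma pre_eq (f : ℕ → ℕ) (x : ℕ) : pre f x = ∑ i ∈ range x, f (i + 1) := by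
  induction x with
  | zero => rfl
  | succ x ih => rw [pre, ih, sum_range_succ]

lemma pre_add (f : ℕ → ℕ) (M : ℕ) (hf : ∀ n, f (n + M) = f n) (x : ℕ) : pre f (x + M) = pre f x + pre f M := by
  induction x with
  | zero => rw [zero_add]; exact (zero_add _).symm
  | succ x ih =>
    rw [show x + 1 + M = (x + M) + 1 by omega, pre, ih, pre, show x + M + 1 = (x + 1) + M by omega, hf]
    omega

lemma pre_bound (f : ℕ → ℕ) (hf : ∀ n, f (n + 210) = f n) (D S C : ℕ) (h0 : D * pre f 210 ≤ S * 210)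
    (h : ∀ x < 210, D * pre f x ≤ S * x + C) (x : ℕ) : D * pre f x ≤ S * x + C := by
  induction x using Nat.strong_induction_on with
  | _ x ih =>
    by_cases hx : x < 210
    · exact h x hx
    · obtain ⟨y, rfl⟩ : ∃ y, x = y + 210 := ⟨x - 210, by omega⟩
      have := ih y (by omega)
      rw [pre_add f 210 hf, mul_add, mul_add]
      omega

def chk (D S C : ℕ) (f : ℕ → ℕ) : ℕ → ℕ → ℕ → Bool
  | 0, x, s => Nat.ble (D * s) (S * x)
  | k + 1, x, s => Nat.ble (D * s) (S * x + C) && chk D S C f k (x + 1) (s + f (x + 1))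

lemma chk_sound (D S C : ℕ) (f : ℕ → ℕ) (k x : ℕ) (h : chk D S C f k x (pre f x) = true) :
    D * pre f (x + k) ≤ S * (x + k) ∧ ∀ i < k, D * pre f (x + i) ≤ S * (x + i) + C := by
  induction k generalizing x with
  | zero => exact ⟨Nat.le_of_ble_eq_true h, by intro i hi; omega⟩
  | succ k ih =>
    simp only [chk, Bool.and_eq_true] at h
    obtain ⟨h1, h2⟩ := ih (x + 1) h.2
    refine ⟨by rw [show x + (k + 1) = x + 1 + k by omega]; exact h1, ?_⟩
    rintro (_ | i) hi
    · exact Nat.le_of_ble_eq_true h.1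
    · rw [show x + (i + 1) = x + 1 + i by omega]; exact h2 i (by omega)

set_option maxRecDepth 100000 in
lemma chkR : chk 210 27648 20436 R210 210 0 0 = true := by decide +kernel
set_option maxRecDepth 100000 in
lemma chkE : chk 35 9892 0 E210 210 0 0 = true := by decide +kernel

lemma preR (x : ℕ) : 210 * ∑ i ∈ range x, R210 (i + 1) ≤ 27648 * x + 20436 := by
  have h := chk_sound 210 27648 20436 R210 210 0 chkR
  simp only [zero_add] at h
  rw [← pre_eq]
  exact pre_bound R210 (fun n => by simp only [R210, rwOf_add]) _ _ _ h.1 h.2 x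

lemma preE (x : ℕ) : 35 * ∑ i ∈ range x, E210 (i + 1) ≤ 9892 * x := by
  have h := chk_sound 35 9892 0 E210 210 0 chkE
  simp only [zero_add] at h
  rw [← pre_eq]
  exact pre_bound E210 (fun n => by simp only [E210, rwOf_add]) 35 9892 0 h.1 h.2 x

lemma row_count (n : ℕ) (a b : ℤ) (hab : -1 ≤ a + b) (W : ℝ) (hW : (a : ℝ) + b ≤ W) :
    (((Icc (-b) a).filter (fun m => Int.gcd m n = 1)).card : ℝ) ≤ R210 n / 210 * W + E210 n / 210 := by
  obtain ⟨hok, hn⟩ := rwOf_ok n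
  obtain ⟨j, hj⟩ : (rwOf n).n ∣ 210 := by rw [hn]; exact Nat.gcd_dvd_right _ _
  have hc := GG_count_Icc (rwOf n).n hok.1 a b hab
  have hb1 := Row.ok_bound _ hok a
  have hb2 := Row.ok_bound _ hok b
  have hpos : 0 < (rwOf n).n := hok.1
  have hle : ((Icc (-b) a).filter (fun m => Int.gcd m n = 1)).card ≤
      ((Icc (-b) a).filter (fun m => Int.gcd m ((rwOf n).n : ℕ) = 1)).card := by
    apply card_le_card
    intro m hm
    simp only [mem_filter] at hm ⊢
    refine ⟨hm.1, ?_⟩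
    have : Int.gcd m ((rwOf n).n : ℕ) ∣ Int.gcd m n := by
      apply Int.gcd_dvd_gcd_of_dvd_right
      rw [hn]; exact_mod_cast Nat.gcd_dvd_left _ _
    rw [hm.2] at this
    exact Nat.dvd_one.mp this
  have hq : 210 / (rwOf n).n = j := by
    rw [hj, Nat.mul_div_cancel_left _ hpos]
  have hE : (E210 n : ℝ) = 2 * (rwOf n).e * j + (if (rwOf n).n = 1 then 210 else 0) := by
    simp only [E210, hq]
    by_cases h1 : (rwOf n).n = 1
    · have : Nat.beq (rwOf n).n 1 = true := by rw [h1]; rfl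
      rw [this, if_pos h1]; push_cast; simp
    · rw [natbeq_false h1, if_neg h1]; push_cast; simp
  have hR : (R210 n : ℝ) = (rwOf n).p * j := by simp only [R210, hq]; push_cast; rfl
  have hj' : ((rwOf n).n : ℝ) * j = 210 := by exact_mod_cast hj.symm
  have hpos' : (0 : ℝ) < (rwOf n).n := by exact_mod_cast hpos
  have hb1' : (GG (rwOf n).n a : ℝ) ≤ (rwOf n).p * a / (rwOf n).n + (rwOf n).e / (rwOf n).n := by
    have := (Rat.cast_le (K := ℝ)).mpr hb1
    push_cast at this
    exact this
  have hb2' : (GG (rwOf n).n b : ℝ) ≤ (rwOf n).p * b / (rwOf n).n + (rwOf n).e / (rwOf n).n := by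
    have := (Rat.cast_le (K := ℝ)).mpr hb2
    push_cast at this
    exact this
  have hc' : (((Icc (-b) a).filter (fun m => Int.gcd m ((rwOf n).n : ℕ) = 1)).card : ℝ)
      = GG (rwOf n).n a + GG (rwOf n).n b + (if (rwOf n).n = 1 then 1 else 0) := by exact_mod_cast hc
  have hle' : (((Icc (-b) a).filter (fun m => Int.gcd m n = 1)).card : ℝ) ≤
      (((Icc (-b) a).filter (fun m => Int.gcd m ((rwOf n).n : ℕ) = 1)).card : ℝ) := by exact_mod_cast hle
  have hjn : (j : ℝ) / 210 = 1 / (rwOf n).n := by 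
    rw [div_eq_div_iff (by norm_num) hpos'.ne']; linarith
  have hp0 : (0 : ℝ) ≤ (rwOf n).p / (rwOf n).n := by positivity
  have := mul_le_mul_of_nonneg_left hW hp0
  have e1 : (R210 n : ℝ) / 210 = (rwOf n).p / (rwOf n).n := by
    rw [hR, mul_div_assoc, hjn]; ring
  have e2 : (E210 n : ℝ) / 210 = 2 * ((rwOf n).e / (rwOf n).n) + (if (rwOf n).n = 1 then 1 else 0) := by
    rw [hE, add_div, mul_div_assoc, hjn]
    split_ifs <;> norm_num <;> ring
  rw [e1, e2]
  have e3 : ((rwOf n).p : ℝ) / (rwOf n).n * (a + b) = (rwOf n).p * a / (rwOf n).n + (rwOf n).p * b / (rwOf n).n := by ring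
  linarith

lemma abel (u V : ℕ → ℝ) (C : ℝ) (hV : ∀ i, V (i+1) ≤ V i) (hV0 : ∀ i, 0 ≤ V i)
    (hu : ∀ x, ∑ i ∈ range x, u i ≤ C) (h : ℕ) : ∑ i ∈ range h, u i * V i ≤ C * V 0 := by
  have key : ∑ i ∈ range h, u i * V i ≤ C * (V 0 - V h) + (∑ i ∈ range h, u i) * V h := by
    induction h with
    | zero => simp
    | succ h ih =>
      rw [sum_range_succ]
      have h1 := mul_le_mul_of_nonneg_right (hu (h+1)) (sub_nonneg.mpr (hV h))
      rw [sum_range_succ] at h1 ⊢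
      nlinarith
  have h1 := mul_le_mul_of_nonneg_right (hu h) (hV0 h)
  nlinarith

end
section
open Finset

lemma quarter_integral (V : ℕ → ℝ) (hV : Antitone V) (h : ℕ) (hh : 1 ≤ h) (K : ℝ)
    (hK : ∀ n m, 1 ≤ n → n ≤ h → 1 ≤ m → m ≤ h → V n * m + V m * n ≤ 2 * K) (hV0 : ∀ n, 0 ≤ V n) :
    ∑ i ∈ range h, V (i + 1) ≤ Real.pi / 2 * K := by
  have hpos : (0 : ℝ) < h := by exact_mod_cast hh
  set F : ℝ → ℝ := fun t => V ⌈t⌉₊ with hF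
  have hanti : Antitone F := fun x y hxy => hV (Nat.ceil_mono hxy)
  have h1 : ∑ i ∈ range h, V (i + 1) ≤ ∫ x in Set.Ioo (0 : ℝ) h, F x := by
    have := (hanti.antitoneOn (Set.Icc (0 : ℝ) (0 + h))).sum_le_integral
    rw [zero_add, intervalIntegral.integral_of_le hpos.le, MeasureTheory.integral_Ioc_eq_integral_Ioo] at this
    refine le_trans (le_of_eq ?_) this
    apply sum_congr rfl
    intro i _
    simp only [hF, zero_add, Nat.ceil_natCast]
  have hint : MeasureTheory.IntegrableOn F (Set.Ioo (0 : ℝ) h) :=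
    ((hanti.antitoneOn _).integrableOn_isCompact (isCompact_Icc (a := (0 : ℝ)) (b := h))).mono_set
      Set.Ioo_subset_Icc_self
  set s := Set.Ioo (0 : ℝ) (Real.pi / 2) with hs
  have hms : MeasurableSet s := measurableSet_Ioo
  have hsin : ∀ x ∈ s, 0 < Real.sin x := fun x hx => Real.sin_pos_of_pos_of_lt_pi hx.1 (by linarith [hx.2, Real.pi_pos])
  have hcos : ∀ x ∈ s, 0 < Real.cos x := fun x hx => Real.cos_pos_of_mem_Ioo ⟨by linarith [hx.1, Real.pi_pos], hx.2⟩
  have hsq : ∀ x, Real.sin x ^ 2 + Real.cos x ^ 2 = 1 := Real.sin_sq_add_cos_sq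
  have hd1 : ∀ x ∈ s, HasDerivWithinAt (fun t => h * Real.sin t) (h * Real.cos x) s x := fun x _ =>
    ((Real.hasDerivAt_sin x).const_mul _).hasDerivWithinAt
  have hd2 : ∀ x ∈ s, HasDerivWithinAt (fun t => h * Real.cos t) (h * -Real.sin x) s x := fun x _ =>
    ((Real.hasDerivAt_cos x).const_mul _).hasDerivWithinAt
  have hi1 : Set.InjOn (fun t => h * Real.sin t) s := by
    intro x hx y hy hxy
    have hxy' : Real.sin x = Real.sin y := mul_left_cancel₀ hpos.ne' hxy
    exact Real.injOn_sin ⟨by linarith [hx.1, Real.pi_pos], hx.2.le⟩ ⟨by linarith [hy.1, Real.pi_pos], hy.2.le⟩ hxy'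
  have hi2 : Set.InjOn (fun t => h * Real.cos t) s := by
    intro x hx y hy hxy
    have hxy' : Real.cos x = Real.cos y := mul_left_cancel₀ hpos.ne' hxy
    exact Real.injOn_cos ⟨hx.1.le, by linarith [hx.2, Real.pi_pos]⟩ ⟨hy.1.le, by linarith [hy.2, Real.pi_pos]⟩ hxy'
  have him1 : (fun t => h * Real.sin t) '' s = Set.Ioo (0 : ℝ) h := by
    ext y
    constructor
    · rintro ⟨x, hx, rfl⟩
      have := hsin x hx; have := hcos x hx; have := hsq x
      have hlt : Real.sin x < 1 := by nlinarith
      exact ⟨by positivity, by simpa using mul_lt_mul_of_pos_left hlt hpos⟩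
    · rintro ⟨hy0, hy1⟩
      have a0 : 0 < y / h := by positivity
      have a1 : y / h < 1 := by rw [div_lt_one hpos]; exact hy1
      refine ⟨Real.arcsin (y / h), ⟨Real.arcsin_pos.mpr a0, Real.arcsin_lt_pi_div_two.mpr a1⟩, ?_⟩
      simp only
      rw [Real.sin_arcsin (by linarith) a1.le]
      field_simp
  have him2 : (fun t => h * Real.cos t) '' s = Set.Ioo (0 : ℝ) h := by
    ext y
    constructor
    · rintro ⟨x, hx, rfl⟩
      have := hsin x hx; have := hcos x hx; have := hsq x
      have hlt : Real.cos x < 1 := by nlinarith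
      exact ⟨by positivity, by simpa using mul_lt_mul_of_pos_left hlt hpos⟩
    · rintro ⟨hy0, hy1⟩
      have a0 : 0 < y / h := by positivity
      have a1 : y / h < 1 := by rw [div_lt_one hpos]; exact hy1
      refine ⟨Real.arccos (y / h), ⟨Real.arccos_pos.mpr a1, Real.arccos_lt_pi_div_two.mpr a0⟩, ?_⟩
      simp only
      rw [Real.cos_arccos (by linarith) a1.le]
      field_simp
  have e1 := MeasureTheory.integral_image_eq_integral_abs_deriv_smul hms hd1 hi1 F
  have e2 := MeasureTheory.integral_image_eq_integral_abs_deriv_smul hms hd2 hi2 F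
  have j1 := (MeasureTheory.integrableOn_image_iff_integrableOn_abs_deriv_smul hms hd1 hi1 F).mp (by rw [him1]; exact hint)
  have j2 := (MeasureTheory.integrableOn_image_iff_integrableOn_abs_deriv_smul hms hd2 hi2 F).mp (by rw [him2]; exact hint)
  rw [him1] at e1
  rw [him2] at e2
  have hle : ∫ x in s, (|h * Real.cos x| • F (h * Real.sin x) + |h * -Real.sin x| • F (h * Real.cos x))
      ≤ ∫ x in s, (2 * K) := by
    refine MeasureTheory.setIntegral_mono_on (j1.add j2) ?_ hms ?_
    · exact MeasureTheory.integrableOn_const (by rw [hs, Real.volume_Ioo]; exact ENNReal.ofReal_ne_top)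
    · intro x hx
      have s0 := hsin x hx; have c0 := hcos x hx; have q := hsq x
      rw [abs_of_pos (by positivity), mul_neg, abs_neg, abs_of_pos (by positivity)]
      simp only [smul_eq_mul, hF]
      have sp : 0 < h * Real.sin x := by positivity
      have cp : 0 < h * Real.cos x := by positivity
      have sl : h * Real.sin x ≤ h := by nlinarith
      have cl : h * Real.cos x ≤ h := by nlinarith
      have := hK ⌈h * Real.sin x⌉₊ ⌈h * Real.cos x⌉₊ (Nat.ceil_pos.mpr sp) (Nat.ceil_le.mpr sl)
        (Nat.ceil_pos.mpr cp) (Nat.ceil_le.mpr cl)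
      have b1 := mul_le_mul_of_nonneg_right (Nat.le_ceil (h * Real.cos x)) (hV0 ⌈h * Real.sin x⌉₊)
      have b2 := mul_le_mul_of_nonneg_right (Nat.le_ceil (h * Real.sin x)) (hV0 ⌈h * Real.cos x⌉₊)
      linarith
  rw [MeasureTheory.integral_add j1 j2, ← e1, ← e2, MeasureTheory.setIntegral_const, MeasureTheory.measureReal_def, hs, Real.volume_Ioo,
    ENNReal.toReal_ofReal (by linarith [Real.pi_pos])] at hle
  simp only [smul_eq_mul, sub_zero] at hle
  linarith

lemma tail_bound (h k : ℕ) (hh : 181 ≤ h) (hk : 3 * h * h ≤ 4 * k) (W : ℕ → ℝ) (c : ℕ → ℕ)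
    (hW0 : ∀ n, 0 ≤ W n)
    (hW : ∀ n m, 1 ≤ n → n ≤ h → 1 ≤ m → m ≤ h → W n * m + W m * n ≤ 2 * k)
    (hc : ∀ n, 1 ≤ n → n ≤ h → (c n : ℝ) ≤ R210 n / 210 * W n + E210 n / 210) :
    1 + ∑ i ∈ range h, c (i + 1) ≤ k + 6 := by
  have hne : (Icc 1 h).Nonempty := ⟨1, by simp; omega⟩
  set V : ℕ → ℝ := fun n => (Icc 1 h).sup' hne (fun i => if n ≤ i then W i else 0) with hVdef
  have hVanti : Antitone V := by
    intro n m hnm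
    apply sup'_le
    intro i hi
    refine le_trans ?_ (le_sup' (fun i => if n ≤ i then W i else 0) hi)
    split_ifs
    · exact le_rfl
    · omega
    · exact hW0 _
    · exact le_rfl
  have hV0 : ∀ n, 0 ≤ V n := by
    intro n
    refine le_trans ?_ (le_sup' (fun i => if n ≤ i then W i else 0) (by simp; omega : h ∈ Icc 1 h))
    split_ifs
    · exact hW0 _
    · exact le_rfl
  have hWV : ∀ n, 1 ≤ n → n ≤ h → W n ≤ V n := by
    intro n h1 h2
    refine le_trans ?_ (le_sup' (fun i => if n ≤ i then W i else 0) (by simp; omega : n ∈ Icc 1 h))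
    simp
  have hex : ∀ n, 1 ≤ n → n ≤ h → ∃ i, n ≤ i ∧ i ≤ h ∧ V n = W i := by
    intro n h1 h2
    obtain ⟨i, hi, he⟩ := exists_mem_eq_sup' hne (fun i => if n ≤ i then W i else 0)
    simp only [mem_Icc] at hi
    by_cases hni : n ≤ i
    · exact ⟨i, hni, hi.2, by rw [hVdef]; simp only; rw [he, if_pos hni]⟩
    · have e0 : V n = 0 := by rw [hVdef]; simp only; rw [he, if_neg hni]
      have := hWV n h1 h2
      exact ⟨n, le_rfl, h2, by rw [e0]; rw [e0] at this; exact le_antisymm (hW0 _) this⟩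
  have hVV : ∀ n m, 1 ≤ n → n ≤ h → 1 ≤ m → m ≤ h → V n * m + V m * n ≤ 2 * k := by
    intro n m h1 h2 h3 h4
    obtain ⟨i, hi1, hi2, hi⟩ := hex n h1 h2
    obtain ⟨j, hj1, hj2, hj⟩ := hex m h3 h4
    rw [hi, hj]
    have := hW i j (by omega) hi2 (by omega) hj2
    have b1 : W i * m ≤ W i * j := mul_le_mul_of_nonneg_left (by exact_mod_cast hj1) (hW0 _)
    have b2 : W j * n ≤ W j * i := mul_le_mul_of_nonneg_left (by exact_mod_cast hi1) (hW0 _)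
    linarith
  have hint := quarter_integral V hVanti h (by omega) k hVV hV0
  have hV1 : V 1 * h ≤ 2 * k := by
    have := hVV 1 h le_rfl (by omega) (by omega) le_rfl
    have := hV0 h
    push_cast at *
    linarith
  have hab := abel (fun i => (R210 (i+1) : ℝ) / 210 - 27648 / 44100) (fun i => V (i+1)) (20436 / 44100)
    (fun i => hVanti (by omega)) (fun i => hV0 _) (by
      intro x
      have := preR x
      have h2 : (210 : ℝ) * ∑ i ∈ range x, (R210 (i + 1) : ℝ) ≤ 27648 * x + 20436 := by exact_mod_cast this
      rw [sum_sub_distrib, ← sum_div]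
      simp only [sum_const, card_range, nsmul_eq_mul]
      linarith) h
  simp only [sub_mul, sum_sub_distrib, ← mul_sum, zero_add] at hab
  have hE : (35 : ℝ) * ∑ i ∈ range h, (E210 (i + 1) : ℝ) ≤ 9892 * h := by exact_mod_cast preE h
  have hsum : ∑ i ∈ range h, (c (i + 1) : ℝ) ≤
      ∑ i ∈ range h, (R210 (i+1) : ℝ) / 210 * V (i + 1) + (∑ i ∈ range h, (E210 (i + 1) : ℝ)) / 210 := by
    rw [sum_div, ← sum_add_distrib]
    apply sum_le_sum
    intro i hi
    rw [mem_range] at hi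
    refine (hc (i+1) (by omega) (by omega)).trans ?_
    have := mul_le_mul_of_nonneg_left (hWV (i+1) (by omega) (by omega))
      (by positivity : (0 : ℝ) ≤ R210 (i+1) / 210)
    linarith
  have hh' : (181 : ℝ) ≤ h := by exact_mod_cast hh
  have hk' : (3 : ℝ) * h * h ≤ 4 * k := by exact_mod_cast hk
  have hpi := Real.pi_lt_d4
  have hk0 : (0 : ℝ) ≤ k := by positivity
  have h3 : Real.pi / 2 * k ≤ 1.5708 * k := by nlinarith
  have h4 : V 1 ≤ 2 * k / 181 := by
    have := mul_le_mul_of_nonneg_left hh' (hV0 1)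
    rw [le_div_iff₀ (by norm_num)]
    linarith
  have hfin : (1 : ℝ) + ∑ i ∈ range h, (c (i + 1) : ℝ) < k + 7 := by
    have : (1 : ℝ) + 27648 / 44100 * (1.5708 * k) + 20436 / 44100 * (2 * k / 181) + 9892 * h / 35 / 210 < k + 7 := by
      nlinarith
    linarith
  have : 1 + ∑ i ∈ range h, c (i + 1) < k + 7 := by exact_mod_cast hfin
  omega

end
section
open Finset

lemma list_sum_range' (F : ℕ → ℤ) (h : ℕ) : ((List.range' 1 h).map F).sum = ∑ i ∈ range h, F (i + 1) := by
  induction h with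
  | zero => simp
  | succ h ih => rw [List.range'_1_concat, List.map_append, List.sum_append, ih, sum_range_succ]; simp [add_comm]

lemma det_zero {m n m' n' : ℤ} (h : Int.gcd m n = 1) (h' : Int.gcd m' n' = 1) (hd : m * n' - m' * n = 0) :
    (m = m' ∧ n = n') ∨ (m = -m' ∧ n = -n') := by
  have c : IsCoprime m n := Int.isCoprime_iff_gcd_eq_one.mpr h
  have c' : IsCoprime m' n' := Int.isCoprime_iff_gcd_eq_one.mpr h'
  have d1 : m ∣ m' := c.dvd_of_dvd_mul_right (Dvd.intro n' (by linarith))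
  have d2 : m' ∣ m := c'.dvd_of_dvd_mul_right (Dvd.intro n (by linarith))
  have d3 : n ∣ n' := c.symm.dvd_of_dvd_mul_left (Dvd.intro m' (by linarith))
  have d4 : n' ∣ n := c'.symm.dvd_of_dvd_mul_left (Dvd.intro m (by linarith))
  have e1 := Int.natAbs_eq_natAbs_iff.mp (Nat.dvd_antisymm (Int.natAbs_dvd_natAbs.mpr d1) (Int.natAbs_dvd_natAbs.mpr d2))
  have e2 := Int.natAbs_eq_natAbs_iff.mp (Nat.dvd_antisymm (Int.natAbs_dvd_natAbs.mpr d3) (Int.natAbs_dvd_natAbs.mpr d4))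
  rcases e1 with e1 | e1 <;> rcases e2 with e2 | e2
  · exact Or.inl ⟨e1, e2⟩
  · subst e1; subst e2
    have : m * n' = 0 := by linarith
    rcases mul_eq_zero.mp this with h0 | h0
    · right; subst h0; simp
    · left; subst h0; simp
  · subst e1; subst e2
    have : m' * n = 0 := by linarith
    rcases mul_eq_zero.mp this with h0 | h0
    · left; subst h0; simp
    · right; subst h0; simp
  · exact Or.inr ⟨e1, e2⟩

lemma nice_det {k : ℕ} {Q : Set (ℤ × ℤ)} (hQ : IsKNice k Q) {p q : ℤ × ℤ} (hp : p ∈ Q) (hq : q ∈ Q)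
    (hd : p.1 * q.2 - q.1 * p.2 = 0) : p = q := by
  rcases det_zero (hQ.1 p hp).2 (hQ.1 q hq).2 hd with h | h
  · exact Prod.ext h.1 h.2
  · exfalso
    have : p = -q := Prod.ext h.1 h.2
    exact hQ.2.1 q hq (this ▸ hp)

lemma prime_bound {k : ℕ} {S : Finset (ℤ × ℤ)} (hQ : IsKNice k (S : Set (ℤ × ℤ))) (p : ℕ) (hp : p.Prime)
    (hk : k < p) : S.card ≤ p + 1 := by
  have : Fact p.Prime := ⟨hp⟩
  classical
  let f : ℤ × ℤ → Option (ZMod p) := fun q => if (q.2 : ZMod p) = 0 then none else some ((q.1 : ZMod p) / q.2)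
  have hinj : Set.InjOn f S := by
    intro u hu v hv huv
    apply nice_det hQ hu hv
    have hz : ((u.1 * v.2 - v.1 * u.2 : ℤ) : ZMod p) = 0 := by
      push_cast
      simp only [f] at huv
      by_cases h1 : (u.2 : ZMod p) = 0 <;> by_cases h2 : (v.2 : ZMod p) = 0
      · rw [h1, h2]; ring
      · simp [h1, h2] at huv
      · simp [h1, h2] at huv
      · simp only [h1, h2, if_false, Option.some.injEq] at huv
        rw [div_eq_div_iff h1 h2] at huv
        rw [huv]; ring
    rw [ZMod.intCast_zmod_eq_zero_iff_dvd] at hz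
    exact Int.eq_zero_of_abs_lt_dvd hz (lt_of_le_of_lt (hQ.2.2 u hu v hv) (by exact_mod_cast hk))
  have := card_le_card_of_injOn f (t := Finset.univ) (fun _ _ => Finset.mem_univ _) hinj
  simpa [ZMod.card] using this

lemma row_zero {k : ℕ} {S : Finset (ℤ × ℤ)} (hQ : IsKNice k (S : Set (ℤ × ℤ))) :
    (S.filter (fun q => q.2 = 0)).card ≤ 1 := by
  rw [card_le_one]
  intro a ha b hb
  simp only [mem_filter] at ha hb
  exact nice_det hQ ha.1 hb.1 (by rw [ha.2, hb.2]; ring)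

lemma row_model {k h : ℕ} (hh : 1 ≤ h) {S : Finset (ℤ × ℤ)} (hQ : IsKNice k (S : Set (ℤ × ℤ)))
    (hy : ∀ q ∈ S, 0 ≤ q.2 ∧ q.2 ≤ h) (x0 : ℤ) (hx0 : (x0, (h : ℤ)) ∈ S) (hk : 3 * h * h ≤ 4 * k)
    (hp : ∀ p, p.Prime → k < p → k + 5 < p) : S.card ≤ k + 6 := by
  classical
  have hpos : (0 : ℝ) < h := by exact_mod_cast hh
  let T : ℕ → Finset ℝ := fun n => insert ((n : ℝ) * x0 / h) ((S.filter (fun q => q.2 = (n : ℤ))).image (fun q => (q.1 : ℝ)))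
  have hT : ∀ n, (T n).Nonempty := fun n => insert_nonempty _ _
  have key : ∀ n m : ℕ, n ≤ h → m ≤ h → ∀ u ∈ T n, ∀ v ∈ T m, u * m - v * n ≤ k := by
    intro n m hn hm u hu v hv
    have hn' : (n : ℝ) ≤ h := by exact_mod_cast hn
    have hm' : (m : ℝ) ≤ h := by exact_mod_cast hm
    have hD : ∀ p ∈ S, ∀ q ∈ S, (p.1 : ℝ) * q.2 - q.1 * p.2 ≤ k := by
      intro p hp q hq
      exact_mod_cast (le_abs_self _).trans (hQ.2.2 p hp q hq)
    have hsc : ∀ (t : ℝ) (n : ℕ), n ≤ h → t ≤ k → (n : ℝ) / h * t ≤ k := by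
      intro t n hn ht
      have hn' : (n : ℝ) ≤ h := by exact_mod_cast hn
      have a0 : (0 : ℝ) ≤ n / h := by positivity
      have a1 : (n : ℝ) / h ≤ 1 := by rw [div_le_one hpos]; exact hn'
      have k0 : (0 : ℝ) ≤ k := by positivity
      calc (n : ℝ) / h * t ≤ n / h * k := mul_le_mul_of_nonneg_left ht a0
        _ ≤ 1 * k := mul_le_mul_of_nonneg_right a1 k0
        _ = k := one_mul _
    simp only [T, mem_insert, mem_image, mem_filter] at hu hv
    rcases hu with rfl | ⟨p, ⟨hpS, hp2⟩, rfl⟩ <;> rcases hv with rfl | ⟨q, ⟨hqS, hq2⟩, rfl⟩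
    · have : (n : ℝ) * x0 / h * m - m * x0 / h * n = 0 := by ring
      rw [this]; positivity
    · have := hsc _ n hn (hD _ hx0 q hqS)
      have e : (q.2 : ℝ) = m := by rw [hq2]; simp
      simp only [e] at this
      refine le_trans (le_of_eq ?_) this
      push_cast
      field_simp
    · have := hsc _ m hm (hD p hpS _ hx0)
      have e : (p.2 : ℝ) = n := by rw [hp2]; simp
      simp only [e] at this
      refine le_trans (le_of_eq ?_) this
      push_cast
      field_simp
    · have := hD p hpS q hqS
      rw [hp2, hq2] at this
      exact_mod_cast this
  let α : ℕ → ℝ := fun n => (T n).sup' (hT n) id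
  let β : ℕ → ℝ := fun n => -(T n).inf' (hT n) id
  have hα : ∀ n, ∀ u ∈ T n, u ≤ α n := fun n u hu => le_sup' id hu
  have hβ : ∀ n, ∀ u ∈ T n, -u ≤ β n := fun n u hu => neg_le_neg (inf'_le id hu)
  have hαβ0 : ∀ n, 0 ≤ α n + β n := by
    intro n
    obtain ⟨u, hu⟩ := hT n
    linarith [hα n u hu, hβ n u hu]
  have hαβ : ∀ n m : ℕ, n ≤ h → m ≤ h → α n * m + β m * n ≤ k := by
    intro n m hn hm
    obtain ⟨u, hu, hu'⟩ := exists_mem_eq_sup' (hT n) id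
    obtain ⟨v, hv, hv'⟩ := exists_mem_eq_inf' (hT m) id
    have := key n m hn hm u hu v hv
    have e1 : α n = u := hu'
    have e2 : β m = -v := congrArg Neg.neg hv'
    rw [e1, e2]; linarith
  let a : ℕ → ℤ := fun n => ⌊α n⌋
  let b : ℕ → ℤ := fun n => ⌊β n⌋
  have ha : ∀ n, (a n : ℝ) ≤ α n := fun n => Int.floor_le _
  have hb : ∀ n, (b n : ℝ) ≤ β n := fun n => Int.floor_le _
  have hab1 : ∀ n, -1 ≤ a n + b n := by
    intro n
    have h1 : α n < a n + 1 := Int.lt_floor_add_one _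
    have h2 : β n < b n + 1 := Int.lt_floor_add_one _
    have h3 : (-2 : ℝ) < ((a n + b n : ℤ) : ℝ) := by push_cast; linarith [hαβ0 n]
    have : -2 < a n + b n := by exact_mod_cast h3
    omega
  let c : ℕ → ℕ := fun n => ((Icc (-(b n)) (a n)).filter (fun m => Int.gcd m n = 1)).card
  have hrow : ∀ n : ℕ, (S.filter (fun q => q.2.toNat = n)).card ≤ if n = 0 then 1 else c n := by
    intro n
    have hfe : S.filter (fun q => q.2.toNat = n) = S.filter (fun q => q.2 = (n : ℤ)) := by
      apply filter_congr
      intro q hq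
      have := hy q hq
      omega
    rw [hfe]
    split_ifs with h0
    · subst h0; exact_mod_cast row_zero hQ
    · apply card_le_card_of_injOn (fun q => q.1)
      · intro q hq
        have hq' := hq
        simp only [coe_filter, Set.mem_ofPred_eq] at hq'
        have hm : (q.1 : ℝ) ∈ T n := by
          simp only [T, mem_insert, mem_image, mem_filter]
          exact Or.inr ⟨q, hq', rfl⟩
        simp only [coe_filter, Set.mem_ofPred_eq, mem_Icc]
        refine ⟨⟨?_, Int.le_floor.mpr (hα n _ hm)⟩, ?_⟩
        · have : -q.1 ≤ b n := Int.le_floor.mpr (by push_cast; exact hβ n _ hm)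
          omega
        · rw [← hq'.2]; exact (hQ.1 q hq'.1).2
      · intro u hu v hv huv
        simp only [coe_filter, Set.mem_ofPred_eq] at hu hv
        exact Prod.ext huv (by rw [hu.2, hv.2])
  have hcard : S.card ≤ 1 + ∑ i ∈ range h, c (i + 1) := by
    rw [card_eq_sum_card_fiberwise (f := fun q => q.2.toNat) (t := range (h + 1))]
    · refine (sum_le_sum (fun n _ => hrow n)).trans ?_
      rw [sum_range_succ']
      simp [add_comm]
    · intro q hq
      have := hy q hq
      simp only [coe_range, Set.mem_Iio]
      omega
  refine hcard.trans ?_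
  by_cases h180 : h ≤ 180
  · have hfr := finite_range h k hh h180 hk hp a b (by
      intro n hn m hm
      rw [List.mem_range'_1] at hn hm
      have h1 := hαβ n m (by omega) (by omega)
      have h2 := mul_le_mul_of_nonneg_right (ha n) (by positivity : (0 : ℝ) ≤ m)
      have h3 := mul_le_mul_of_nonneg_right (hb m) (by positivity : (0 : ℝ) ≤ n)
      have : (a n : ℝ) * m + b m * n ≤ k := by linarith
      exact_mod_cast this)
    rw [list_sum_range', list_sum_range'] at hfr
    have hc : ∀ i, (c (i + 1) : ℤ) = GG (i+1) (a (i+1)) + GG (i+1) (b (i+1)) + (if i = 0 then 1 else 0) := by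
      intro i
      have := GG_count_Icc (i+1) (by omega) (a (i+1)) (b (i+1)) (hab1 _)
      have e : (if i + 1 = 1 then (1 : ℤ) else 0) = if i = 0 then 1 else 0 := by simp
      rw [e] at this
      exact this
    have hs : ((∑ i ∈ range h, c (i + 1) : ℕ) : ℤ) ≤ k + 5 := by
      push_cast
      rw [sum_congr rfl (fun i _ => hc i), sum_add_distrib, sum_add_distrib, sum_ite_eq' (range h) 0]
      have : (if 0 ∈ range h then (1 : ℤ) else 0) ≤ 1 := by split_ifs <;> norm_num
      linarith
    have : ∑ i ∈ range h, c (i + 1) ≤ k + 5 := by exact_mod_cast hs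
    omega
  · apply tail_bound h k (by omega) hk (fun n => α n + β n) c hαβ0
    · intro n m _ hn _ hm
      have h1 := hαβ n m hn hm
      have h2 := hαβ m n hm hn
      linarith
    · intro n _ _
      exact row_count n (a n) (b n) (hab1 n) _ (add_le_add (ha n) (hb n))

end
section
open Finset

lemma nice_image {k : ℕ} {S : Finset (ℤ × ℤ)} (hQ : IsKNice k (S : Set (ℤ × ℤ))) (f : ℤ × ℤ → ℤ × ℤ)
    (hg : ∀ p ∈ S, Int.gcd (f p).1 (f p).2 = 1)
    (hd : ∀ p ∈ S, ∀ q ∈ S, |(f p).1 * (f q).2 - (f q).1 * (f p).2| = |p.1 * q.2 - q.1 * p.2|) :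
    IsKNice k ((S.image f : Finset (ℤ × ℤ)) : Set (ℤ × ℤ)) ∧ (S.image f).card = S.card := by
  have hinj : ∀ p ∈ S, ∀ q ∈ S, (f p).1 * (f q).2 - (f q).1 * (f p).2 = 0 → p = q := by
    intro p hp q hq h
    apply nice_det hQ hp hq
    have := hd p hp q hq
    rw [h, abs_zero] at this
    exact abs_eq_zero.mp this.symm
  have hnz : ∀ p ∈ S, f p ≠ (0, 0) := by
    intro p hp h
    have := hg p hp
    rw [h] at this
    simp at this
  refine ⟨⟨?_, ?_, ?_⟩, ?_⟩
  · intro x hx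
    simp only [coe_image, Set.mem_image, mem_coe] at hx
    obtain ⟨p, hp, rfl⟩ := hx
    exact ⟨hnz p hp, hg p hp⟩
  · intro x hx hx'
    simp only [coe_image, Set.mem_image, mem_coe] at hx hx'
    obtain ⟨p, hp, rfl⟩ := hx
    obtain ⟨q, hq, hqp⟩ := hx'
    have e1 : (f q).1 = -(f p).1 := by rw [hqp]; rfl
    have e2 : (f q).2 = -(f p).2 := by rw [hqp]; rfl
    have : p = q := hinj p hp q hq (by rw [e1, e2]; ring)
    subst this
    exact hnz p hp (Prod.ext (by simp only; omega) (by simp only; omega))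
  · intro x hx y hy
    simp only [coe_image, Set.mem_image, mem_coe] at hx hy
    obtain ⟨p, hp, rfl⟩ := hx
    obtain ⟨q, hq, rfl⟩ := hy
    rw [hd p hp q hq]
    exact hQ.2.2 p hp q hq
  · apply card_image_of_injOn
    intro p hp q hq h
    exact hinj p hp q hq (by rw [h]; ring)

lemma gcd_one_of {a b c d : ℤ} (h : Int.gcd a b = 1) (e : ∃ x y z w : ℤ, a = x * c + y * d ∧ b = z * c + w * d) :
    Int.gcd c d = 1 := by
  obtain ⟨x, y, z, w, h1, h2⟩ := e
  obtain ⟨u, v, huv⟩ := Int.isCoprime_iff_gcd_eq_one.mpr h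
  apply Int.isCoprime_iff_gcd_eq_one.mp
  exact ⟨u * x + v * z, u * y + v * w, by rw [← huv, h1, h2]; ring⟩

lemma three_quarter {h x0 x y x' y' k : ℤ} (hh : 0 < h) (h0 : 0 ≤ x0) (h1 : x0 ≤ h)
    (hy : 0 ≤ y) (hy1 : y ≤ h) (hy' : 0 ≤ y') (hy1' : y' ≤ h) (hx : h ≤ |x|) (hx' : h ≤ |x' - y'|)
    (d1 : |x0 * y - x * h| ≤ k) (d2 : |x0 * y' - x' * h| ≤ k) (d3 : |x * y' - x' * y| ≤ k) :
    3 * h * h ≤ 4 * k := by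
  rw [abs_le] at d1 d2 d3
  rcases le_abs.mp hx with hx | hx
  · rcases le_abs.mp hx' with hx' | hx'
    · nlinarith [mul_nonneg hy' (sub_nonneg.mpr h1), mul_le_mul_of_nonneg_right hx' hh.le]
    · by_contra hc
      push Not at hc
      have a1 : h * h < 4 * (x0 * y) := by nlinarith
      have a2 : h * h < 4 * ((h - x0) * y') := by nlinarith
      have a3 : h * h < 4 * ((h - y) * (h - y')) := by
        have := mul_le_mul_of_nonneg_right hx hy'
        have : (h - y') * y ≤ - x' * y := mul_le_mul_of_nonneg_right (by linarith) hy
        nlinarith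
      have p0 : 0 < h * h := by positivity
      have b1 : 4 * (x0 * (h - x0)) ≤ h * h := by nlinarith [sq_nonneg (h - 2 * x0)]
      have b2 : 4 * (y * (h - y)) ≤ h * h := by nlinarith [sq_nonneg (h - 2 * y)]
      have b3 : 4 * (y' * (h - y')) ≤ h * h := by nlinarith [sq_nonneg (h - 2 * y')]
      have c1 : (h * h) * (h * h) < 4 * (x0 * y) * (4 * ((h - x0) * y')) := mul_lt_mul'' a1 a2 p0.le p0.le
      have c2 : (h * h) * (h * h) * (h * h) < 4 * (x0 * y) * (4 * ((h - x0) * y')) * (4 * ((h - y) * (h - y'))) :=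
        mul_lt_mul'' c1 a3 (by positivity) p0.le
      have z1 : 0 ≤ 4 * (x0 * (h - x0)) := by have := sub_nonneg.mpr h1; positivity
      have z2 : 0 ≤ 4 * (y * (h - y)) := by have := sub_nonneg.mpr hy1; positivity
      have z3 : 0 ≤ 4 * (y' * (h - y')) := by have := sub_nonneg.mpr hy1'; positivity
      have e1 : 4 * (x0 * (h - x0)) * (4 * (y * (h - y))) ≤ (h * h) * (h * h) := mul_le_mul b1 b2 z2 p0.le
      have e2 : 4 * (x0 * (h - x0)) * (4 * (y * (h - y))) * (4 * (y' * (h - y'))) ≤ (h * h) * (h * h) * (h * h) :=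
        mul_le_mul e1 b3 z3 (by positivity)
      linarith
  · nlinarith [mul_nonneg h0 hy, mul_le_mul_of_nonneg_right hx hh.le]

lemma finset_bound {k : ℕ} {S0 : Finset (ℤ × ℤ)} (hQ0 : IsKNice k (S0 : Set (ℤ × ℤ))) : S0.card ≤ k + 6 := by
  classical
  by_cases hp : ∀ p, p.Prime → k < p → k + 5 < p
  swap
  · push Not at hp
    obtain ⟨p, h1, h2, h3⟩ := hp
    have := prime_bound hQ0 p h1 h2
    omega
  have hex : ∃ h : ℕ, ∃ S : Finset (ℤ × ℤ), IsKNice k (S : Set (ℤ × ℤ)) ∧ S.card = S0.card ∧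
      ∀ q ∈ S, q.2.natAbs ≤ h :=
    ⟨S0.sup (fun q => q.2.natAbs), S0, hQ0, rfl, fun q hq => le_sup (f := fun q : ℤ × ℤ => q.2.natAbs) hq⟩
  have hmin : ∀ S : Finset (ℤ × ℤ), IsKNice k (S : Set (ℤ × ℤ)) → S.card = S0.card → 1 ≤ Nat.find hex →
      ∃ q ∈ S, Nat.find hex ≤ q.2.natAbs := by
    intro S h1 h2 h3
    by_contra hc
    push Not at hc
    exact Nat.find_min hex (m := Nat.find hex - 1) (by omega) ⟨S, h1, h2, fun q hq => by have := hc q hq; omega⟩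
  obtain ⟨S1, hQ1, hc1, hb1⟩ := Nat.find_spec hex
  generalize Nat.find hex = h at *
  -- make the second coordinates non-negative
  obtain ⟨S2, hQ2, hc2, hb2⟩ : ∃ S : Finset (ℤ × ℤ), IsKNice k (S : Set (ℤ × ℤ)) ∧ S.card = S0.card ∧
      ∀ q ∈ S, 0 ≤ q.2 ∧ q.2 ≤ h := by
    have := nice_image hQ1 (fun q => if q.2 < 0 then -q else q) (by
      intro p hp
      have := (hQ1.1 p hp).2
      split_ifs
      · simpa using this
      · exact this) (by
      intro p hp q hq
      split_ifs
      · congr 1; simp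
      · rw [← abs_neg]; congr 1; simp; ring
      · rw [← abs_neg]; congr 1; simp; ring
      · rfl)
    refine ⟨_, this.1, this.2.trans hc1, ?_⟩
    intro q hq
    rw [mem_image] at hq
    obtain ⟨p, hp, rfl⟩ := hq
    have := hb1 p hp
    split_ifs
    · simp only [Prod.snd_neg]; omega
    · omega
  rcases Nat.eq_zero_or_pos h with h0 | hpos
  · have := row_zero hQ2
    rw [filter_true_of_mem (fun q hq => by have := hb2 q hq; omega)] at this
    omega
  obtain ⟨p, hpS, hph⟩ := hmin S2 hQ2 hc2 hpos
  have hp2 : p.2 = h := by have := hb2 p hpS; omega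
  -- shear
  obtain ⟨S, hQ, hc, hb, x0, hx0, hx1, hx2⟩ : ∃ S : Finset (ℤ × ℤ), IsKNice k (S : Set (ℤ × ℤ)) ∧ S.card = S0.card ∧
      (∀ q ∈ S, 0 ≤ q.2 ∧ q.2 ≤ h) ∧ ∃ x0 : ℤ, (x0, (h : ℤ)) ∈ S ∧ 0 ≤ x0 ∧ x0 ≤ h := by
    have := nice_image hQ2 (fun q => (q.1 - (p.1 / h) * q.2, q.2)) (by
      intro q hq
      exact gcd_one_of (hQ2.1 q hq).2 ⟨1, p.1 / h, 0, 1, by ring, by ring⟩) (by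
      intro u hu v hv
      congr 1
      simp only
      ring)
    refine ⟨_, this.1, this.2.trans hc2, ?_, p.1 % h, ?_, Int.emod_nonneg _ (by omega), (Int.emod_lt_of_pos _ (by omega)).le⟩
    · intro q hq
      rw [mem_image] at hq
      obtain ⟨u, hu, rfl⟩ := hq
      exact hb2 u hu
    · rw [mem_image]
      refine ⟨p, hpS, Prod.ext ?_ hp2⟩
      simp only [hp2]
      have := Int.emod_add_mul_ediv p.1 h
      linarith
  have ha := nice_image hQ (fun q => (q.2, q.1)) (by
      intro q hq
      exact gcd_one_of (hQ.1 q hq).2 ⟨0, 1, 1, 0, by ring, by ring⟩) (by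
      intro u hu v hv
      rw [← abs_neg]
      congr 1
      simp only
      ring)
  have hd := nice_image hQ (fun q => (q.2, q.1 - q.2)) (by
      intro q hq
      exact gcd_one_of (hQ.1 q hq).2 ⟨1, 1, 1, 0, by ring, by ring⟩) (by
      intro u hu v hv
      rw [← abs_neg]
      congr 1
      simp only
      ring)
  obtain ⟨q, hq, hqh⟩ := hmin _ ha.1 (ha.2.trans hc) hpos
  obtain ⟨r, hr, hrh⟩ := hmin _ hd.1 (hd.2.trans hc) hpos
  rw [mem_image] at hq hr
  obtain ⟨q, hq, rfl⟩ := hq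
  obtain ⟨r, hr, rfl⟩ := hr
  simp only at hqh hrh
  have h34 := three_quarter (h := h) (x0 := x0) (x := q.1) (y := q.2) (x' := r.1) (y' := r.2) (k := k)
    (by exact_mod_cast hpos) hx1 hx2 (hb q hq).1 (hb q hq).2 (hb r hr).1 (hb r hr).2
    (by rw [Int.abs_eq_natAbs]; exact_mod_cast hqh) (by rw [Int.abs_eq_natAbs]; exact_mod_cast hrh)
    (hQ.2.2 _ hx0 _ hq) (hQ.2.2 _ hx0 _ hr) (hQ.2.2 _ hq _ hr)
  have := row_model hpos hQ hb x0 hx0 (by exact_mod_cast h34) hp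
  omega

theorem kNice_final (k : ℕ) (hk : 1 ≤ k) (Q : Set (ℤ × ℤ))
    (hQ : IsKNice k Q) : Q.Finite ∧ Q.ncard ≤ k + 6 := by
  have hsub : ∀ S : Finset (ℤ × ℤ), (S : Set (ℤ × ℤ)) ⊆ Q → S.card ≤ k + 6 := by
    intro S hS
    exact finset_bound ⟨fun p hp => hQ.1 p (hS hp), fun p hp hp' => hQ.2.1 p (hS hp) (hS hp'),
      fun p hp q hq => hQ.2.2 p (hS hp) q (hS hq)⟩
  have hfin : Q.Finite := by
    by_contra hinf
    obtain ⟨t, ht, hc⟩ := Set.Infinite.exists_subset_card_eq hinf (k + 7)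
    have := hsub t ht
    omega
  refine ⟨hfin, ?_⟩
  rw [Set.ncard_eq_toFinset_card Q hfin]
  exact hsub _ (by simp)

end

end KN

theorem kNice_card_le_add_six (k : ℕ) (hk : 1 ≤ k) (Q : Set (ℤ × ℤ))
    (hQ : IsKNice k Q) : Q.Finite ∧ Q.ncard ≤ k + 6 := by
  exact KN.kNice_final k hk Q hQ
end

section
/- Let k ∈ ℕ and let Q be an inclusion-wise maximal k-nice y-non-negative subset of ℤ². If (m,n) ∈ ℤ² lies in the convex hull of Q (viewed as a subset of ℝ²) and the integers m and n are coprime, then (m,n) ∈ Q. -/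
theorem convex_lexHalf (a : ℝ) :
    Convex ℝ {p : ℝ × ℝ | 0 < p.2 ∨ (p.2 = 0 ∧ p.1 * a < 0)} := by
  rw [convex_iff_forall_pos]
  rintro ⟨x1, y1⟩ h1 ⟨x2, y2⟩ h2 s t hs ht hst
  simp only [Set.mem_ofPred_eq, Prod.smul_mk, Prod.mk_add_mk, smul_eq_mul] at *
  rcases h1 with h1 | ⟨h1, h1'⟩ <;> rcases h2 with h2 | ⟨h2, h2'⟩
  · left; positivity
  · left; subst h2; simp only [mul_zero, add_zero]; positivity
  · left; subst h1; simp only [mul_zero, zero_add]; positivity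
  · right
    subst h1 h2
    refine ⟨by ring, ?_⟩
    have e1 := mul_neg_of_pos_of_neg hs h1'
    have e2 := mul_neg_of_pos_of_neg ht h2'
    linarith

theorem hull_linear (Q : Set (ℤ × ℤ)) (a b c : ℤ) (h : ∀ p ∈ Q, p.1 * a + p.2 * b ≤ c)
    (m n : ℤ) (hhull : ((m : ℝ), (n : ℝ)) ∈
      convexHull ℝ ((fun p : ℤ × ℤ => ((p.1 : ℝ), (p.2 : ℝ))) '' Q)) :
    m * a + n * b ≤ c := by
  have hc : Convex ℝ {p : ℝ × ℝ | p.1 * a + p.2 * b ≤ (c : ℝ)} := by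
    rintro ⟨x1, y1⟩ h1 ⟨x2, y2⟩ h2 s t hs ht hst
    simp only [Set.mem_ofPred_eq, Prod.smul_mk, Prod.mk_add_mk, smul_eq_mul] at *
    have e1 := mul_le_mul_of_nonneg_left h1 hs
    have e2 := mul_le_mul_of_nonneg_left h2 ht
    have e3 : s * (c : ℝ) + t * c = c := by rw [← add_mul, hst, one_mul]
    linarith
  have := convexHull_min (s := (fun p : ℤ × ℤ => ((p.1 : ℝ), (p.2 : ℝ))) '' Q) (by
    rintro _ ⟨p, hp, rfl⟩
    have := h p hp
    simp only [Set.mem_ofPred_eq]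
    exact_mod_cast this) hc hhull
  simp only [Set.mem_ofPred_eq] at this
  exact_mod_cast this

theorem maximal_kNice_contains_coprime_hull_points (k : ℕ) (Q : Set (ℤ × ℤ))
    (hQ : IsKNice k Q) (hy : YNonneg Q)
    (hmax : ∀ Q' : Set (ℤ × ℤ), Q ⊆ Q' → IsKNice k Q' → YNonneg Q' → Q' = Q)
    (m n : ℤ) (hco : Int.gcd m n = 1)
    (hhull : ((m : ℝ), (n : ℝ)) ∈
      convexHull ℝ ((fun p : ℤ × ℤ => ((p.1 : ℝ), (p.2 : ℝ))) '' Q)) :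
    (m, n) ∈ Q := by
  obtain ⟨hc, hneg, hk⟩ := hQ
  have hn : 0 ≤ n := by
    have := hull_linear Q 0 (-1) 0 (fun p hp => by have := hy p hp; linarith) m n hhull
    linarith
  have hdet : ∀ q ∈ Q, |m * q.2 - q.1 * n| ≤ (k : ℤ) := by
    -- two steps: the bound is linear in each argument
    intro q hq
    rw [abs_le]
    have e1 := hull_linear Q q.2 (-q.1) k
      (fun p hp => by have := (abs_le.1 (hk p hp q hq)).2; linarith) m n hhull
    have e2 := hull_linear Q (-q.2) q.1 k
      (fun p hp => by have := (abs_le.1 (hk p hp q hq)).1; linarith) m n hhull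
    constructor <;> linarith
  have h0 : (m, n) ≠ (0, 0) := by
    intro h
    simp only [Prod.mk.injEq] at h
    simp [h.1, h.2] at hco
  have hnv : -(m, n) ∉ Q := by
    intro hv
    have hn0 : n = 0 := by
      have := hy _ hv
      simp only [Prod.neg_mk] at this
      omega
    subst hn0
    have hmem := convexHull_min (s := (fun p : ℤ × ℤ => ((p.1 : ℝ), (p.2 : ℝ))) '' Q) (by
      rintro _ ⟨⟨a, b⟩, hp, rfl⟩
      have hb := hy _ hp
      have hg := (hc _ hp).2
      simp only [Set.mem_ofPred_eq] at hb hg ⊢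
      rcases hb.lt_or_eq with hb | hb
      · left; exact_mod_cast hb
      · right
        subst hb
        refine ⟨by simp, ?_⟩
        have hne : a ≠ m := by
          rintro rfl
          exact hneg _ hp hv
        have : a * m < 0 := by
          simp only [Int.gcd_zero_right] at hg hco
          rcases Int.natAbs_eq a with h | h <;> rcases Int.natAbs_eq m with h' | h' <;>
            rw [hg] at h <;> rw [hco] at h' <;> subst h <;> subst h' <;> simp_all
        exact_mod_cast this) (convex_lexHalf (m : ℝ)) hhull
    simp only [Set.mem_ofPred_eq, Int.cast_zero, lt_irrefl, false_or, true_and] at hmem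
    nlinarith [mul_self_nonneg (m : ℝ)]
  have key : insert (m, n) Q = Q := by
    apply hmax _ (Set.subset_insert _ _)
    · refine ⟨?_, ?_, ?_⟩
      · rintro p (rfl | hp)
        · exact ⟨h0, hco⟩
        · exact hc p hp
      · rintro p (rfl | hp) (h | h)
        · simp only [Prod.neg_mk, Prod.mk.injEq] at h
          apply h0
          ext <;> simp only <;> omega
        · exact hnv h
        · apply hnv
          rw [← h, neg_neg]
          exact hp
        · exact hneg p hp h
      · rintro p (rfl | hp) q (rfl | hq)
        · simp
        · exact hdet q hq
        · rw [abs_sub_comm]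
          exact hdet p hp
        · exact hk p hp q hq
    · rintro p (rfl | hp)
      · exact hn
      · exact hy p hp
  rw [← key]
  exact Set.mem_insert _ _
end

section
/- Let k ∈ ℕ. If S ⊆ ℝ² is a convex set such that y ≥ 0 for every (x,y) ∈ S, and |xy' - yx'| ≤ k for all (x,y), (x',y') ∈ S, then the Lebesgue measure (area) of S is at most πk/2. -/
open MeasureTheory Set

lemma aux_sqrt_integral (k : ℝ) (hk : 0 < k) :
    ∫ x in (0:ℝ)..√k, √(k - x ^ 2) = Real.pi * k / 4 := by
  have h1 : ∫ x in (0:ℝ)..1, √(1 - x ^ 2) = Real.pi / 4 := by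
    have hc : Continuous fun x : ℝ => √(1 - x ^ 2) := by fun_prop
    have h2 := intervalIntegral.integral_add_adjacent_intervals
      (hc.intervalIntegrable (μ := volume) (-1) 0) (hc.intervalIntegrable 0 1)
    have h3 := intervalIntegral.integral_comp_neg (a := 0) (b := 1) (fun x : ℝ => √(1 - x ^ 2))
    simp only [neg_sq, neg_zero] at h3
    rw [integral_sqrt_one_sub_sq] at h2
    linarith
  have hs : 0 < √k := Real.sqrt_pos.2 hk
  have h4 := intervalIntegral.integral_comp_mul_right (a := 0) (b := 1)
    (fun x : ℝ => √(k - x ^ 2)) hs.ne'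
  have h5 : ∀ x : ℝ, √(k - (x * √k) ^ 2) = √k * √(1 - x ^ 2) := by
    intro x
    rw [← Real.sqrt_mul hk.le, mul_pow, Real.sq_sqrt hk.le]
    congr 1; ring
  simp only [h5, intervalIntegral.integral_const_mul, h1, zero_mul, one_mul, smul_eq_mul] at h4
  have : ∫ x in (0:ℝ)..√k, √(k - x ^ 2) = √k * (√k * (Real.pi / 4)) := by
    rw [h4]; field_simp
  rw [this, ← mul_assoc, Real.mul_self_sqrt hk.le]; ring

/-- quantile function of an antitone density -/
lemma aux_quantile (f : ℝ → ℝ) (hf : Antitone f) (f0 : ∀ x, 0 ≤ f x) (B A A' : ℝ) (hB : 0 ≤ B)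
    (hA' : 0 < A') (hAA : A' < A) (hA : A ≤ ∫ x in (0:ℝ)..B, f x) :
    ∃ (m b₁ : ℝ) (b : ℝ → ℝ), 0 < m ∧ ∀ s ∈ Icc 0 A', 0 ≤ b s ∧ b s ≤ b₁ ∧ m ≤ f (b s) ∧
      ∀ t ∈ Icc 0 A', s ≤ t → b s ≤ b t ∧ t - s ≤ f (b s) * (b t - b s) ∧
        m * (b t - b s) ≤ t - s := by
  have hint : ∀ a b, IntervalIntegrable f volume a b := fun a b => hf.intervalIntegrable
  set F : ℝ → ℝ := fun x => ∫ y in (0:ℝ)..x, f y with hF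
  have hFc : Continuous F := intervalIntegral.continuous_primitive hint 0
  have hF0 : F 0 = 0 := by simp [hF]
  have hsub : ∀ x y, F y - F x = ∫ z in x..y, f z := fun x y =>
    intervalIntegral.integral_interval_sub_left (hint _ _) (hint _ _)
  have hup : ∀ x y, x ≤ y → F y - F x ≤ f x * (y - x) := by
    intro x y hxy
    rw [hsub]
    calc _ ≤ ∫ z in x..y, f x := intervalIntegral.integral_mono_on hxy (hint _ _) (by simp)
          (fun z hz => hf hz.1)
      _ = _ := by simp [mul_comm]
  have hlo : ∀ x y, x ≤ y → f y * (y - x) ≤ F y - F x := by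
    intro x y hxy
    rw [hsub]
    calc f y * (y - x) = ∫ z in x..y, f y := by simp [mul_comm]
      _ ≤ _ := intervalIntegral.integral_mono_on hxy (by simp) (hint _ _) (fun z hz => hf hz.2)
  have hmono : ∀ x y, x ≤ y → F x ≤ F y := fun x y hxy => by
    have := hlo x y hxy
    have := mul_nonneg (f0 y) (sub_nonneg.2 hxy)
    linarith
  have hex : ∀ s ∈ Icc 0 A', ∃ x ∈ Icc 0 B, F x = s := by
    intro s hs
    exact intermediate_value_Icc hB hFc.continuousOn ⟨by rw [hF0]; exact hs.1, by
      show s ≤ F B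
      have : A ≤ F B := hA
      linarith [hs.2]⟩
  choose! b hb hbF using hex
  have hbm : ∀ s ∈ Icc 0 A', ∀ t ∈ Icc 0 A', s ≤ t → b s ≤ b t := by
    intro s hs t ht hst
    rcases hst.eq_or_lt with rfl | h
    · rfl
    by_contra! hc
    have := hmono _ _ hc.le
    rw [hbF s hs, hbF t ht] at this
    linarith
  have hA'm : A' ∈ Icc 0 A' := ⟨hA'.le, le_rfl⟩
  have hm : 0 < f (b A') := by
    have h1 := hup (b A') B (hb _ hA'm).2
    rw [hbF _ hA'm] at h1
    have h2 : A ≤ F B := hA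
    by_contra! hc
    have := f0 (b A')
    have h3 : f (b A') = 0 := le_antisymm hc this
    rw [h3] at h1
    linarith
  have hmf : ∀ s ∈ Icc 0 A', f (b A') ≤ f (b s) := fun s hs => hf (hbm s hs A' hA'm hs.2)
  refine ⟨f (b A'), B, b, hm, fun s hs => ⟨(hb s hs).1, (hb s hs).2, hmf s hs, fun t ht hst => ?_⟩⟩
  have h1 := hbm s hs t ht hst
  have h2 := hup _ _ h1
  have h3 := hlo _ _ h1
  rw [hbF s hs, hbF t ht] at h2 h3
  refine ⟨h1, h2, le_trans ?_ h3⟩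
  exact mul_le_mul_of_nonneg_right (hmf t ht) (sub_nonneg.2 h1)

lemma aux_step (k F G b b' c c' d : ℝ) (hF : 0 < F) (hG : 0 < G) (hb : 0 ≤ b) (hc : 0 ≤ c)
    (hbb : b ≤ b') (hcc : c ≤ c') (hd : 0 ≤ d) (h : F * G ≤ k - b * c)
    (h1 : d ≤ F * (b' - b)) (h2 : d ≤ G * (c' - c)) :
    d ≤ √(k - √(b * c) ^ 2) * (√(b' * c') - √(b * c)) := by
  have hbc : 0 ≤ b * c := mul_nonneg hb hc
  have hβ : 0 ≤ b' - b := sub_nonneg.2 hbb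
  have hγ : 0 ≤ c' - c := sub_nonneg.2 hcc
  have h3 : √(b * c) + √((b' - b) * (c' - c)) ≤ √(b' * c') := by
    apply Real.le_sqrt_of_sq_le
    rw [add_sq, Real.sq_sqrt hbc, Real.sq_sqrt (mul_nonneg hβ hγ), mul_assoc,
      ← Real.sqrt_mul hbc]
    have : √(b * c * ((b' - b) * (c' - c))) ≤ (b * (c' - c) + c * (b' - b)) / 2 := by
      apply Real.sqrt_le_iff.2
      constructor
      · positivity
      · nlinarith [sq_nonneg (b * (c' - c) - c * (b' - b))]
    nlinarith
  have h4 : d ≤ √(k - b * c) * √((b' - b) * (c' - c)) := by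
    rw [← Real.sqrt_mul (by nlinarith [mul_pos hF hG])]
    apply Real.le_sqrt_of_sq_le
    calc d ^ 2 = d * d := sq d
      _ ≤ (F * (b' - b)) * (G * (c' - c)) := mul_le_mul h1 h2 hd (by positivity)
      _ = (F * G) * ((b' - b) * (c' - c)) := by ring
      _ ≤ _ := mul_le_mul_of_nonneg_right h (by positivity)
  rw [Real.sq_sqrt hbc]
  refine h4.trans (mul_le_mul_of_nonneg_left (by linarith) (Real.sqrt_nonneg _))

lemma aux_core (k : ℝ) (hk' : 0 ≤ k) (f g : ℝ → ℝ) (hf : Antitone f) (hg : Antitone g)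
    (f0 : ∀ x, 0 ≤ f x) (g0 : ∀ x, 0 ≤ g x)
    (hfg : ∀ x y, 0 ≤ x → 0 ≤ y → 0 < f x → 0 < g y → f x * g y ≤ k - x * y)
    (B C A : ℝ) (hB : 0 ≤ B) (hC : 0 ≤ C) (hA0 : 0 < A)
    (hA : A ≤ ∫ x in (0:ℝ)..B, f x) (hA2 : A ≤ ∫ x in (0:ℝ)..C, g x) :
    A ≤ Real.pi * k / 4 := by
  refine le_of_forall_lt_imp_le_of_dense fun A' hAA => ?_
  rcases le_or_gt A' 0 with hA' | hA'
  · exact hA'.trans (by positivity)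
  obtain ⟨m, b₁, b, hm, hb⟩ := aux_quantile f hf f0 B A A' hB hA' hAA hA
  obtain ⟨l, c₁, c, hl, hc⟩ := aux_quantile g hg g0 C A A' hC hA' hAA hA2
  set w : ℝ → ℝ := fun s => √(b s * c s) with hw
  set h : ℝ → ℝ := fun x => √(k - x ^ 2) with hh
  have hhc : Continuous h := by fun_prop
  set H : ℝ → ℝ := fun x => ∫ y in (0:ℝ)..x, h y with hH
  have hint : ∀ a b, IntervalIntegrable h volume a b := fun a b => hhc.intervalIntegrable a b
  have hprod : ∀ s ∈ Icc 0 A', f (b s) * g (c s) ≤ k - b s * c s := fun s hs =>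
    hfg _ _ (hb s hs).1 (hc s hs).1 (hm.trans_le (hb s hs).2.2.1) (hl.trans_le (hc s hs).2.2.1)
  set L := c₁ / m + b₁ / l with hL
  have hwsq : ∀ s ∈ Icc 0 A', w s ^ 2 = b s * c s := fun s hs =>
    Real.sq_sqrt (mul_nonneg (hb s hs).1 (hc s hs).1)
  have step : ∀ s ∈ Icc 0 A', ∀ t ∈ Icc 0 A', s ≤ t →
      t - s ≤ (H (w t) - H (w s)) + √(L * (t - s)) * (h (w s) - h (w t)) := by
    intro s hs t ht hst
    obtain ⟨hb0, hb1, hfm, hbt⟩ := hb s hs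
    obtain ⟨hc0, hc1, hgm, hct⟩ := hc s hs
    obtain ⟨hbb, hbu, hbl⟩ := hbt t ht hst
    obtain ⟨hcc, hcu, hcl⟩ := hct t ht hst
    have h1 := aux_step k _ _ _ _ _ _ (t - s) (hm.trans_le hfm) (hl.trans_le hgm) hb0 hc0 hbb hcc
      (sub_nonneg.2 hst) (hprod s hs) hbu hcu
    change t - s ≤ h (w s) * (w t - w s) at h1
    have hws : 0 ≤ w s := Real.sqrt_nonneg _
    have hww : w s ≤ w t := Real.sqrt_le_sqrt (mul_le_mul hbb hcc hc0 (hb t ht).1)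
    have hanti : ∀ x y, 0 ≤ x → x ≤ y → h y ≤ h x := fun x y hx hxy =>
      Real.sqrt_le_sqrt (by nlinarith)
    have h2 : h (w t) * (w t - w s) ≤ H (w t) - H (w s) := by
      have : H (w t) - H (w s) = ∫ z in w s..w t, h z :=
        intervalIntegral.integral_interval_sub_left (hint _ _) (hint _ _)
      rw [this]
      calc h (w t) * (w t - w s) = ∫ z in w s..w t, h (w t) := by simp [mul_comm]
        _ ≤ _ := intervalIntegral.integral_mono_on hww (by simp) (hint _ _)
          (fun z hz => hanti _ _ (hws.trans hz.1) hz.2)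
    have h3 : w t - w s ≤ √(L * (t - s)) := by
      apply Real.le_sqrt_of_sq_le
      have e1 : (w t - w s) ^ 2 ≤ w t ^ 2 - w s ^ 2 := by nlinarith
      rw [hwsq s hs, hwsq t ht] at e1
      have e2 : b t - b s ≤ (t - s) / m := by rw [le_div_iff₀ hm]; linarith
      have e3 : c t - c s ≤ (t - s) / l := by rw [le_div_iff₀ hl]; linarith
      have e4 : c s * (b t - b s) ≤ c₁ * ((t - s) / m) :=
        mul_le_mul hc1 e2 (sub_nonneg.2 hbb) (hc0.trans hc1)
      have e5 : b t * (c t - c s) ≤ b₁ * ((t - s) / l) :=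
        mul_le_mul (hb t ht).2.1 e3 (sub_nonneg.2 hcc) (hb0.trans hb1)
      have e6 : L * (t - s) = c₁ * ((t - s) / m) + b₁ * ((t - s) / l) := by rw [hL]; ring
      rw [e6]; nlinarith
    have h4 := mul_le_mul_of_nonneg_right h3 (sub_nonneg.2 (hanti _ _ hws hww))
    nlinarith
  have hA'm : A' ∈ Icc 0 A' := ⟨hA'.le, le_rfl⟩
  have h0m : (0:ℝ) ∈ Icc 0 A' := ⟨le_rfl, hA'.le⟩
  have hk : 0 < k - b A' * c A' := lt_of_lt_of_le (mul_pos (hm.trans_le (hb _ hA'm).2.2.1)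
    (hl.trans_le (hc _ hA'm).2.2.1)) (hprod _ hA'm)
  have hk0 : 0 < k := by nlinarith [mul_nonneg (hb _ hA'm).1 (hc _ hA'm).1]
  have hHnn : ∀ x y, x ≤ y → H x ≤ H y := by
    intro x y hxy
    have : H y - H x = ∫ z in x..y, h z :=
      intervalIntegral.integral_interval_sub_left (hint _ _) (hint _ _)
    have h2 : 0 ≤ ∫ z in x..y, h z :=
      intervalIntegral.integral_nonneg hxy fun _ _ => Real.sqrt_nonneg _
    linarith
  have hHw : H (w A') ≤ Real.pi * k / 4 := by
    rw [← aux_sqrt_integral k hk0]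
    exact hHnn _ _ (Real.sqrt_le_sqrt (by linarith))
  have hHw0 : 0 ≤ H (w 0) := by
    have : H 0 = 0 := by simp [hH]
    rw [← this]; exact hHnn _ _ (Real.sqrt_nonneg _)
  have main : ∀ n : ℕ, 0 < n → A' ≤ Real.pi * k / 4 + √(L * (A' / n)) * h (w 0) := by
    intro n hn
    have hn' : (0:ℝ) < n := by exact_mod_cast hn
    have ind : ∀ i : ℕ, i ≤ n → i * (A' / n) ≤ (H (w (i * (A' / n))) - H (w 0)) +
        √(L * (A' / n)) * (h (w 0) - h (w (i * (A' / n)))) := by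
      intro i
      induction i with
      | zero => simp
      | succ i ih =>
        intro hi
        have ih := ih (by omega)
        have hmem : ∀ j : ℕ, j ≤ n → (j:ℝ) * (A' / n) ∈ Icc 0 A' := by
          intro j hj
          have hj' : (j:ℝ) ≤ n := by exact_mod_cast hj
          refine ⟨by positivity, ?_⟩
          calc (j:ℝ) * (A' / n) ≤ n * (A' / n) := by gcongr
            _ = A' := by field_simp
        have hpos : 0 ≤ A' / n := by positivity
        have e : ((i+1:ℕ):ℝ) * (A' / n) - i * (A' / n) = A' / n := by push_cast; ring
        have st := step _ (hmem i (by omega)) _ (hmem (i+1) hi) (by linarith)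
        rw [e] at st
        linarith
    have := ind n le_rfl
    have e : (n:ℝ) * (A' / n) = A' := by field_simp
    rw [e] at this
    have h5 : 0 ≤ √(L * (A' / n)) * h (w A') := by positivity
    nlinarith
  have lim : Filter.Tendsto (fun n : ℕ => Real.pi * k / 4 + √(L * (A' / n)) * h (w 0))
      Filter.atTop (nhds (Real.pi * k / 4 + √(L * 0) * h (w 0))) := by
    have := tendsto_const_div_atTop_nhds_zero_nat A'
    exact (((this.const_mul L).sqrt).mul_const _).const_add _
  simp only [mul_zero, Real.sqrt_zero, zero_mul, add_zero] at lim
  exact ge_of_tendsto lim (Filter.eventually_atTop.2 ⟨1, fun n hn => main n hn⟩)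

/-- The decreasing profile of a planar set. -/
noncomputable def auxProf (P : Set (ℝ × ℝ)) (t : ℝ) : ℝ :=
  sSup (insert 0 (Prod.fst '' {p ∈ P | t ≤ p.2}))

lemma auxProf_bdd {P : Set (ℝ × ℝ)} {R : ℝ} (hP : ∀ p ∈ P, p.1 ≤ R) (t : ℝ) :
    BddAbove (insert 0 (Prod.fst '' {p ∈ P | t ≤ p.2})) := by
  refine BddAbove.insert _ ⟨R, ?_⟩
  rintro _ ⟨p, hp, rfl⟩
  exact hP p hp.1

lemma auxProf_nonneg {P : Set (ℝ × ℝ)} {R : ℝ} (hP : ∀ p ∈ P, p.1 ≤ R) (t : ℝ) :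
    0 ≤ auxProf P t := le_csSup (auxProf_bdd hP t) (mem_insert _ _)

lemma le_auxProf {P : Set (ℝ × ℝ)} {R : ℝ} (hP : ∀ p ∈ P, p.1 ≤ R) (t : ℝ) (p : ℝ × ℝ)
    (hp : p ∈ P) (ht : t ≤ p.2) : p.1 ≤ auxProf P t :=
  le_csSup (auxProf_bdd hP t) (mem_insert_of_mem _ ⟨p, ⟨hp, ht⟩, rfl⟩)

lemma auxProf_anti {P : Set (ℝ × ℝ)} {R : ℝ} (hP : ∀ p ∈ P, p.1 ≤ R) :
    Antitone (auxProf P) := by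
  intro s t hst
  refine csSup_le_csSup (auxProf_bdd hP s) (insert_nonempty _ _) (insert_subset_insert ?_)
  exact image_mono fun p hp => ⟨hp.1, hst.trans hp.2⟩

lemma auxProf_le {P : Set (ℝ × ℝ)} {t K : ℝ} (hK : 0 ≤ K)
    (h : ∀ p ∈ P, t ≤ p.2 → p.1 ≤ K) : auxProf P t ≤ K := by
  refine csSup_le (insert_nonempty _ _) ?_
  rintro a (rfl | ⟨p, hp, rfl⟩)
  · exact hK
  · exact h p hp.1 hp.2

lemma auxProf_exists {P : Set (ℝ × ℝ)} {t : ℝ} (h : 0 < auxProf P t) :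
    ∃ p ∈ P, t ≤ p.2 ∧ 0 < p.1 := by
  by_contra! hc
  exact absurd (auxProf_le le_rfl fun p hp ht => hc p hp ht) (not_le.2 h)

lemma aux_area {P : Set (ℝ × ℝ)} {R : ℝ} (hR : 0 ≤ R) (hm : MeasurableSet P)
    (h1 : ∀ p ∈ P, 0 ≤ p.1 ∧ p.1 ≤ R) (h2 : ∀ p ∈ P, 0 ≤ p.2 ∧ p.2 ≤ R) :
    volume P ≤ ENNReal.ofReal (∫ x in (0:ℝ)..R, auxProf P x) := by
  have hP : ∀ p ∈ P, p.1 ≤ R := fun p hp => (h1 p hp).2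
  have hi : IntegrableOn (auxProf P) (Ioc 0 R) := by
    rw [← intervalIntegrable_iff_integrableOn_Ioc_of_le hR]
    exact (auxProf_anti hP).intervalIntegrable
  rw [intervalIntegral.integral_of_le hR, ← integral_Icc_eq_integral_Ioc,
    ofReal_integral_eq_lintegral_ofReal (by
      rw [← IntegrableOn, integrableOn_Icc_iff_integrableOn_Ioc]; exact hi)
      (Filter.Eventually.of_forall fun x => auxProf_nonneg hP x),
    Measure.volume_eq_prod, Measure.prod_apply_symm hm, ← lintegral_indicator measurableSet_Icc]
  refine lintegral_mono fun y => ?_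
  by_cases hy : y ∈ Icc 0 R
  · rw [indicator_of_mem hy]
    calc volume ((fun x => (x, y)) ⁻¹' P) ≤ volume (Icc 0 (auxProf P y)) :=
          measure_mono fun x hx => ⟨(h1 _ hx).1, le_auxProf hP y _ hx le_rfl⟩
      _ = _ := by simp
  · have : (fun x => (x, y)) ⁻¹' P = ∅ := by
      ext x; simp only [mem_preimage, mem_empty_iff_false, iff_false]
      exact fun hx => hy (h2 _ hx)
    simp [this]

lemma aux_quad {k : ℝ} (hk : 0 ≤ k) {P Q : Set (ℝ × ℝ)} {R : ℝ} (hR : 0 ≤ R)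
    (hPm : MeasurableSet P) (hQm : MeasurableSet Q)
    (h1 : ∀ p ∈ P, 0 ≤ p.1 ∧ p.1 ≤ R) (h2 : ∀ p ∈ P, 0 ≤ p.2 ∧ p.2 ≤ R)
    (h3 : ∀ p ∈ Q, 0 ≤ p.1 ∧ p.1 ≤ R) (h4 : ∀ p ∈ Q, 0 ≤ p.2 ∧ p.2 ≤ R)
    (hPQ : ∀ p ∈ P, ∀ q ∈ Q, p.1 * q.1 + p.2 * q.2 ≤ k)
    (A : ℝ) (hA : 0 < A) (hPA : ENNReal.ofReal A ≤ volume P)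
    (hQA : ENNReal.ofReal A ≤ volume Q) : A ≤ Real.pi * k / 4 := by
  have hP : ∀ p ∈ P, p.1 ≤ R := fun p hp => (h1 p hp).2
  have hQ : ∀ p ∈ Q, p.1 ≤ R := fun p hp => (h3 p hp).2
  have key : ∀ {T : Set (ℝ × ℝ)}, (∀ p ∈ T, p.1 ≤ R) →
      0 ≤ ∫ x in (0:ℝ)..R, auxProf T x := fun hT =>
    intervalIntegral.integral_nonneg hR fun x _ => auxProf_nonneg hT x
  refine aux_core k hk (auxProf P) (auxProf Q) (auxProf_anti hP) (auxProf_anti hQ)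
    (auxProf_nonneg hP) (auxProf_nonneg hQ) ?_ R R A hR hR hA
    ((ENNReal.ofReal_le_ofReal_iff (key hP)).1 (hPA.trans (aux_area hR hPm h1 h2)))
    ((ENNReal.ofReal_le_ofReal_iff (key hQ)).1 (hQA.trans (aux_area hR hQm h3 h4)))
  intro x y hx hy hfx hgy
  have hb : ∀ p ∈ P, x ≤ p.2 → ∀ q ∈ Q, y ≤ q.2 → p.1 * q.1 ≤ k - x * y := by
    intro p hp hxp q hq hyq
    have := hPQ p hp q hq
    have := mul_le_mul hxp hyq hy (h2 p hp).1
    linarith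
  have hK : 0 ≤ k - x * y := by
    obtain ⟨p, hp, hxp, hp1⟩ := auxProf_exists hfx
    obtain ⟨q, hq, hyq, hq1⟩ := auxProf_exists hgy
    exact (mul_pos hp1 hq1).le.trans (hb p hp hxp q hq hyq)
  rw [← le_div_iff₀ hgy]
  refine auxProf_le (by positivity) fun p hp hxp => ?_
  rw [le_div_iff₀ hgy]
  rcases (h1 p hp).1.eq_or_lt with h0 | h0
  · rw [← h0, zero_mul]; exact hK
  rw [mul_comm, ← le_div_iff₀ h0]
  refine auxProf_le (by positivity) fun q hq hyq => ?_
  rw [le_div_iff₀ h0, mul_comm]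
  exact hb p hp hxp q hq hyq

lemma aux_median (ν : Measure ℝ) [IsFiniteMeasure ν] (hν : ν univ ≠ 0) :
    ∃ c, ν univ / 2 ≤ ν (Iic c) ∧ ν univ / 2 ≤ ν (Ici c) := by
  set M := ν univ with hM
  have hMt : M ≠ ⊤ := measure_ne_top _ _
  have hlt : M / 2 < M := ENNReal.half_lt_self hν hMt
  set U : Set ℝ := {c | M / 2 ≤ ν (Iic c)} with hU
  have hup : ∀ {a b}, a ∈ U → a ≤ b → b ∈ U := fun {a b} ha hab =>
    le_trans ha (measure_mono (Iic_subset_Iic.2 hab))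
  have hne : U.Nonempty := by
    obtain ⟨c, hc⟩ := ((tendsto_measure_Iic_atTop ν).eventually (lt_mem_nhds hlt)).exists
    exact ⟨c, hc.le⟩
  have hcompl : ∀ a, a ∉ U → M / 2 ≤ ν (Ioi a) := by
    intro a ha
    by_contra! hc
    have ha' : ν (Iic a) < M / 2 := not_le.1 ha
    have h1 : M ≤ ν (Iic a) + ν (Ioi a) := by
      rw [hM, ← Iic_union_Ioi (a := a)]; exact measure_union_le _ _
    have h2 := ENNReal.add_lt_add ha' hc
    rw [ENNReal.add_halves] at h2
    exact absurd h1 (not_le.2 h2)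
  have hbd : BddBelow U := by
    obtain ⟨c, hc⟩ := ((tendsto_measure_Ici_atBot ν).eventually (lt_mem_nhds hlt)).exists
    obtain ⟨c, hc⟩ : ∃ c, ν (Iic c) < M / 2 := by
      by_contra! hall
      have hT : Filter.Tendsto (fun n : ℕ => ν (Iic (-(n:ℝ)))) Filter.atTop
          (nhds (ν (⋂ n : ℕ, Iic (-(n:ℝ))))) :=
        tendsto_measure_iInter_atTop (fun n => measurableSet_Iic.nullMeasurableSet)
          (fun m n hmn => Iic_subset_Iic.2 (by simpa using hmn)) ⟨0, measure_ne_top _ _⟩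
      have he : (⋂ n : ℕ, Iic (-(n:ℝ))) = ∅ := by
        ext x
        simp only [mem_iInter, mem_Iic, mem_empty_iff_false, iff_false, not_forall, not_le]
        obtain ⟨n, hn⟩ := exists_nat_gt (-x)
        exact ⟨n, by linarith⟩
      rw [he, measure_empty] at hT
      have := ge_of_tendsto' hT (fun n => hall _)
      have h0 : M / 2 ≠ 0 := by simp [hν]
      exact h0 (le_antisymm this bot_le)
    exact ⟨c, fun a ha => by
      by_contra! h
      exact absurd (hup ha h.le) (not_le.2 hc)⟩
  refine ⟨sInf U, ?_, ?_⟩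
  · have hT : Filter.Tendsto (fun n : ℕ => ν (Iic (sInf U + 1 / ((n:ℝ) + 1)))) Filter.atTop
        (nhds (ν (⋂ n : ℕ, Iic (sInf U + 1 / ((n:ℝ) + 1))))) :=
      tendsto_measure_iInter_atTop (fun n => measurableSet_Iic.nullMeasurableSet)
        (fun m n hmn => Iic_subset_Iic.2 (by
          have : 1 / ((n:ℝ) + 1) ≤ 1 / ((m:ℝ) + 1) := Nat.one_div_le_one_div hmn
          linarith)) ⟨0, measure_ne_top _ _⟩
    have he : (⋂ n : ℕ, Iic (sInf U + 1 / ((n:ℝ) + 1))) ⊆ Iic (sInf U) := by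
      intro x hx
      simp only [mem_iInter, mem_Iic] at hx ⊢
      refine le_of_forall_pos_le_add fun ε hε => ?_
      obtain ⟨n, hn⟩ := exists_nat_one_div_lt hε
      linarith [hx n]
    refine (ge_of_tendsto' hT fun n => ?_).trans (measure_mono he)
    obtain ⟨u, hu, hu'⟩ := exists_lt_of_csInf_lt hne
      (show sInf U < sInf U + 1 / ((n:ℝ) + 1) by linarith [Nat.one_div_pos_of_nat (α := ℝ) (n := n)])
    exact hup hu hu'.le
  · have hT : Filter.Tendsto (fun n : ℕ => ν (Ioi (sInf U - 1 / ((n:ℝ) + 1)))) Filter.atTop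
        (nhds (ν (⋂ n : ℕ, Ioi (sInf U - 1 / ((n:ℝ) + 1))))) :=
      tendsto_measure_iInter_atTop (fun n => measurableSet_Ioi.nullMeasurableSet)
        (fun m n hmn => Ioi_subset_Ioi (by
          have : 1 / ((n:ℝ) + 1) ≤ 1 / ((m:ℝ) + 1) := Nat.one_div_le_one_div hmn
          linarith)) ⟨0, measure_ne_top _ _⟩
    have he : (⋂ n : ℕ, Ioi (sInf U - 1 / ((n:ℝ) + 1))) ⊆ Ici (sInf U) := by
      intro x hx
      simp only [mem_iInter, mem_Ioi, mem_Ici] at hx ⊢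
      refine le_of_forall_pos_le_add fun ε hε => ?_
      obtain ⟨n, hn⟩ := exists_nat_one_div_lt hε
      linarith [hx n]
    refine (ge_of_tendsto' hT fun n => ?_).trans (measure_mono he)
    refine hcompl _ fun hmem => ?_
    have := csInf_le hbd hmem
    linarith [Nat.one_div_pos_of_nat (α := ℝ) (n := n)]

lemma aux_mp1 (c : ℝ) : MeasurePreserving (fun p : ℝ × ℝ => (p.1 + c * p.2, p.2)) := by
  have h : MeasurePreserving (fun p : ℝ × ℝ => (p.1, p.2 + c * p.1))
      ((volume : Measure ℝ).prod volume) ((volume : Measure ℝ).prod volume) :=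
    (MeasurePreserving.id (volume : Measure ℝ)).skew_product (g := fun x y => y + c * x)
      (by fun_prop) (Filter.Eventually.of_forall fun x =>
        (measurePreserving_add_right volume (c * x)).map_eq)
  exact (Measure.measurePreserving_swap.comp h).comp Measure.measurePreserving_swap

lemma aux_mp2 (c : ℝ) : MeasurePreserving (fun p : ℝ × ℝ => (c * p.1 - p.2, p.1)) := by
  have h : MeasurePreserving (fun p : ℝ × ℝ => (p.1, c * p.1 - p.2))
      ((volume : Measure ℝ).prod volume) ((volume : Measure ℝ).prod volume) :=
    (MeasurePreserving.id (volume : Measure ℝ)).skew_product (g := fun x y => c * x - y)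
      (by fun_prop) (Filter.Eventually.of_forall fun x =>
        (Measure.measurePreserving_sub_left volume (c * x)).map_eq)
  exact Measure.measurePreserving_swap.comp h

lemma aux_compact (k : ℝ) (hk0 : 0 ≤ k) (S : Set (ℝ × ℝ)) (hS : IsCompact S)
    (hy : ∀ p ∈ S, 0 ≤ p.2)
    (hk : ∀ p ∈ S, ∀ q ∈ S, |p.1 * q.2 - p.2 * q.1| ≤ k) :
    volume S ≤ ENNReal.ofReal (Real.pi * k / 2) := by
  have hSm : MeasurableSet S := hS.measurableSet
  have hU : MeasurableSet {p : ℝ × ℝ | 0 < p.2} := measurableSet_lt measurable_const measurable_snd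
  have hnull : volume {p : ℝ × ℝ | p.2 = 0} = 0 := by
    have : {p : ℝ × ℝ | p.2 = 0} = univ ×ˢ {0} := by ext; simp
    rw [this, Measure.volume_eq_prod, Measure.prod_prod]; simp
  set S' := S ∩ {p : ℝ × ℝ | 0 < p.2} with hS'
  have hS'm : MeasurableSet S' := hSm.inter hU
  have hle : volume S ≤ volume S' := by
    calc volume S ≤ volume (S' ∪ {p : ℝ × ℝ | p.2 = 0}) := measure_mono fun p hp => by
          rcases (hy p hp).eq_or_lt with h | h
          · exact Or.inr h.symm
          · exact Or.inl ⟨hp, h⟩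
      _ ≤ volume S' + volume {p : ℝ × ℝ | p.2 = 0} := measure_union_le _ _
      _ = volume S' := by rw [hnull, add_zero]
  refine hle.trans ?_
  have hfin : volume S' ≠ ⊤ := ((measure_mono inter_subset_left).trans_lt hS.measure_lt_top).ne
  rcases eq_or_ne (volume S') 0 with h0 | h0
  · rw [h0]; exact bot_le
  have hrm : Measurable fun p : ℝ × ℝ => p.1 / p.2 := by fun_prop
  set ν := (volume.restrict S').map (fun p : ℝ × ℝ => p.1 / p.2) with hν
  have hνu : ν univ = volume S' := by
    rw [hν, Measure.map_apply hrm MeasurableSet.univ]; simp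
  have : IsFiniteMeasure ν := ⟨by rw [hνu]; exact hfin.lt_top⟩
  obtain ⟨c, hc1, hc2⟩ := aux_median ν (by rw [hνu]; exact h0)
  rw [hνu, hν, Measure.map_apply hrm measurableSet_Iic,
    Measure.restrict_apply (hrm measurableSet_Iic)] at hc1
  rw [hνu, hν, Measure.map_apply hrm measurableSet_Ici,
    Measure.restrict_apply (hrm measurableSet_Ici)] at hc2
  set m := (volume S').toReal with hm
  have hmpos : 0 < m := ENNReal.toReal_pos h0 hfin
  have hhalf : ENNReal.ofReal (m / 2) = volume S' / 2 := by
    rw [ENNReal.ofReal_div_of_pos two_pos, hm, ENNReal.ofReal_toReal hfin]; simp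
  have hT1 := aux_mp1 c
  have hT2 := aux_mp2 c
  set P : Set (ℝ × ℝ) := (fun p : ℝ × ℝ => (p.1 + c * p.2, p.2)) ⁻¹'
    (S ∩ {p | c * p.2 ≤ p.1}) with hP
  set Q : Set (ℝ × ℝ) := (fun p : ℝ × ℝ => (c * p.1 - p.2, p.1)) ⁻¹'
    (S ∩ {p | p.1 ≤ c * p.2}) with hQ
  have hm1 : MeasurableSet (S ∩ {p : ℝ × ℝ | c * p.2 ≤ p.1}) :=
    hSm.inter (measurableSet_le (by fun_prop) (by fun_prop))
  have hm2 : MeasurableSet (S ∩ {p : ℝ × ℝ | p.1 ≤ c * p.2}) :=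
    hSm.inter (measurableSet_le (by fun_prop) (by fun_prop))
  have hvP : ENNReal.ofReal (m / 2) ≤ volume P := by
    rw [hP, hT1.measure_preimage hm1.nullMeasurableSet, hhalf]
    refine hc2.trans (measure_mono ?_)
    rintro p ⟨hp1, hp2, hp3⟩
    refine ⟨hp2, ?_⟩
    exact (le_div_iff₀ hp3).1 (show c ≤ p.1 / p.2 from hp1)
  have hvQ : ENNReal.ofReal (m / 2) ≤ volume Q := by
    rw [hQ, hT2.measure_preimage hm2.nullMeasurableSet, hhalf]
    refine hc1.trans (measure_mono ?_)
    rintro p ⟨hp1, hp2, hp3⟩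
    refine ⟨hp2, ?_⟩
    exact (div_le_iff₀ hp3).1 (show p.1 / p.2 ≤ c from hp1)
  obtain ⟨r, hr⟩ := hS.isBounded.exists_norm_le
  have hr1 : ∀ p ∈ S, |p.1| ≤ r := fun p hp => (norm_fst_le p).trans (hr p hp)
  have hr2 : ∀ p ∈ S, |p.2| ≤ r := fun p hp => (norm_snd_le p).trans (hr p hp)
  have hr3 : ∀ p ∈ S, |c * p.2| ≤ |c| * r := fun p hp => by
    rw [abs_mul]; exact mul_le_mul_of_nonneg_left (hr2 p hp) (abs_nonneg _)
  have hSne : S.Nonempty := by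
    by_contra! h
    apply h0
    rw [hS', h]; simp
  have hr0 : 0 ≤ r := by
    obtain ⟨p, hp⟩ := hSne
    exact (norm_nonneg _).trans (hr p hp)
  have hcr : 0 ≤ |c| * r := by positivity
  have key := aux_quad hk0 (P := P) (Q := Q) (R := r + |c| * r) (by positivity)
    (hT1.measurable hm1) (hT2.measurable hm2)
    (by
      rintro ⟨a, b⟩ ⟨hp, hp2⟩
      have e1 := abs_le.1 (hr1 _ hp)
      have e3 := abs_le.1 (hr3 _ hp)
      simp only [mem_ofPred_eq] at *
      constructor <;> linarith)
    (by
      rintro ⟨a, b⟩ ⟨hp, hp2⟩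
      have e1 := abs_le.1 (hr2 _ hp)
      have e3 := hy _ hp
      simp only [mem_ofPred_eq] at *
      constructor <;> linarith)
    (by
      rintro ⟨a, b⟩ ⟨hp, hp2⟩
      have e1 := abs_le.1 (hr2 _ hp)
      have e3 := hy _ hp
      simp only [mem_ofPred_eq] at *
      constructor <;> linarith)
    (by
      rintro ⟨a, b⟩ ⟨hp, hp2⟩
      have e1 := abs_le.1 (hr1 _ hp)
      have e3 := abs_le.1 (hr3 _ hp)
      simp only [mem_ofPred_eq] at *
      constructor <;> linarith)
    (by
      rintro ⟨a, b⟩ ⟨hp, hp2⟩ ⟨d, u⟩ ⟨hq, hq2⟩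
      have := (abs_le.1 (hk _ hp _ hq)).2
      simp only at this ⊢
      linarith)
    (m / 2) (by positivity) hvP hvQ
  rw [← ENNReal.ofReal_toReal hfin]
  exact ENNReal.ofReal_le_ofReal (by linarith)

theorem area_le_pi_k_div_two (k : ℕ) (S : Set (ℝ × ℝ)) (hconv : Convex ℝ S)
    (hy : ∀ p ∈ S, 0 ≤ p.2)
    (hk : ∀ p ∈ S, ∀ q ∈ S, |p.1 * q.2 - p.2 * q.1| ≤ (k : ℝ)) :
    MeasureTheory.volume S ≤ ENNReal.ofReal (Real.pi * k / 2) := by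
  have hk1 : ∀ p ∈ closure S, ∀ q ∈ S, |p.1 * q.2 - p.2 * q.1| ≤ (k : ℝ) := by
    intro p hp q hq
    exact closure_minimal (t := {p : ℝ × ℝ | |p.1 * q.2 - p.2 * q.1| ≤ (k : ℝ)})
      (fun p hp => hk p hp q hq) (isClosed_le (by fun_prop) (by fun_prop)) hp
  have hk2 : ∀ p ∈ closure S, ∀ q ∈ closure S, |p.1 * q.2 - p.2 * q.1| ≤ (k : ℝ) := by
    intro p hp q hq
    exact closure_minimal (t := {q : ℝ × ℝ | |p.1 * q.2 - p.2 * q.1| ≤ (k : ℝ)})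
      (fun q hq => hk1 p hp q hq) (isClosed_le (by fun_prop) (by fun_prop)) hq
  have hy2 : ∀ p ∈ closure S, 0 ≤ p.2 := fun p hp =>
    closure_minimal (t := {p : ℝ × ℝ | 0 ≤ p.2}) hy
      (isClosed_le (by fun_prop) (by fun_prop)) hp
  refine (measure_mono subset_closure).trans ?_
  have hmono : Monotone fun n : ℕ => closure S ∩ Metric.closedBall 0 n := fun m n hmn =>
    inter_subset_inter_right _ (Metric.closedBall_subset_closedBall (by exact_mod_cast hmn))
  have hun : closure S = ⋃ n : ℕ, closure S ∩ Metric.closedBall 0 n := by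
    rw [← inter_iUnion, Metric.iUnion_closedBall_nat, inter_univ]
  rw [hun, hmono.measure_iUnion]
  refine iSup_le fun n => ?_
  exact aux_compact k (Nat.cast_nonneg k) _
    ((isCompact_closedBall _ _).inter_left isClosed_closure)
    (fun p hp => hy2 p hp.1) (fun p hp q hq => hk2 p hp.1 q hq.1)
end
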